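/- Let ε be the involution y ↦ b⁻¹y*b of W_{H*}. Then q^{ℓ(b)}·(q−1)^{φ(b)}·P_{J,*}(q)·P_{H*}(−q) = (−q)^{ℓ(b)}·(q+1)^{φ(b)}·P_J(−q)·P_{H*,ε}(q) as polynomials in q; equivalently, in ℚ(q): q^{ℓ(b)}·((q−1)/(q+1))^{φ(b)}·P_{J,*}(q)/P_{H*,ε}(q) = (−q)^{ℓ(b)}·P_J(−q)/P_{H*}(−q). -/

import Mathlib

set_option synthInstance.maxHeartbeats 1000000
set_option maxHeartbeats 2000000

open scoped Classical

noncomputable section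

namespace LY

/-! ## The coefficient field `ℚ(q)` -/

/-- The field `ℚ(q)` of rational functions. -/
abbrev K : Type := RatFunc ℚ

/-- The indeterminate `q`. -/
def qK : K := RatFunc.X

/-- The inclusion `ℤ[q] → ℚ(q)`. -/
def toK (p : Polynomial ℤ) : K := algebraMap (Polynomial ℚ) K (p.map (Int.castRingHom ℚ))

/-- Evaluation of `p ∈ ℤ[q]` at `−q`, as an element of `ℚ(q)`; i.e. `p(−q)`. -/
def atNegQ (p : Polynomial ℤ) : K := Polynomial.eval₂ (Int.castRingHom K) (-qK) p

/-- The standard basis element `T_w` (resp. `a_w`) of the function model `W → ℚ(q)`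
of the Hecke algebra (resp. of the Lusztig–Vogan module `M`). -/
def TT {W : Type} (w : W) : W → K := fun y => if y = w then 1 else 0

variable {B W : Type} [Group W] {M : CoxeterMatrix B}

/-- The Bruhat order on a Coxeter group: `u ≤ v` iff `v` is obtained from `u` by successive
right multiplications by reflections, each increasing the length. -/
def BruhatLE (cs : CoxeterSystem M W) (u v : W) : Prop :=
  Relation.ReflTransGen
    (fun a b => cs.length a < cs.length b ∧ ∃ t, cs.IsReflection t ∧ b = a * t) u v

/-- Connectedness of the Coxeter diagram of `M`. -/
def DiagramConnected (M : CoxeterMatrix B) : Prop :=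
  ∀ i j : B, Relation.ReflTransGen (fun a b => a ≠ b ∧ M a b ≠ 2) i j

/-- An automorphism of `W` preserving the set `S` of simple reflections, i.e. an element
of `A = Aut(W,S)`. -/
def IsDiagAut (cs : CoxeterSystem M W) (a : MulAut W) : Prop :=
  (⇑a) '' (Set.range cs.simple) = Set.range cs.simple

/-! ## The affine setting -/

/-- All the data and axioms describing the setting: `(W,S)` is the Coxeter group of an
untwisted connected affine Dynkin diagram (an irreducible affine Weyl group); `Λ` is the
subgroup of translations (elements with finite conjugacy class), free abelian of finite
rank and of finite index; `s₀` is a hyperspecial vertex, `J = S − {s₀}`, `W_J` is the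
finite subgroup generated by `J` with longest element `w_J`; `*` is the involution of `W`
given by `w* = w_J w w_J` on `W_J` and `λ* = −(ʷᴶλ)` on `Λ`; `pr` is the projection
`W → W_J` along `Λ`; `ρ` is the conjugation action of `W` on `Λ_ℚ ≅ ℚ^rank`
(via the identification `freeIso` of `Λ` with `ℤ^rank`). -/
structure AffineData (cs : CoxeterSystem M W) where
  finB : Finite B
  conn : DiagramConnected M
  infW : Infinite W
  /-- the subgroup `Λ` of translations -/
  Lam : Subgroup W
  hLam_mem : ∀ w : W, w ∈ Lam ↔ {x : W | IsConj w x}.Finite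
  hLam_normal : Lam.Normal
  hLam_comm : ∀ a ∈ Lam, ∀ b ∈ Lam, a * b = b * a
  hLam_index : Lam.FiniteIndex
  /-- `Λ` is free abelian of finite rank -/
  rank : ℕ
  freeIso : Lam ≃* Multiplicative (Fin rank → ℤ)
  /-- the hyperspecial vertex `s₀` -/
  s0 : W
  hs0_S : s0 ∈ Set.range cs.simple
  /-- `s₀` is hyperspecial: the projection `W → W/Λ` restricts to an isomorphism from the
  subgroup generated by `S − {s₀}` onto `W/Λ`. -/
  hs0_hyper : ∀ w : W, ∃! u : W,
    u ∈ Subgroup.closure (Set.range cs.simple \ {s0}) ∧ w * u⁻¹ ∈ Lam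
  hWJ_fin : (Subgroup.closure (Set.range cs.simple \ {s0}) : Set W).Finite
  /-- the longest element `w_J` of `W_J` -/
  wJ : W
  hwJ_mem : wJ ∈ Subgroup.closure (Set.range cs.simple \ {s0})
  hwJ_max : ∀ u ∈ Subgroup.closure (Set.range cs.simple \ {s0}), cs.length u ≤ cs.length wJ
  /-- the involution `*` of `W` -/
  st : MulAut W
  hst_inv : ∀ w : W, st (st w) = w
  hst_J : ∀ u ∈ Subgroup.closure (Set.range cs.simple \ {s0}), st u = wJ * u * wJ
  hst_Lam : ∀ l ∈ Lam, st l = (wJ * l * wJ⁻¹)⁻¹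
  hst_S : ∀ s ∈ Set.range cs.simple, st s ∈ Set.range cs.simple
  /-- lower Bruhat intervals are finite -/
  hBruhat_fin : ∀ w : W, {y : W | BruhatLE cs y w}.Finite
  /-- the projection `W → W_J` along `Λ` (`w ↦ w̄`) -/
  pr : W → W
  hpr : ∀ w : W, pr w ∈ Subgroup.closure (Set.range cs.simple \ {s0}) ∧ w * (pr w)⁻¹ ∈ Lam
  /-- the conjugation action of `W` on `Λ_ℚ ≅ ℚ^rank` -/
  rho : W → ((Fin rank → ℚ) →ₗ[ℚ] (Fin rank → ℚ))
  hrho : ∀ (w : W) (l : Lam),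
    rho w (fun i => ((Multiplicative.toAdd (freeIso l)) i : ℚ)) =
      fun i => ((Multiplicative.toAdd
        (freeIso ⟨w * (l : W) * w⁻¹, hLam_normal.conj_mem _ l.2 w⟩)) i : ℚ)

namespace AffineData

variable {cs : CoxeterSystem M W} (D : AffineData cs)

/-- The set `J = S − {s₀}`. -/
def Jset : Set W := Set.range cs.simple \ {D.s0}

/-- The finite Weyl group `W_J`. -/
def WJ : Subgroup W := Subgroup.closure D.Jset

/-- `λ ∈ Λ` is a dominant translation (`λ ∈ Λ⁺`). -/
def IsDominant (l : W) : Prop :=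
  l ∈ D.Lam ∧ cs.length (l * D.wJ) = cs.length l + cs.length D.wJ

/-- The embedding `Λ → Λ_ℚ = ℚ^rank`. -/
def iota (l : D.Lam) : Fin D.rank → ℚ :=
  fun i => ((Multiplicative.toAdd (D.freeIso l)) i : ℚ)

/-- `e(A)`: the dimension of the `(−1)`-eigenspace of a linear endomorphism `A` of `Λ_ℚ`. -/
def eNeg (f : (Fin D.rank → ℚ) →ₗ[ℚ] (Fin D.rank → ℚ)) : ℕ :=
  Module.finrank ℚ (Module.End.eigenspace (f : Module.End ℚ (Fin D.rank → ℚ)) (-1))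

/-- The map `A_u : λ ↦ ᵘ(λ*) = −(ᵘʷᴶλ)` on `Λ_ℚ`, for `u ∈ W_J`. -/
def Amap (u : W) : (Fin D.rank → ℚ) →ₗ[ℚ] (Fin D.rank → ℚ) := - D.rho (u * D.wJ)

/-- The invariant `φ(w) = e(A_{w̄}) − e(A_e)` for `w ∈ I_*`. -/
def phi (w : W) : ℤ := (D.eNeg (D.Amap (D.pr w)) : ℤ) - (D.eNeg (D.Amap 1) : ℤ)

/-- The double coset `W_J x W_J`. -/
def DCoset (x : W) : Set W := {y : W | ∃ u ∈ D.WJ, ∃ v ∈ D.WJ, y = u * x * v}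

/-- The set `H = J ∩ bJb⁻¹`. -/
def Hset (b : W) : Set W := D.Jset ∩ ((fun s => b * s * b⁻¹) '' D.Jset)

/-- The set `H* ⊆ J`, image of `H` under `*`. -/
def Hstar (b : W) : Set W := (⇑D.st) '' D.Hset b

/-- The subgroup `W_{H*}` generated by `H*`. -/
def WHstar (b : W) : Subgroup W := Subgroup.closure (D.Hstar b)

/-- The reflection representation `R'` of `W_{H*}`, as a subspace of `Λ_ℚ`:
the span of the vectors `λ − ˢλ` for `λ ∈ Λ`, `s ∈ H*`. -/
def Rprime (b : W) : Submodule ℚ (Fin D.rank → ℚ) :=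
  Submodule.span ℚ
    {v : Fin D.rank → ℚ | ∃ l : D.Lam, ∃ s ∈ D.Hstar b,
      v = D.iota l - D.iota ⟨s * (l : W) * s⁻¹, D.hLam_normal.conj_mem _ l.2 s⟩}

/-- `e'(A)`: the dimension of the `(−1)`-eigenspace of an endomorphism `A` of `R'`. -/
def eNeg' {b : W} (f : ↥(D.Rprime b) →ₗ[ℚ] ↥(D.Rprime b)) : ℕ :=
  Module.finrank ℚ (Module.End.eigenspace (f : Module.End ℚ ↥(D.Rprime b)) (-1))

/-- `φ'(z) = e'(B_z) − e'(B_e)`, where `B_u : x ↦ −u·(w_{H*}·x)` on `R'`; here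
`rho'` is the conjugation action of `W_{H*}` on `R'` and `wHs` is the longest element
of `W_{H*}`. -/
def phiP {b : W} (rho' : W → (↥(D.Rprime b) →ₗ[ℚ] ↥(D.Rprime b))) (wHs z : W) : ℤ :=
  (D.eNeg' (-(rho' (z * wHs))) : ℤ) - (D.eNeg' (-(rho' wHs)) : ℤ)

/-- Membership in `A_Λ ⊆ A = Aut(W,S)`: automorphisms acting on `Λ` as conjugation by some
element of `W_J`. -/
def InALam (a : MulAut W) : Prop :=
  IsDiagAut cs a ∧ ∃ w ∈ D.WJ, ∀ l ∈ D.Lam, a l = w * l * w⁻¹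

/-- Membership in the coset `A_Λ* = {a ∘ * : a ∈ A_Λ}`. -/
def InALamStar (c : MulAut W) : Prop := ∃ a : MulAut W, D.InALam a ∧ c = a * D.st

/-- The double coset `W_J x W_J^◇`, where `W_J^◇` is the subgroup generated by
`J^◇ = S − {s₁}`. -/
def DCosetDia (s1 : W) (x : W) : Set W :=
  {y : W | ∃ u ∈ D.WJ, ∃ v ∈ Subgroup.closure (Set.range cs.simple \ {s1}), y = u * x * v}


end AffineData

/-! ## The Hecke algebra, the Lusztig–Vogan module, and the polynomials `P`, `P^σ` -/

/-- The Hecke algebra of `(W,S)` over `ℚ(q)` (modelled on functions `W → ℚ(q)`, with basis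
`TT w = T_w`), together with its bar involution, and the Kazhdan–Lusztig polynomials
`P_{y,w} ∈ ℤ[q]` characterized by their defining properties. -/
structure HeckeData (cs : CoxeterSystem M W) where
  /-- the involution `q ↦ q⁻¹` of `ℚ(q)` -/
  barK : K →+* K
  hbarK_X : barK qK = qK⁻¹
  hbarK_inv : ∀ x, barK (barK x) = x
  /-- the multiplication of the Hecke algebra -/
  mulH : (W → K) →ₗ[K] (W → K) →ₗ[K] (W → K)
  hmul_assoc : ∀ x y z : W → K, mulH (mulH x y) z = mulH x (mulH y z)
  hmul_one : ∀ x : W → K, mulH (TT 1) x = x ∧ mulH x (TT 1) = x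
  hmul_TT : ∀ u v : W, cs.length (u * v) = cs.length u + cs.length v →
    mulH (TT u) (TT v) = TT (u * v)
  hmul_Ts : ∀ s ∈ Set.range cs.simple,
    mulH (TT s) (TT s) = (qK - 1) • TT s + qK • TT (1 : W)
  /-- the bar involution of the Hecke algebra: the ring involution with `q ↦ q⁻¹`,
  `T_w ↦ (T_{w⁻¹})⁻¹` -/
  barH : (W → K) →+ (W → K)
  hbarH_inv : ∀ x, barH (barH x) = x
  hbarH_smul : ∀ (c : K) (x : W → K), barH (c • x) = barK c • barH x
  hbarH_mul : ∀ x y : W → K, barH (mulH x y) = mulH (barH x) (barH y)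
  hbarH_T : ∀ w : W, mulH (barH (TT w)) (TT w⁻¹) = TT (1 : W) ∧
    mulH (TT w⁻¹) (barH (TT w)) = TT (1 : W)
  /-- the Kazhdan–Lusztig polynomials `P_{y,w}` -/
  P : W → W → Polynomial ℤ
  hP_supp : ∀ y w : W, ¬ BruhatLE cs y w → P y w = 0
  hP_diag : ∀ w : W, P w w = 1
  hP_deg : ∀ y w : W, BruhatLE cs y w → y ≠ w →
    2 * (P y w).natDegree + 1 ≤ cs.length w - cs.length y
  hP_dual : ∀ w : W,
    (qK ^ cs.length w) • barH (fun y => if BruhatLE cs y w then toK (P y w) else 0)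
      = fun y => if BruhatLE cs y w then toK (P y w) else 0

/-- The Lusztig–Vogan module `M` over the Hecke algebra `H'` with parameter `q²`, attached to
a length-preserving involutive automorphism `star` of `(W,S)`, together with its bar
involution, and the polynomials `P^σ_{y,w} ∈ ℤ[q]` (for `y, w ∈ I_*`) characterized by their
defining properties.  Both `H'` and `M` are modelled on functions `W → ℚ(q)`; the basis
element `a_w` of `M` (for `w ∈ I_*`) is `TT w`. -/
structure LVData (cs : CoxeterSystem M W) (star : MulAut W) where
  /-- the involution `q ↦ q⁻¹` of `ℚ(q)` -/
  barK : K →+* K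
  hbarK_X : barK qK = qK⁻¹
  hbarK_inv : ∀ x, barK (barK x) = x
  /-- the multiplication of the Hecke algebra `H'` with parameter `q²` -/
  mulH' : (W → K) →ₗ[K] (W → K) →ₗ[K] (W → K)
  hmul'_assoc : ∀ x y z : W → K, mulH' (mulH' x y) z = mulH' x (mulH' y z)
  hmul'_one : ∀ x : W → K, mulH' (TT 1) x = x ∧ mulH' x (TT 1) = x
  hmul'_TT : ∀ u v : W, cs.length (u * v) = cs.length u + cs.length v →
    mulH' (TT u) (TT v) = TT (u * v)
  hmul'_Ts : ∀ s ∈ Set.range cs.simple,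
    mulH' (TT s) (TT s) = (qK ^ 2 - 1) • TT s + (qK ^ 2) • TT (1 : W)
  /-- the bar involution of `H'` -/
  barH' : (W → K) →+ (W → K)
  hbarH'_inv : ∀ x, barH' (barH' x) = x
  hbarH'_smul : ∀ (c : K) (x : W → K), barH' (c • x) = barK c • barH' x
  hbarH'_mul : ∀ x y : W → K, barH' (mulH' x y) = mulH' (barH' x) (barH' y)
  hbarH'_T : ∀ w : W, mulH' (barH' (TT w)) (TT w⁻¹) = TT (1 : W) ∧
    mulH' (TT w⁻¹) (barH' (TT w)) = TT (1 : W)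
  /-- the action of `H'` on the module `M` -/
  actM : (W → K) →ₗ[K] (W → K) →ₗ[K] (W → K)
  hact_one : ∀ m : W → K, actM (TT 1) m = m
  hact_mul : ∀ (h h' : W → K) (m : W → K), actM (mulH' h h') m = actM h (actM h' m)
  hact1 : ∀ s ∈ Set.range cs.simple, ∀ w : W, star w = w⁻¹ →
    s * w = w * star s → cs.length w < cs.length (s * w) →
    actM (TT s) (TT w) = qK • TT w + (qK + 1) • TT (s * w)
  hact2 : ∀ s ∈ Set.range cs.simple, ∀ w : W, star w = w⁻¹ →
    s * w = w * star s → cs.length (s * w) < cs.length w →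
    actM (TT s) (TT w) = (qK ^ 2 - qK - 1) • TT w + (qK ^ 2 - qK) • TT (s * w)
  hact3 : ∀ s ∈ Set.range cs.simple, ∀ w : W, star w = w⁻¹ →
    s * w ≠ w * star s → cs.length w < cs.length (s * w) →
    actM (TT s) (TT w) = TT (s * w * star s)
  hact4 : ∀ s ∈ Set.range cs.simple, ∀ w : W, star w = w⁻¹ →
    s * w ≠ w * star s → cs.length (s * w) < cs.length w →
    actM (TT s) (TT w) = (qK ^ 2 - 1) • TT w + (qK ^ 2) • TT (s * w * star s)
  /-- the bar involution of the module `M` -/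
  barM : (W → K) →+ (W → K)
  hbarM_inv : ∀ m : W → K, barM (barM m) = m
  hbarM_smul : ∀ (c : K) (m : W → K), barM (c • m) = barK c • barM m
  hbarM_act : ∀ (h m : W → K), barM (actM h m) = actM (barH' h) (barM m)
  hbarM_one : barM (TT 1) = TT (1 : W)
  /-- the Lusztig–Vogan polynomials `P^σ_{y,w}` -/
  Psig : W → W → Polynomial ℤ
  hPsig_supp : ∀ y w : W, ¬ (BruhatLE cs y w ∧ star y = y⁻¹) → Psig y w = 0
  hPsig_diag : ∀ w : W, star w = w⁻¹ → Psig w w = 1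
  hPsig_deg : ∀ y w : W, star w = w⁻¹ → star y = y⁻¹ → BruhatLE cs y w → y ≠ w →
    2 * (Psig y w).natDegree + 1 ≤ cs.length w - cs.length y
  hPsig_dual : ∀ w : W, star w = w⁻¹ →
    (qK ^ (2 * cs.length w)) •
        barM (fun y => if BruhatLE cs y w ∧ star y = y⁻¹ then toK (Psig y w) else 0)
      = fun y => if BruhatLE cs y w ∧ star y = y⁻¹ then toK (Psig y w) else 0

/-! ## The `Z`-polynomials -/

/-- `Z_w(q) = Σ_{y ≤ w} P_{y,w}(q) q^{ℓ(y)}`. -/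
def Zpoly (cs : CoxeterSystem M W) (HD : HeckeData cs) (w : W) : K :=
  ∑ᶠ y : W, if BruhatLE cs y w then toK (HD.P y w) * qK ^ cs.length y else 0

/-- `Z_w(−q) = Σ_{y ≤ w} P_{y,w}(−q) (−q)^{ℓ(y)}`. -/
def ZpolyNeg (cs : CoxeterSystem M W) (HD : HeckeData cs) (w : W) : K :=
  ∑ᶠ y : W, if BruhatLE cs y w then atNegQ (HD.P y w) * (-qK) ^ cs.length y else 0

/-- `Z^σ_w(q) = Σ_{y ≤ w, y ∈ I_*} P^σ_{y,w}(q) q^{ℓ(y)} ((q−1)/(q+1))^{φ(y)}`. -/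
def Zsig (cs : CoxeterSystem M W) (D : AffineData cs) (LD : LVData cs D.st) (w : W) : K :=
  ∑ᶠ y : W, if BruhatLE cs y w ∧ D.st y = y⁻¹ then
    toK (LD.Psig y w) * qK ^ cs.length y * ((qK - 1) / (qK + 1)) ^ D.phi y else 0

set_option linter.all false

/-! ### Part A: the inversion cocycle -/

/-- the permutation of `W × ZMod 2` attached to a simple reflection -/
def etaFun (cs : CoxeterSystem M W) (i : B) : Equiv.Perm (W × ZMod 2) where
  toFun p := (cs.simple i * p.1 * cs.simple i, p.2 + if p.1 = cs.simple i then 1 else 0)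
  invFun p := (cs.simple i * p.1 * cs.simple i, p.2 + if p.1 = cs.simple i then 1 else 0)
  left_inv p := by
    obtain ⟨t, z⟩ := p
    have h : (cs.simple i * t * cs.simple i = cs.simple i) ↔ t = cs.simple i := by
      constructor
      · intro h
        have h2 := congrArg (fun x => cs.simple i * x * cs.simple i) h
        simpa [mul_assoc] using h2
      · rintro rfl; simp
    ext
    · simp [mul_assoc]
    · simp only [h]
      split_ifs
      · rw [add_assoc]; simp; decide
      · simp
  right_inv p := by
    obtain ⟨t, z⟩ := p
    have h : (cs.simple i * t * cs.simple i = cs.simple i) ↔ t = cs.simple i := by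
      constructor
      · intro h
        have h2 := congrArg (fun x => cs.simple i * x * cs.simple i) h
        simpa [mul_assoc] using h2
      · rintro rfl; simp
    ext
    · simp [mul_assoc]
    · simp only [h]
      split_ifs
      · rw [add_assoc]; simp; decide
      · simp

theorem etaFun_pow (cs : CoxeterSystem M W) (i j : B) (k : ℕ) (t : W) (z : ZMod 2) :
    ((etaFun cs i * etaFun cs j) ^ k) (t, z) =
      ((cs.simple i * cs.simple j) ^ k * t * ((cs.simple i * cs.simple j) ^ k)⁻¹,
        z + ∑ l ∈ Finset.range (2 * k),
          if t = ((cs.simple i * cs.simple j) ^ l)⁻¹ * cs.simple j then 1 else 0) := by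
  set c := cs.simple i * cs.simple j with hc
  have hcj : ∀ l : ℕ, cs.simple j * c ^ l = (c ^ l)⁻¹ * cs.simple j := by
    intro l
    induction l with
    | zero => simp
    | succ l ih =>
      have h1 : cs.simple j * c = c⁻¹ * cs.simple j := by simp [hc, mul_assoc]
      rw [pow_succ', ← mul_assoc, h1, mul_assoc, ih, ← mul_assoc, ← mul_inv_rev, ← pow_succ,
        ← pow_succ']
  induction k with
  | zero => simp
  | succ k ih =>
    rw [pow_succ', Equiv.Perm.mul_apply, ih]
    have e1 : (c ^ k * t * (c ^ k)⁻¹ = cs.simple j) ↔ t = (c ^ (2 * k))⁻¹ * cs.simple j := by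
      rw [mul_inv_eq_iff_eq_mul, ← eq_inv_mul_iff_mul_eq, hcj, ← mul_assoc, two_mul, pow_add,
        mul_inv_rev]
    have e2 : (cs.simple j * (c ^ k * t * (c ^ k)⁻¹) * cs.simple j = cs.simple i) ↔
        t = (c ^ (2 * k + 1))⁻¹ * cs.simple j := by
      rw [← eq_mul_inv_iff_mul_eq, cs.inv_simple, ← eq_inv_mul_iff_mul_eq, mul_inv_eq_iff_eq_mul,
        ← eq_inv_mul_iff_mul_eq, cs.inv_simple, ← hc, pow_succ', two_mul, pow_add]
      have : (c ^ k)⁻¹ * (cs.simple j * c * c ^ k) = (c * (c ^ k * c ^ k))⁻¹ * cs.simple j := by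
        rw [mul_assoc, ← pow_succ', hcj, pow_succ', ← mul_assoc, ← mul_inv_rev, mul_assoc]
      rw [this]
    rw [show 2 * (k + 1) = 2 * k + 1 + 1 by ring, Finset.sum_range_succ, Finset.sum_range_succ]
    simp only [Equiv.Perm.mul_apply, etaFun, Equiv.coe_fn_mk, e1, e2]
    ext
    · simp [pow_succ', hc, mul_assoc]
    · simp [add_assoc]

theorem etaFun_liftable (cs : CoxeterSystem M W) : M.IsLiftable (etaFun cs) := by
  intro i j
  ext1 ⟨t, z⟩
  rw [etaFun_pow]
  set m := M i j
  have hm : (cs.simple i * cs.simple j) ^ m = 1 := cs.simple_mul_simple_pow i j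
  rw [two_mul, Finset.sum_range_add]
  simp only [pow_add, hm, one_mul]
  ext
  · simp
  · simp only [Equiv.Perm.coe_one, id_eq]
    have : ∀ x : ZMod 2, x + x = 0 := by decide
    rw [this, add_zero]

/-- the permutation representation -/
def etaHom (cs : CoxeterSystem M W) : W →* Equiv.Perm (W × ZMod 2) :=
  cs.lift ⟨etaFun cs, etaFun_liftable cs⟩

theorem etaHom_simple (cs : CoxeterSystem M W) (i : B) :
    etaHom cs (cs.simple i) = etaFun cs i := cs.lift_apply_simple (etaFun_liftable cs) i

/-- the inversion cocycle -/
def eta (cs : CoxeterSystem M W) (x t : W) : ZMod 2 := (etaHom cs x⁻¹ (t, 0)).2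

theorem etaHom_apply (cs : CoxeterSystem M W) (x t : W) (z : ZMod 2) :
    etaHom cs x (t, z) = (x * t * x⁻¹, z + eta cs x⁻¹ t) := by
  induction x using cs.simple_induction_left generalizing t z with
  | one => simp [eta]
  | mul_simple_left x i ih =>
    have h1 : ∀ z, etaHom cs (cs.simple i * x) (t, z) =
      (cs.simple i * x * t * (cs.simple i * x)⁻¹,
        z + (eta cs x⁻¹ t + if x * t * x⁻¹ = cs.simple i then 1 else 0)) := by
      intro z
      rw [map_mul, Equiv.Perm.mul_apply, ih, etaHom_simple]
      simp [etaFun, mul_assoc, add_assoc]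
    rw [h1]
    have h2 : eta cs (cs.simple i * x)⁻¹ t =
        eta cs x⁻¹ t + if x * t * x⁻¹ = cs.simple i then 1 else 0 := by
      unfold eta
      rw [inv_inv, h1]; simp [eta]
    rw [h2]

theorem eta_one (cs : CoxeterSystem M W) (t : W) : eta cs 1 t = 0 := by simp [eta]

theorem eta_mul (cs : CoxeterSystem M W) (x y t : W) :
    eta cs (x * y) t = eta cs x t + eta cs y (x⁻¹ * t * x) := by
  have h1 := etaHom_apply cs (x * y)⁻¹ t 0
  rw [mul_inv_rev, map_mul, Equiv.Perm.mul_apply, etaHom_apply, etaHom_apply] at h1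
  have h2 := congrArg Prod.snd h1
  simp only [mul_inv_rev, inv_inv, zero_add] at h2
  exact h2.symm

theorem eta_simple (cs : CoxeterSystem M W) (i : B) (t : W) :
    eta cs (cs.simple i) t = if t = cs.simple i then 1 else 0 := by
  simp [eta, etaHom_simple, etaFun]

theorem eta_refl (cs : CoxeterSystem M W) {t : W} (ht : cs.IsReflection t) : eta cs t t = 1 := by
  obtain ⟨w, i, rfl⟩ := ht
  have h := eta_mul cs w w⁻¹ (w * cs.simple i * w⁻¹)
  simp only [mul_inv_cancel, eta_one] at h
  rw [eta_mul, eta_mul, eta_simple]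
  simp only [mul_assoc, inv_mul_cancel, inv_mul_cancel_left, mul_one, mul_inv_rev, inv_inv] at h ⊢
  simp only [cs.inv_simple, if_true, cs.simple_mul_simple_cancel_left, cs.simple_mul_simple_self, mul_one]
  rw [add_right_comm, ← h, zero_add]

theorem mem_lis_of_eta (cs : CoxeterSystem M W) (ω : List B) (t : W)
    (h : eta cs (cs.wordProd ω) t = 1) : t ∈ cs.leftInvSeq ω := by
  induction ω generalizing t with
  | nil => simp [eta_one] at h
  | cons i ω ih =>
    rw [cs.wordProd_cons, eta_mul, eta_simple] at h
    simp only [CoxeterSystem.leftInvSeq, List.mem_cons, List.mem_map]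
    by_cases h1 : t = cs.simple i
    · exact Or.inl h1
    · rw [if_neg h1, zero_add] at h
      right
      exact ⟨_, ih _ h, by simp [mul_assoc]⟩

theorem zmod2_cases (x : ZMod 2) : x = 0 ∨ x = 1 := by revert x; decide

theorem eta_eq_one_iff (cs : CoxeterSystem M W) (x t : W) :
    eta cs x t = 1 ↔ cs.IsReflection t ∧ cs.length (t * x) < cs.length x := by
  have key : ∀ x, eta cs x t = 1 → cs.IsReflection t ∧ cs.length (t * x) < cs.length x := by
    intro x h
    obtain ⟨ω, hω, rfl⟩ := cs.exists_isReduced x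
    exact cs.isLeftInversion_of_mem_leftInvSeq hω (mem_lis_of_eta cs ω t h)
  refine ⟨key x, ?_⟩
  rintro ⟨ht, hl⟩
  rcases zmod2_cases (eta cs x t) with h | h
  · exfalso
    have : eta cs (t * x) t = 1 := by rw [eta_mul, eta_refl cs ht]; simp [ht.mul_self, h]
    have := (key _ this).2
    rw [← mul_assoc, ht.mul_self, one_mul] at this
    omega
  · exact h

/-- the set of (left) inversions -/
def Ninv (cs : CoxeterSystem M W) (x : W) : Set W := {t | eta cs x t = 1}

theorem Ninv_eq_lis (cs : CoxeterSystem M W) {ω : List B} (hω : cs.IsReduced ω) :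
    Ninv cs (cs.wordProd ω) = {t | t ∈ cs.leftInvSeq ω} := by
  ext t
  exact ⟨mem_lis_of_eta cs ω t, fun h => (eta_eq_one_iff _ _ _).2
    (cs.isLeftInversion_of_mem_leftInvSeq hω h)⟩

theorem Ninv_finite (cs : CoxeterSystem M W) (x : W) : (Ninv cs x).Finite := by
  obtain ⟨ω, hω, rfl⟩ := cs.exists_isReduced x
  rw [Ninv_eq_lis cs hω]
  exact List.finite_toSet _

theorem Ninv_ncard (cs : CoxeterSystem M W) (x : W) : (Ninv cs x).ncard = cs.length x := by
  obtain ⟨ω, hω, rfl⟩ := cs.exists_isReduced x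
  rw [Ninv_eq_lis cs hω, hω.eq]
  have : {t | t ∈ cs.leftInvSeq ω} = ((cs.leftInvSeq ω).toFinset : Set W) := by ext; simp
  rw [this, Set.ncard_coe_finset, List.toFinset_card_of_nodup hω.nodup_leftInvSeq]
  simp

theorem mem_Ninv (cs : CoxeterSystem M W) {x t : W} :
    t ∈ Ninv cs x ↔ cs.IsReflection t ∧ cs.length (t * x) < cs.length x := eta_eq_one_iff cs x t

/-- cocycle, set version -/
theorem mem_Ninv_mul (cs : CoxeterSystem M W) (x y t : W) :
    t ∈ Ninv cs (x * y) ↔ ((t ∈ Ninv cs x ∧ x⁻¹ * t * x ∉ Ninv cs y) ∨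
      (t ∉ Ninv cs x ∧ x⁻¹ * t * x ∈ Ninv cs y)) := by
  simp only [Ninv, Set.mem_setOf_eq, eta_mul]
  rcases zmod2_cases (eta cs x t) with h | h <;>
    rcases zmod2_cases (eta cs y (x⁻¹ * t * x)) with h' | h' <;> rw [h, h'] <;> decide

theorem Ninv_one (cs : CoxeterSystem M W) : Ninv cs 1 = ∅ := by
  ext t; simp [Ninv, eta_one]

theorem Ninv_simple (cs : CoxeterSystem M W) (i : B) : Ninv cs (cs.simple i) = {cs.simple i} := by
  ext t; simp [Ninv, eta_simple]

theorem exchange (cs : CoxeterSystem M W) (ω : List B) (t : W)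
    (h : t ∈ Ninv cs (cs.wordProd ω)) : ∃ j < ω.length,
      t * cs.wordProd ω = cs.wordProd (ω.eraseIdx j) := by
  have := mem_lis_of_eta cs ω t h
  obtain ⟨j, hj, rfl⟩ := List.getElem_of_mem this
  have hj' : j < ω.length := by simpa using hj
  refine ⟨j, hj', ?_⟩
  rw [← cs.getD_leftInvSeq_mul_wordProd, List.getD_eq_getElem _ _ hj]

/-- the length of a product in terms of inversion sets -/
theorem length_mul_of_disj (cs : CoxeterSystem M W) (x y : W)
    (h : ∀ t ∈ Ninv cs y, x * t * x⁻¹ ∉ Ninv cs x) :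
    cs.length (x * y) = cs.length x + cs.length y := by
  have h1 : Ninv cs (x * y) = Ninv cs x ∪ (fun t => x * t * x⁻¹) '' Ninv cs y := by
    ext t
    rw [mem_Ninv_mul]
    constructor
    · rintro (h | h)
      · exact Or.inl h.1
      · exact Or.inr ⟨_, h.2, by group⟩
    · rintro (h1 | ⟨u, hu, rfl⟩)
      · refine Or.inl ⟨h1, fun h2 => h _ h2 ?_⟩
        convert h1 using 1; group
      · refine Or.inr ⟨h _ hu, ?_⟩
        convert hu using 1; group
  have hd : Disjoint (Ninv cs x) ((fun t => x * t * x⁻¹) '' Ninv cs y) := by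
    rw [Set.disjoint_right]
    rintro _ ⟨u, hu, rfl⟩
    exact h u hu
  rw [← Ninv_ncard, ← Ninv_ncard, ← Ninv_ncard, h1, Set.ncard_union_eq hd (Ninv_finite _ _)
    ((Ninv_finite _ _).image _), Set.ncard_image_of_injective]
  intro a b hab
  simpa using hab


/-! ### Part B: parabolic subgroups -/

theorem Ninv_inv_iff (cs : CoxeterSystem M W) (x t : W) :
    x⁻¹ * t * x ∈ Ninv cs x⁻¹ ↔ t ∈ Ninv cs x := by
  have h := mem_Ninv_mul cs x x⁻¹ t
  rw [mul_inv_cancel, Ninv_one] at h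
  simp only [Set.mem_empty_iff_false, false_iff] at h
  tauto

theorem Ninv_inv_iff' (cs : CoxeterSystem M W) (x t : W) :
    t ∈ Ninv cs x⁻¹ ↔ x * t * x⁻¹ ∈ Ninv cs x := by
  rw [← Ninv_inv_iff cs x]
  simp [mul_assoc]

theorem mem_Ninv_simple (cs : CoxeterSystem M W) {s : W} (hs : s ∈ Set.range cs.simple) (x : W) :
    s ∈ Ninv cs x ↔ cs.length (s * x) < cs.length x := by
  obtain ⟨i, rfl⟩ := hs
  rw [mem_Ninv]
  exact and_iff_right (cs.isReflection_simple i)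

theorem mem_Ninv_inv_refl (cs : CoxeterSystem M W) {t : W} (ht : cs.IsReflection t) (x : W) :
    t ∈ Ninv cs x⁻¹ ↔ cs.length (x * t) < cs.length x := by
  rw [mem_Ninv, and_iff_right ht, ← cs.length_inv (t * x⁻¹), cs.length_inv x]
  simp [ht.inv]

theorem exists_reduced_word (cs : CoxeterSystem M W) {L : Set W} (hL : L ⊆ Set.range cs.simple)
    {v : W} (hv : v ∈ Subgroup.closure L) :
    ∃ ω : List B, cs.IsReduced ω ∧ v = cs.wordProd ω ∧ ∀ i ∈ ω, cs.simple i ∈ L := by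
  have step : ∀ s ∈ L, ∀ y : W,
      (∃ ω : List B, cs.IsReduced ω ∧ y = cs.wordProd ω ∧ ∀ i ∈ ω, cs.simple i ∈ L) →
      (∃ ω : List B, cs.IsReduced ω ∧ s * y = cs.wordProd ω ∧ ∀ i ∈ ω, cs.simple i ∈ L) := by
    rintro s hs y ⟨ω, hω, rfl, hωL⟩
    obtain ⟨i, rfl⟩ := hL hs
    rcases cs.length_simple_mul (cs.wordProd ω) i with h | h
    · refine ⟨i :: ω, ?_, (cs.wordProd_cons i ω).symm, ?_⟩
      · rw [CoxeterSystem.IsReduced, cs.wordProd_cons, h, hω.eq]; simp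
      · intro j hj
        rcases List.mem_cons.1 hj with rfl | hj
        · exact hs
        · exact hωL j hj
    · have hmem : cs.simple i ∈ Ninv cs (cs.wordProd ω) :=
        (mem_Ninv_simple cs ⟨i, rfl⟩ _).2 (by omega)
      obtain ⟨j, hj, he⟩ := exchange cs ω _ hmem
      refine ⟨ω.eraseIdx j, ?_, he, ?_⟩
      · rw [CoxeterSystem.IsReduced, ← he, List.length_eraseIdx_of_lt hj]
        have := hω.eq
        omega
      · intro k hk
        exact hωL k (List.mem_of_mem_eraseIdx hk)
  induction hv using Subgroup.closure_induction_left with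
  | one => exact ⟨[], by simp [CoxeterSystem.IsReduced], by simp, by simp⟩
  | mul_left s hs y hy ih => exact step s hs y ih
  | inv_mul_cancel s hs y hy ih =>
    obtain ⟨i, rfl⟩ := hL hs
    rw [cs.inv_simple]
    exact step _ hs y ih

theorem wordProd_mem (cs : CoxeterSystem M W) {L : Set W} {ω : List B}
    (h : ∀ i ∈ ω, cs.simple i ∈ L) : cs.wordProd ω ∈ Subgroup.closure L := by
  induction ω with
  | nil => simp
  | cons i ω ih =>
    rw [cs.wordProd_cons]
    exact mul_mem (Subgroup.subset_closure (h i (by simp))) (ih fun j hj => h j (by simp [hj]))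

theorem Ninv_subset (cs : CoxeterSystem M W) {L : Set W} (hL : L ⊆ Set.range cs.simple)
    {v : W} (hv : v ∈ Subgroup.closure L) {t : W} (ht : t ∈ Ninv cs v) :
    t ∈ Subgroup.closure L := by
  obtain ⟨ω, hω, rfl, hωL⟩ := exists_reduced_word cs hL hv
  obtain ⟨j, hj, he⟩ := exchange cs ω t ht
  have h2 : cs.wordProd (ω.eraseIdx j) ∈ Subgroup.closure L :=
    wordProd_mem cs fun k hk => hωL k (List.mem_of_mem_eraseIdx hk)
  rw [← he] at h2
  exact (Subgroup.mul_mem_cancel_right _ hv).1 h2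

theorem mem_of_simple_mem (cs : CoxeterSystem M W) {L : Set W} (hL : L ⊆ Set.range cs.simple)
    {s : W} (hs : s ∈ Set.range cs.simple) (h : s ∈ Subgroup.closure L) : s ∈ L := by
  obtain ⟨ω, hω, rfl, hωL⟩ := exists_reduced_word cs hL h
  obtain ⟨i, hi⟩ := hs
  have h1 := hω.eq
  rw [← hi, cs.length_simple] at h1
  obtain ⟨j, rfl⟩ := List.length_eq_one_iff.1 h1.symm
  simpa using hωL j (by simp)

theorem mem_of_length_one (cs : CoxeterSystem M W) {L : Set W} (hL : L ⊆ Set.range cs.simple)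
    {s : W} (hs : cs.length s = 1) (h : s ∈ Subgroup.closure L) : s ∈ L := by
  obtain ⟨i, rfl⟩ := cs.length_eq_one_iff.1 hs
  exact mem_of_simple_mem cs hL ⟨i, rfl⟩ h

theorem exists_desc (cs : CoxeterSystem M W) {L : Set W} (hL : L ⊆ Set.range cs.simple)
    {v : W} (hv : v ∈ Subgroup.closure L) (h1 : v ≠ 1) : ∃ s ∈ L, s ∈ Ninv cs v := by
  obtain ⟨ω, hω, rfl, hωL⟩ := exists_reduced_word cs hL hv
  cases ω with
  | nil => simp at h1
  | cons i ω =>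
    refine ⟨cs.simple i, hωL i (by simp), (mem_Ninv_simple cs ⟨i, rfl⟩ _).2 ?_⟩
    rw [hω.eq, cs.wordProd_cons, cs.simple_mul_simple_cancel_left]
    have := cs.length_wordProd_le ω
    simp; omega

/-- minimality in `W_L w` -/
def LMin (cs : CoxeterSystem M W) (L : Set W) (u : W) : Prop := ∀ s ∈ L, s ∉ Ninv cs u

/-- minimality in `w W_L` -/
def RMin (cs : CoxeterSystem M W) (L : Set W) (u : W) : Prop := ∀ s ∈ L, s ∉ Ninv cs u⁻¹

theorem exists_lmin_aux (cs : CoxeterSystem M W) (L : Set W) (w : W) :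
    ∃ v ∈ Subgroup.closure L, ∃ u, (∀ t ∈ Subgroup.closure L, t ∉ Ninv cs u) ∧ w = v * u := by
  have hne : {n | ∃ v ∈ Subgroup.closure L, cs.length (v * w) = n}.Nonempty :=
    ⟨_, 1, one_mem _, rfl⟩
  obtain ⟨v, hv, hvl⟩ := Nat.sInf_mem hne
  refine ⟨v⁻¹, inv_mem hv, v * w, ?_, by simp⟩
  intro t ht htN
  have h1 := ((mem_Ninv cs).1 htN).2
  have h2 : sInf {n | ∃ v ∈ Subgroup.closure L, cs.length (v * w) = n} ≤
    cs.length (t * (v * w)) := Nat.sInf_le ⟨t * v, mul_mem ht hv, by rw [mul_assoc]⟩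
  omega

theorem LMin.disj {cs : CoxeterSystem M W} {L : Set W} (hL : L ⊆ Set.range cs.simple) {w : W}
    (h : LMin cs L w) : ∀ t ∈ Subgroup.closure L, t ∉ Ninv cs w := by
  obtain ⟨v, hv, u, hu, rfl⟩ := exists_lmin_aux cs L w
  by_cases h1 : v = 1
  · subst h1; simpa using hu
  · obtain ⟨s, hs, hsN⟩ := exists_desc cs hL hv h1
    exfalso
    apply h s hs
    rw [mem_Ninv_mul]
    refine Or.inl ⟨hsN, hu _ (mul_mem (mul_mem (inv_mem hv) (Subgroup.subset_closure hs)) hv)⟩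

theorem RMin.inv {cs : CoxeterSystem M W} {L : Set W} {w : W} (h : RMin cs L w) :
    LMin cs L w⁻¹ := h

theorem RMin.disj {cs : CoxeterSystem M W} {L : Set W} (hL : L ⊆ Set.range cs.simple) {w : W}
    (h : RMin cs L w) : ∀ t ∈ Subgroup.closure L, w * t * w⁻¹ ∉ Ninv cs w := by
  intro t ht
  rw [← Ninv_inv_iff']
  exact h.inv.disj hL t ht

theorem RMin.length_mul {cs : CoxeterSystem M W} {L : Set W} (hL : L ⊆ Set.range cs.simple) {u v : W}
    (h : RMin cs L u) (hv : v ∈ Subgroup.closure L) :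
    cs.length (u * v) = cs.length u + cs.length v :=
  length_mul_of_disj cs u v fun t ht => h.disj hL t (Ninv_subset cs hL hv ht)

theorem exists_rmin (cs : CoxeterSystem M W) (L : Set W) (w : W) :
    ∃ v ∈ Subgroup.closure L, ∃ u, RMin cs L u ∧ w = u * v := by
  obtain ⟨v, hv, u, hu, h⟩ := exists_lmin_aux cs L w⁻¹
  refine ⟨v⁻¹, inv_mem hv, u⁻¹, ?_, ?_⟩
  · intro s hs; rw [inv_inv]; exact hu s (Subgroup.subset_closure hs)
  · rw [← mul_inv_rev, ← h, inv_inv]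

theorem RMin.unique {cs : CoxeterSystem M W} {L : Set W} (hL : L ⊆ Set.range cs.simple) {u u' v v' : W}
    (h : RMin cs L u) (h' : RMin cs L u') (hv : v ∈ Subgroup.closure L)
    (hv' : v' ∈ Subgroup.closure L) (he : u * v = u' * v') : u = u' ∧ v = v' := by
  have e1 : u * (v * v'⁻¹) = u' := by rw [← mul_assoc, he]; simp
  have e2 : u' * (v * v'⁻¹)⁻¹ = u := by rw [← e1, mul_inv_cancel_right]
  have m := mul_mem hv (inv_mem hv')
  have l1 := h.length_mul hL m
  have l2 := h'.length_mul hL (inv_mem m)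
  rw [e1] at l1
  rw [e2] at l2
  have : v * v'⁻¹ = 1 := cs.length_eq_zero_iff.1 (by omega)
  refine ⟨?_, mul_inv_eq_one.1 this⟩
  rw [← e1, this, mul_one]

theorem rmin_one (cs : CoxeterSystem M W) (L : Set W) : RMin cs L 1 := by
  intro s hs; simp [Ninv_one]

/-- reflections in a parabolic subgroup -/
def Tset (cs : CoxeterSystem M W) (L : Set W) : Set W :=
  {t | cs.IsReflection t ∧ t ∈ Subgroup.closure L}

theorem simple_mem_Tset (cs : CoxeterSystem M W) {L : Set W} (hL : L ⊆ Set.range cs.simple)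
    {s : W} (hs : s ∈ L) : s ∈ Tset cs L := by
  obtain ⟨i, rfl⟩ := hL hs
  exact ⟨cs.isReflection_simple i, Subgroup.subset_closure hs⟩

/-- the longest element of `W_L` -/
structure IsLongest (cs : CoxeterSystem M W) (L : Set W) (w : W) : Prop where
  sub : L ⊆ Set.range cs.simple
  mem : w ∈ Subgroup.closure L
  N : Ninv cs w = Tset cs L

theorem isLongest_of_max (cs : CoxeterSystem M W) {L : Set W} (hL : L ⊆ Set.range cs.simple) {w : W}
    (hw : w ∈ Subgroup.closure L)
    (hmax : ∀ u ∈ Subgroup.closure L, cs.length u ≤ cs.length w) : IsLongest cs L w := by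
  refine ⟨hL, hw, ?_⟩
  ext t
  constructor
  · intro ht
    exact ⟨((mem_Ninv cs).1 ht).1, Ninv_subset cs hL hw ht⟩
  · rintro ⟨ht, htm⟩
    rw [mem_Ninv]
    refine ⟨ht, lt_of_le_of_ne (hmax _ (mul_mem htm hw)) (ht.length_mul_right_ne w)⟩

theorem exists_longest (cs : CoxeterSystem M W) {L : Set W} (hL : L ⊆ Set.range cs.simple)
    (hfin : (Subgroup.closure L : Set W).Finite) : ∃ w, IsLongest cs L w := by
  obtain ⟨w, hw, hmax⟩ := hfin.exists_maximalFor cs.length _ ⟨1, one_mem _⟩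
  refine ⟨w, isLongest_of_max cs hL hw fun u hu => ?_⟩
  by_contra hlt
  exact hlt (hmax hu (by omega))

namespace IsLongest
variable {cs : CoxeterSystem M W} {L : Set W} {w : W}

theorem conj_mem {y t : W} (hy : y ∈ Subgroup.closure L) (ht : t ∈ Tset cs L) :
    y * t * y⁻¹ ∈ Tset cs L :=
  ⟨ht.1.conj y, mul_mem (mul_mem hy ht.2) (inv_mem hy)⟩

theorem mem_N_mul (h : IsLongest cs L w) {y t : W} (hy : y ∈ Subgroup.closure L) (ht : t ∈ Tset cs L) :
    t ∈ Ninv cs (y * w) ↔ t ∉ Ninv cs y := by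
  rw [mem_Ninv_mul, h.N]
  have : y⁻¹ * t * y ∈ Tset cs L := by simpa using conj_mem (inv_mem hy) ht
  tauto

theorem length_mul (h : IsLongest cs L w) {y : W} (hy : y ∈ Subgroup.closure L) :
    cs.length w = cs.length y + cs.length (y * w) := by
  have := length_mul_of_disj cs y⁻¹ (y * w) ?_
  · rw [cs.length_inv] at this
    simpa using this
  · intro t ht
    have htm : t ∈ Tset cs L :=
      ⟨((mem_Ninv cs).1 ht).1, Ninv_subset cs h.sub (mul_mem hy h.mem) ht⟩
    rw [h.mem_N_mul hy htm] at ht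
    rw [inv_inv, Ninv_inv_iff]
    exact ht

theorem unique {w' : W} (h : IsLongest cs L w) (h' : IsLongest cs L w') : w = w' := by
  have h1 := h.length_mul (mul_mem h'.mem (inv_mem h.mem))
  rw [inv_mul_cancel_right] at h1
  have h2 : cs.length w = cs.length w' := by rw [← Ninv_ncard, ← Ninv_ncard, h.N, h'.N]
  have : w' * w⁻¹ = 1 := cs.length_eq_zero_iff.1 (by omega)
  exact (mul_inv_eq_one.1 this).symm

theorem length_le (h : IsLongest cs L w) {y : W} (hy : y ∈ Subgroup.closure L) :
    cs.length y ≤ cs.length w := by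
  have := h.length_mul hy; omega

theorem inv_eq (h : IsLongest cs L w) : w⁻¹ = w :=
  (isLongest_of_max cs h.sub (inv_mem h.mem) fun u hu => by
    rw [cs.length_inv]; exact h.length_le hu).unique h

theorem mul_self (h : IsLongest cs L w) : w * w = 1 := by
  nth_rw 1 [← h.inv_eq]; simp

theorem length_mul_right (h : IsLongest cs L w) {y : W} (hy : y ∈ Subgroup.closure L) :
    cs.length w = cs.length y + cs.length (w * y) := by
  have := h.length_mul (inv_mem hy)
  rw [cs.length_inv, ← cs.length_inv (_ * _)] at this
  simpa [h.inv_eq] using this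

theorem eq_of_desc (h : IsLongest cs L w) {v : W} (hv : v ∈ Subgroup.closure L)
    (hd : ∀ s ∈ L, s ∈ Ninv cs v) : v = w := by
  have hm := mul_mem hv h.mem
  by_cases h1 : v * w = 1
  · rw [← h.inv_eq]; exact eq_inv_of_mul_eq_one_left h1
  · obtain ⟨s, hs, hsN⟩ := exists_desc cs h.sub hm h1
    exact absurd (hd s hs) ((h.mem_N_mul hv (simple_mem_Tset cs h.sub hs)).1 hsN)

theorem length_eq (h : IsLongest cs L w) : cs.length w = (Tset cs L).ncard := by
  rw [← Ninv_ncard, h.N]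

theorem length_conj (h : IsLongest cs L w) {y : W} (hy : y ∈ Subgroup.closure L) :
    cs.length (w * y * w) = cs.length y := by
  have h1 := h.length_mul hy
  have h2 := h.length_mul_right (mul_mem hy h.mem)
  rw [← mul_assoc] at h2
  omega

theorem conj_closure (h : IsLongest cs L w) {y : W} (hy : y ∈ Subgroup.closure L) :
    w * y * w ∈ Subgroup.closure L := mul_mem (mul_mem h.mem hy) h.mem

theorem conj_L (h : IsLongest cs L w) {s : W} (hs : s ∈ L) : w * s * w ∈ L := by
  apply mem_of_length_one cs h.sub _ (h.conj_closure (Subgroup.subset_closure hs))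
  rw [h.length_conj (Subgroup.subset_closure hs)]
  obtain ⟨i, rfl⟩ := h.sub hs
  exact cs.length_simple i

/-- an element with all of `L` as right descents -/
theorem rfull (h : IsLongest cs L w) {x : W} (hx : ∀ s ∈ L, s ∈ Ninv cs x⁻¹) :
    ∃ u, RMin cs L u ∧ x = u * w := by
  obtain ⟨v, hv, u, hu, rfl⟩ := exists_rmin cs L x
  refine ⟨u, hu, ?_⟩
  have : v⁻¹ = w := by
    apply h.eq_of_desc (inv_mem hv)
    intro s hs
    have hr := (simple_mem_Tset cs h.sub hs).1
    have hsc := Subgroup.subset_closure hs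
    have := (mem_Ninv_inv_refl cs hr _).1 (hx s hs)
    rw [mul_assoc, hu.length_mul h.sub hv, hu.length_mul h.sub (mul_mem hv hsc)] at this
    exact (mem_Ninv_inv_refl cs hr _).2 (by omega)
  rw [← inv_inv v, this, h.inv_eq]

end IsLongest


/-! ### Part C: the representation on `Λ_ℚ` -/

namespace AffineData
variable {cs : CoxeterSystem M W} (D : AffineData cs)

theorem iota_mul (a b : D.Lam) : D.iota (a * b) = D.iota a + D.iota b := by
  ext i; simp [iota]

theorem iota_one : D.iota 1 = 0 := by
  ext i; simp [iota]

theorem iota_inv (a : D.Lam) : D.iota a⁻¹ = - D.iota a := by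
  ext i; simp [iota]

theorem iota_zpow (a : D.Lam) (n : ℤ) : D.iota (a ^ n) = (n : ℚ) • D.iota a := by
  ext i; simp [iota]

theorem iota_injective : Function.Injective D.iota := by
  intro a b h
  apply D.freeIso.injective
  apply Multiplicative.toAdd.injective
  ext i
  have := congrFun h i
  simpa [iota] using this

/-- conjugation on `Λ` -/
def cj (w : W) (l : D.Lam) : D.Lam := ⟨w * (l : W) * w⁻¹, D.hLam_normal.conj_mem _ l.2 w⟩

theorem rho_iota (w : W) (l : D.Lam) : D.rho w (D.iota l) = D.iota (D.cj w l) := D.hrho w l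

theorem exists_iota (v : Fin D.rank → ℚ) : ∃ n : ℕ, 0 < n ∧ ∃ l : D.Lam, (n : ℚ) • v = D.iota l := by
  refine ⟨∏ i, (v i).den, Finset.prod_pos fun i _ => (v i).den_pos, ?_⟩
  have h : ∀ i, ∃ z : ℤ, ((∏ j, (v j).den : ℕ) : ℚ) * v i = z := by
    intro i
    obtain ⟨c, hc⟩ := Finset.dvd_prod_of_mem (fun j => (v j).den) (Finset.mem_univ i)
    refine ⟨c * (v i).num, ?_⟩
    rw [hc]
    push_cast
    have := Rat.den_mul_eq_num (v i)
    rw [← this]; ring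
  choose z hz using h
  refine ⟨D.freeIso.symm (Multiplicative.ofAdd z), ?_⟩
  ext i
  simp only [iota, MulEquiv.apply_symm_apply, toAdd_ofAdd, Pi.smul_apply, smul_eq_mul]
  exact hz i

theorem lin_ext {f g : (Fin D.rank → ℚ) →ₗ[ℚ] (Fin D.rank → ℚ)}
    (h : ∀ l, f (D.iota l) = g (D.iota l)) : f = g := by
  refine LinearMap.ext fun v => ?_
  obtain ⟨n, hn, l, hl⟩ := D.exists_iota v
  have h1 := h l
  rw [← hl, map_smul, map_smul] at h1
  exact smul_right_injective _ (by positivity : (n : ℚ) ≠ 0) h1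

theorem cj_mul (x y : W) (l : D.Lam) : D.cj (x * y) l = D.cj x (D.cj y l) := by
  ext; simp [cj, mul_assoc]

theorem rho_mul (x y : W) : D.rho (x * y) = D.rho x * D.rho y := by
  apply D.lin_ext
  intro l
  simp [rho_iota, cj_mul]

theorem rho_one : D.rho 1 = 1 := by
  apply D.lin_ext
  intro l
  simp [rho_iota, cj]

theorem rho_Lam {x : W} (hx : x ∈ D.Lam) : D.rho x = 1 := by
  apply D.lin_ext
  intro l
  rw [rho_iota]
  have : D.cj x l = l := by
    ext; simp [cj]; rw [D.hLam_comm _ hx _ l.2]; simp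
  rw [this]; rfl

theorem mem_Lam_of_rho {x : W} (hx : D.rho x = 1) : x ∈ D.Lam := by
  have hc : ∀ l ∈ D.Lam, x * l * x⁻¹ = l := by
    intro l hl
    have h1 := D.rho_iota x ⟨l, hl⟩
    rw [hx] at h1
    have h2 := D.iota_injective h1
    exact (congrArg Subtype.val h2).symm
  rw [D.hLam_mem]
  haveI := D.hLam_index
  haveI : Finite (W ⧸ D.Lam) := Subgroup.finite_quotient_of_finiteIndex
  apply (Set.finite_range (fun c : W ⧸ D.Lam => c.out * x * c.out⁻¹)).subset
  intro y hy
  obtain ⟨g, rfl⟩ := isConj_iff.1 hy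
  refine ⟨(g : W ⧸ D.Lam), ?_⟩
  obtain ⟨l, hl⟩ := QuotientGroup.mk_out_eq_mul D.Lam g
  simp only [hl]
  have h3 := hc l l.2
  have h4 : x * (l : W) = l * x := by rw [mul_inv_eq_iff_eq_mul] at h3; exact h3
  have h5 : (l : W) * x * (l : W)⁻¹ = x := by rw [← h4]; simp
  calc g * ↑l * x * (g * ↑l)⁻¹ = g * (↑l * x * (↑l)⁻¹) * g⁻¹ := by group
    _ = _ := by rw [h5]

theorem Lam_torsion {x : W} (hx : x ∈ D.Lam) {n : ℤ} (hn : n ≠ 0) (h : x ^ n = 1) : x = 1 := by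
  have h1 : (⟨x, hx⟩ : D.Lam) ^ n = 1 := by ext; simpa using h
  have h2 := D.iota_zpow ⟨x, hx⟩ n
  rw [h1, D.iota_one] at h2
  have h3 : D.iota ⟨x, hx⟩ = 0 := by
    rcases smul_eq_zero.1 h2.symm with h | h
    · exact absurd (by exact_mod_cast h) hn
    · exact h
  rw [← D.iota_one] at h3
  exact congrArg Subtype.val (D.iota_injective h3)

theorem Lam_torsion' {x : W} (hx : x ∈ D.Lam) (h : IsOfFinOrder x) : x = 1 := by
  obtain ⟨n, hn, h⟩ := isOfFinOrder_iff_pow_eq_one.1 h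
  exact D.Lam_torsion hx (n := n) (by omega) (by simpa using h)

/-- the elements of `Λ` inverted by `t` -/
structure Gam (t γ : W) : Prop where
  mem : γ ∈ D.Lam
  inv : t * γ * t = γ⁻¹
  ne : γ ≠ 1

variable {D}

theorem refl_ne_one {t : W} (ht : cs.IsReflection t) : t ≠ 1 := by
  rintro rfl
  have := ht.odd_length
  simp at this

theorem exists_Gam {t : W} (ht : cs.IsReflection t) : ∃ γ, D.Gam t γ := by
  by_cases h : D.rho t = 1
  · exfalso
    exact refl_ne_one ht (D.Lam_torsion (D.mem_Lam_of_rho h) (n := 2) (by norm_num)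
      (by rw [zpow_ofNat, ht.pow_two]))
  · have : ∃ l : D.Lam, D.cj t l ≠ l := by
      by_contra hcon
      push Not at hcon
      apply h
      apply D.lin_ext
      intro l
      rw [rho_iota, hcon]; rfl
    obtain ⟨l, hl⟩ := this
    refine ⟨t * l * t⁻¹ * (l : W)⁻¹, ?_, ?_, ?_⟩
    · exact mul_mem (D.cj t l).2 (inv_mem l.2)
    · simp only [mul_inv_rev, inv_inv, ht.inv]
      simp only [← mul_assoc, ht.mul_self, one_mul]
    · intro h1
      apply hl
      ext
      exact mul_inv_eq_one.1 h1

theorem Gam.conj_t {t γ : W} (ht : cs.IsReflection t) (h : D.Gam t γ) (k : ℤ) :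
    (γ ^ k)⁻¹ * t * γ ^ k = γ ^ (-2 * k) * t := by
  have h1 : t * γ * t⁻¹ = γ⁻¹ := by rw [ht.inv]; exact h.inv
  have h2 : t * γ ^ k * t⁻¹ = (γ ^ k)⁻¹ := by
    rw [← conj_zpow, h1, inv_zpow]
  have h3 : t * γ ^ k = (γ ^ k)⁻¹ * t := by rw [← h2]; simp
  rw [mul_assoc, h3, ← mul_assoc, ← zpow_neg, ← zpow_add]
  congr 2; ring

theorem Gam.conj {t γ : W} (h : D.Gam t γ) (x : W) :
    D.Gam (x * t * x⁻¹) (x * γ * x⁻¹) := by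
  refine ⟨(D.cj x ⟨γ, h.mem⟩).2, ?_, ?_⟩
  · calc x * t * x⁻¹ * (x * γ * x⁻¹) * (x * t * x⁻¹) = x * (t * γ * t) * x⁻¹ := by group
      _ = _ := by rw [h.inv]; group
  · intro h1
    apply h.ne
    rw [mul_inv_eq_one] at h1
    simpa using h1

theorem Gam.inv' {t γ : W} (ht : cs.IsReflection t) (h : D.Gam t γ) : D.Gam t γ⁻¹ := by
  refine ⟨inv_mem h.mem, ?_, by simpa using h.ne⟩
  have h2 := congrArg (fun x => x⁻¹) h.inv
  simpa [ht.inv, mul_assoc] using h2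

/-- the bad condition is finite -/
theorem finite_bad (t : W) {S : Set W} (hS : S.Finite) :
    {γ : W | γ ∈ D.Lam ∧ γ ^ (-2 : ℤ) * t ∈ S}.Finite := by
  apply Set.Finite.of_finite_image (f := fun γ => γ ^ (-2 : ℤ) * t)
  · exact hS.subset (by rintro _ ⟨γ, hγ, rfl⟩; exact hγ.2)
  · rintro a ⟨ha, -⟩ b ⟨hb, -⟩ hab
    have h1 : a ^ (-2 : ℤ) = b ^ (-2 : ℤ) := by simpa using hab
    have hc : Commute a b := D.hLam_comm a ha b hb
    have h2 : (a * b⁻¹) ^ (-2 : ℤ) = 1 := by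
      rw [(hc.inv_right).mul_zpow, inv_zpow, h1, mul_inv_cancel]
    exact mul_inv_eq_one.1 (D.Lam_torsion (mul_mem ha (inv_mem hb)) (by norm_num) h2)

theorem conj_sq {t γ : W} (ht : cs.IsReflection t) (h : t * γ * t = γ⁻¹) :
    γ⁻¹ * t * γ = γ ^ (-2 : ℤ) * t := by
  have h3 : t * γ = γ⁻¹ * t := by rw [← h]; simp [mul_assoc, ht.mul_self]
  rw [mul_assoc, h3, ← mul_assoc]
  congr 1
  rw [zpow_neg, zpow_ofNat, pow_two, mul_inv_rev]

/-- (a) right multiplication -/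
theorem stepA {t γ δ : W} (ht : cs.IsReflection t) (h : t * γ * t = γ⁻¹)
    (hb : γ ^ (-2 : ℤ) * t ∉ Ninv cs δ) : t ∈ Ninv cs (γ * δ) ↔ t ∈ Ninv cs γ := by
  rw [mem_Ninv_mul, conj_sq ht h]; tauto

/-- (b) inversion -/
theorem stepB {t γ : W} (ht : cs.IsReflection t) (h : t * γ * t = γ⁻¹)
    (hb : γ ^ (-2 : ℤ) * t ∉ Ninv cs t) : t ∈ Ninv cs γ⁻¹ ↔ t ∉ Ninv cs γ := by
  have h1 := stepA (δ := t) ht h hb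
  have h3 : γ * t = t * γ⁻¹ := by
    rw [← h]; simp only [← mul_assoc, ht.mul_self, one_mul]
  rw [h3, mem_Ninv_mul] at h1
  have h2 : t ∈ Ninv cs t := eta_refl cs ht
  have h4 : t⁻¹ * t * t = t := by simp
  rw [h4] at h1
  tauto

theorem prop_int (f : ℤ → ℤ → Prop) (n : ℕ)
    (hv : ∀ i j : ℤ, (n : ℤ) ≤ |i| → (f i (j + 1) ↔ f i j))
    (hh : ∀ i j : ℤ, (n : ℤ) ≤ |j| → (f (i + 1) j ↔ f i j)) : f n 0 ↔ f (-n) 0 := by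
  have hv' : ∀ i : ℤ, (n : ℤ) ≤ |i| → ∀ m : ℕ, (f i m ↔ f i 0) := by
    intro i hi m
    induction m with
    | zero => simp
    | succ m ih => push_cast; rw [hv i m hi, ih]
  have hh' : ∀ j : ℤ, (n : ℤ) ≤ |j| → ∀ (i : ℤ) (m : ℕ), (f (i + m) j ↔ f i j) := by
    intro j hj i m
    induction m with
    | zero => simp
    | succ m ih => push_cast; rw [← add_assoc, hh _ _ hj, ih]
  rw [← hv' n (by simp) n, ← hv' (-n) (by simp) n, ← hh' n (by simp) (-n) (2 * n)]
  push_cast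
  rw [show -(n : ℤ) + 2 * n = n by ring]

/-- two elements inverted by a reflection are dependent -/
theorem Gam.dep {t a b : W} (ht : cs.IsReflection t) (ha : D.Gam t a) (hb : D.Gam t b) :
    ∃ m n : ℤ, m ≠ 0 ∧ n ≠ 0 ∧ a ^ m = b ^ n := by
  by_contra hcon
  push Not at hcon
  have hab : Commute a b := D.hLam_comm a ha.mem b hb.mem
  have hind : ∀ m n : ℤ, a ^ m * b ^ n = 1 → m = 0 ∧ n = 0 := by
    intro m n h
    by_cases hm : m = 0
    · refine ⟨hm, ?_⟩
      by_contra hn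
      rw [hm, zpow_zero, one_mul] at h
      exact hb.ne (D.Lam_torsion hb.mem hn h)
    · exfalso
      by_cases hn : n = 0
      · rw [hn, zpow_zero, mul_one] at h
        exact ha.ne (D.Lam_torsion ha.mem hm h)
      · exact hcon m (-n) hm (by simpa using hn) (by rw [zpow_neg]; exact eq_inv_of_mul_eq_one_left h)
  have hinj : Function.Injective (fun p : ℤ × ℤ => a ^ p.1 * b ^ p.2) := by
    rintro ⟨m, n⟩ ⟨m', n'⟩ h
    simp only at h
    have : a ^ (m - m') * b ^ (n - n') = 1 := by
      have c1 : Commute (a ^ m')⁻¹ (b ^ n) := (hab.zpow_zpow m' n).inv_left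
      rw [zpow_sub, zpow_sub]
      calc a ^ m * (a ^ m')⁻¹ * (b ^ n * (b ^ n')⁻¹) =
          a ^ m * ((a ^ m')⁻¹ * b ^ n) * (b ^ n')⁻¹ := by group
        _ = (a ^ m * b ^ n) * ((a ^ m')⁻¹ * (b ^ n')⁻¹) := by rw [c1.eq]; group
        _ = 1 := by rw [h, ← mul_inv_rev, (hab.zpow_zpow m' n').eq, mul_inv_cancel]
    have := hind _ _ this
    ext <;> simp <;> omega
  have hmem : ∀ i j : ℤ, a ^ i * b ^ j ∈ D.Lam := fun i j =>
    mul_mem (zpow_mem ha.mem _) (zpow_mem hb.mem _)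
  have hG : ∀ i j : ℤ, t * (a ^ i * b ^ j) * t = (a ^ i * b ^ j)⁻¹ := by
    intro i j
    have e1 : t * a ^ i * t⁻¹ = (a ^ i)⁻¹ := by
      rw [← conj_zpow, ht.inv, ha.inv, inv_zpow]
    have e2 : t * b ^ j * t⁻¹ = (b ^ j)⁻¹ := by
      rw [← conj_zpow, ht.inv, hb.inv, inv_zpow]
    rw [(hab.zpow_zpow i j).eq, mul_inv_rev, ← e1, ← e2, ← (hab.zpow_zpow i j).eq,
      (hab.zpow_zpow i j).eq]
    nth_rw 2 [← ht.inv]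
    have e3 : t * b ^ j * t⁻¹ * (t * a ^ i * t⁻¹) = t * (b ^ j * a ^ i) * t⁻¹ := by group
    have e4 : t * a ^ i * t⁻¹ * (t * b ^ j * t⁻¹) = t * (a ^ i * b ^ j) * t⁻¹ := by group
    first
      | rw [e3]
      | rw [e4, (hab.zpow_zpow i j).eq]
  have hbad : {p : ℤ × ℤ | (a ^ p.1 * b ^ p.2) ^ (-2 : ℤ) * t ∈
      Ninv cs a ∪ Ninv cs b ∪ Ninv cs t}.Finite := by
    have := D.finite_bad t (((Ninv_finite cs a).union (Ninv_finite cs b)).union (Ninv_finite cs t))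
    apply (this.preimage hinj.injOn).subset
    intro p hp
    exact ⟨hmem _ _, hp⟩
  obtain ⟨n, hn⟩ : ∃ n : ℕ, ∀ p : ℤ × ℤ, (a ^ p.1 * b ^ p.2) ^ (-2 : ℤ) * t ∈
      Ninv cs a ∪ Ninv cs b ∪ Ninv cs t → |p.1| < n ∧ |p.2| < n := by
    obtain ⟨n, hn⟩ := (hbad.image (fun p : ℤ × ℤ => max p.1.natAbs p.2.natAbs)).bddAbove
    refine ⟨n + 1, fun p hp => ?_⟩
    have := hn ⟨p, hp, rfl⟩
    simp only at this
    have h1 : |p.1| = (p.1.natAbs : ℤ) := (Int.natCast_natAbs _).symm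
    have h2 : |p.2| = (p.2.natAbs : ℤ) := (Int.natCast_natAbs _).symm
    constructor <;> push_cast <;> omega
  have key := prop_int (fun i j => t ∈ Ninv cs (a ^ i * b ^ j)) n ?_ ?_
  · have hB := stepB (cs := cs) ht (hG n 0) ?_
    · simp only [zpow_zero, mul_one, zpow_neg] at key hB
      tauto
    · intro hcon
      have := hn (n, 0) (Or.inr hcon)
      simp at this
  · intro i j hi
    rw [zpow_add_one, ← mul_assoc]
    apply stepA ht (hG i j)
    intro hcon
    have := (hn (i, j) (Or.inl (Or.inr hcon))).1
    simp only at this; omega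
  · intro i j hj
    rw [zpow_add_one, mul_assoc, (hab.zpow_right j).eq, ← mul_assoc]
    apply stepA ht (hG i j)
    intro hcon
    have := (hn (i, j) (Or.inl (Or.inl hcon))).2
    simp only at this; omega

end AffineData


namespace AffineData
variable {cs : CoxeterSystem M W} {D : AffineData cs}

theorem Gam.zpow_inv {t γ : W} (ht : cs.IsReflection t) (h : D.Gam t γ) (k : ℤ) :
    t * γ ^ k * t = (γ ^ k)⁻¹ := by
  have : t * γ ^ k * t⁻¹ = (γ ^ k)⁻¹ := by rw [← conj_zpow, ht.inv, h.inv, inv_zpow]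
  rwa [ht.inv] at this

theorem Gam.zpow_inj {t γ : W} (h : D.Gam t γ) : Function.Injective (fun k : ℤ => γ ^ k) := by
  intro m n hmn
  by_contra hne
  apply h.ne
  apply D.Lam_torsion h.mem (n := m - n) (by omega)
  rw [zpow_sub]
  simp only at hmn
  rw [hmn, mul_inv_cancel]

theorem Gam.eventually {t γ : W} (ht : cs.IsReflection t) (h : D.Gam t γ) {S : Set W}
    (hS : S.Finite) : ∃ n : ℕ, ∀ k : ℤ, n ≤ k → (γ ^ k) ^ (-2 : ℤ) * t ∉ S := by
  have := (D.finite_bad t hS).preimage (h.zpow_inj.injOn)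
  obtain ⟨n, hn⟩ := (this.image (fun k : ℤ => k.natAbs)).bddAbove
  refine ⟨n + 1, fun k hk hb => ?_⟩
  have := hn ⟨k, ⟨zpow_mem h.mem k, hb⟩, rfl⟩
  simp only at this
  omega

/-- positivity of an element of `Γ_t` -/
def GPos (cs : CoxeterSystem M W) (t γ : W) : Prop :=
  ∃ n : ℕ, ∀ k : ℤ, n ≤ k → t ∉ Ninv cs (γ ^ k)

theorem Gam.not_both {t γ : W} (ht : cs.IsReflection t) (h : D.Gam t γ)
    (h1 : GPos cs t γ) (h2 : GPos cs t γ⁻¹) : False := by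
  obtain ⟨n1, h1⟩ := h1
  obtain ⟨n2, h2⟩ := h2
  obtain ⟨n3, h3⟩ := h.eventually ht (Ninv_finite cs t)
  have a1 := h1 (n1 + n2 + n3 : ℕ) (by push_cast; omega)
  have a2 := h2 (n1 + n2 + n3 : ℕ) (by push_cast; omega)
  have a3 := h3 (n1 + n2 + n3 : ℕ) (by push_cast; omega)
  have := stepB ht (h.zpow_inv ht _) a3
  rw [inv_zpow] at a2
  tauto

theorem Gam.pos_or {t γ : W} (ht : cs.IsReflection t) (h : D.Gam t γ) :
    GPos cs t γ ∨ GPos cs t γ⁻¹ := by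
  obtain ⟨n, hn⟩ := h.eventually ht ((Ninv_finite cs t).union (Ninv_finite cs γ))
  have hc : ∀ m : ℕ, (t ∈ Ninv cs (γ ^ ((n : ℤ) + m)) ↔ t ∈ Ninv cs (γ ^ (n : ℤ))) := by
    intro m
    induction m with
    | zero => simp
    | succ m ih =>
      rw [← ih]
      push_cast
      rw [← add_assoc, zpow_add_one]
      apply stepA ht (h.zpow_inv ht _)
      intro hb
      exact hn (n + m) (by omega) (Or.inr hb)
  have hc' : ∀ k : ℤ, n ≤ k → (t ∈ Ninv cs (γ ^ k) ↔ t ∈ Ninv cs (γ ^ (n : ℤ))) := by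
    intro k hk
    have := hc (k - n).toNat
    rwa [show (n : ℤ) + (k - n).toNat = k by omega] at this
  by_cases hp : t ∈ Ninv cs (γ ^ (n : ℤ))
  · right
    refine ⟨n, fun k hk => ?_⟩
    have := stepB ht (h.zpow_inv ht k) (fun hb => hn k hk (Or.inl hb))
    rw [inv_zpow, this, not_not, hc' k hk]
    exact hp
  · left
    exact ⟨n, fun k hk => by rw [hc' k hk]; exact hp⟩

theorem Gam.sign {t γ : W} (ht : cs.IsReflection t) (h : D.Gam t γ) (hp : GPos cs t γ) (x : W) :
    (x * t * x⁻¹ ∉ Ninv cs x → GPos cs (x * t * x⁻¹) (x * γ * x⁻¹)) ∧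
    (x * t * x⁻¹ ∈ Ninv cs x → GPos cs (x * t * x⁻¹) (x * γ * x⁻¹)⁻¹) := by
  have key : ∃ n : ℕ, ∀ k : ℤ, n ≤ k →
      (x * t * x⁻¹ ∈ Ninv cs ((x * γ * x⁻¹) ^ k) ↔ x * t * x⁻¹ ∈ Ninv cs x) := by
    obtain ⟨n1, h1⟩ := h.eventually ht (Ninv_finite cs x⁻¹)
    obtain ⟨n2, h2⟩ := hp
    refine ⟨n1 + n2, fun k hk => ?_⟩
    push_cast at hk
    rw [conj_zpow, mul_assoc, mem_Ninv_mul]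
    have e : x⁻¹ * (x * t * x⁻¹) * x = t := by group
    rw [e]
    have : t ∉ Ninv cs (γ ^ k * x⁻¹) := by
      rw [stepA ht (h.zpow_inv ht k) (h1 k (by omega))]
      exact h2 k (by omega)
    tauto
  obtain ⟨n, hn⟩ := key
  refine ⟨fun h0 => ⟨n, fun k hk => by rw [hn k hk]; exact h0⟩, fun h0 => ?_⟩
  rcases (h.conj x).pos_or (ht.conj x) with h' | h'
  · obtain ⟨n', h'⟩ := h'
    exact absurd ((hn (n + n') (by omega)).2 h0) (h' (n + n') (by omega))
  · exact h'

theorem Gam.pos_prop {t a b : W} (ht : cs.IsReflection t) (ha : D.Gam t a) (hb : D.Gam t b)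
    (hpa : GPos cs t a) (hpb : GPos cs t b) :
    ∃ c : ℚ, 0 < c ∧ D.iota ⟨a, ha.mem⟩ = c • D.iota ⟨b, hb.mem⟩ := by
  have main : ∀ m n : ℤ, 0 < m → n ≠ 0 → a ^ m = b ^ n →
      ∃ c : ℚ, 0 < c ∧ D.iota ⟨a, ha.mem⟩ = c • D.iota ⟨b, hb.mem⟩ := by
    intro m n hm hn h
    have h1 : (m : ℚ) • D.iota ⟨a, ha.mem⟩ = (n : ℚ) • D.iota ⟨b, hb.mem⟩ := by
      rw [← D.iota_zpow, ← D.iota_zpow]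
      congr 1
      ext; simpa using h
    have hm' : (0 : ℚ) < m := by exact_mod_cast hm
    rcases lt_or_gt_of_ne hn with hn | hn
    · exfalso
      obtain ⟨n1, h1⟩ := hpa
      obtain ⟨n2, h2⟩ := hpb
      obtain ⟨n3, h3⟩ := ha.eventually ht (Ninv_finite cs t)
      set k : ℤ := n1 + n2 + n3 with hk
      have hk0 : 0 ≤ k := by positivity
      have b1 : k ≤ m * k := by nlinarith
      have b2 : k ≤ -n * k := by nlinarith
      have a1 := h1 (m * k) (by omega)
      have a2 := h2 (-n * k) (by omega)
      have a3 := h3 (m * k) (by omega)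
      have := stepB ht (ha.zpow_inv ht _) a3
      have e : (a ^ (m * k))⁻¹ = b ^ (-n * k) := by
        rw [zpow_mul, h, ← zpow_mul, ← zpow_neg]; congr 1; ring
      rw [e] at this
      tauto
    · refine ⟨n / m, by have : (0 : ℚ) < n := by exact_mod_cast hn
                        positivity, ?_⟩
      rw [div_eq_inv_mul, mul_smul, ← h1, smul_smul, inv_mul_cancel₀ hm'.ne', one_smul]
  obtain ⟨m, n, hm, hn, h⟩ := ha.dep ht hb
  rcases lt_or_gt_of_ne hm with hm | hm
  · exact main (-m) (-n) (by omega) (by omega) (by rw [zpow_neg, zpow_neg, h])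
  · exact main m n hm hn h

theorem exists_gpos {t : W} (ht : cs.IsReflection t) : ∃ γ, D.Gam t γ ∧ GPos cs t γ := by
  obtain ⟨γ, h⟩ := exists_Gam (D := D) ht
  rcases h.pos_or ht with h1 | h1
  · exact ⟨γ, h, h1⟩
  · exact ⟨γ⁻¹, h.inv' ht, h1⟩

variable (D)

/-- the positive vector attached to a reflection -/
def al (t : W) : Fin D.rank → ℚ :=
  if ht : cs.IsReflection t then
    D.iota ⟨(exists_gpos (D := D) ht).choose, (exists_gpos (D := D) ht).choose_spec.1.mem⟩ else 0

variable {D}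

theorem al_spec {t : W} (ht : cs.IsReflection t) : ∃ γ, ∃ h : D.Gam t γ, GPos cs t γ ∧
    D.al t = D.iota ⟨γ, h.mem⟩ := by
  refine ⟨_, (exists_gpos (D := D) ht).choose_spec.1, (exists_gpos (D := D) ht).choose_spec.2, ?_⟩
  simp [al, ht]

theorem al_ne {t : W} (ht : cs.IsReflection t) : D.al t ≠ 0 := by
  obtain ⟨γ, h, hp, e⟩ := al_spec (D := D) ht
  rw [e, ← D.iota_one]
  intro h1
  exact h.ne (congrArg Subtype.val (D.iota_injective h1))

theorem rho_al_self {t : W} (ht : cs.IsReflection t) : D.rho t (D.al t) = - D.al t := by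
  obtain ⟨γ, h, hp, e⟩ := al_spec (D := D) ht
  rw [e, D.rho_iota, ← D.iota_inv]
  congr 1
  ext
  simp only [cj, ht.inv]
  exact h.inv

theorem rho_al {t : W} (ht : cs.IsReflection t) (x : W) :
    (x * t * x⁻¹ ∉ Ninv cs x → ∃ c : ℚ, 0 < c ∧ D.rho x (D.al t) = c • D.al (x * t * x⁻¹)) ∧
    (x * t * x⁻¹ ∈ Ninv cs x → ∃ c : ℚ, 0 < c ∧ D.rho x (D.al t) = - (c • D.al (x * t * x⁻¹))) := by
  obtain ⟨γ, h, hp, e⟩ := al_spec (D := D) ht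
  obtain ⟨γ', h', hp', e'⟩ := al_spec (D := D) (ht.conj x)
  have hs := h.sign ht hp x
  rw [e, e', D.rho_iota]
  refine ⟨fun h0 => ?_, fun h0 => ?_⟩
  · exact (h.conj x).pos_prop (ht.conj x) h' (hs.1 h0) hp'
  · obtain ⟨c, hc, h2⟩ := ((h.conj x).inv' (ht.conj x)).pos_prop (ht.conj x) h' (hs.2 h0) hp'
    refine ⟨c, hc, ?_⟩
    rw [← h2, ← D.iota_inv]
    congr 1
    ext
    simp [cj]

theorem eig_al {t : W} (ht : cs.IsReflection t) {v : Fin D.rank → ℚ} (hv : D.rho t v = -v) :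
    ∃ c : ℚ, v = c • D.al t := by
  by_cases h0 : v = 0
  · exact ⟨0, by simp [h0]⟩
  obtain ⟨γ, h, hp, e⟩ := al_spec (D := D) ht
  obtain ⟨n, hn, l, hl⟩ := D.exists_iota v
  have hn' : (n : ℚ) ≠ 0 := by positivity
  have hl0 : l ≠ 1 := by
    rintro rfl
    rw [D.iota_one] at hl
    rcases smul_eq_zero.1 hl with h | h
    · exact hn' h
    · exact h0 h
  have hG : D.Gam t (l : W) := by
    refine ⟨l.2, ?_, by simpa using hl0⟩
    have h1 := D.rho_iota t l
    rw [← hl, map_smul, hv, smul_neg, hl, ← D.iota_inv] at h1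
    have := congrArg Subtype.val (D.iota_injective h1)
    simp only [cj, ht.inv] at this
    exact this.symm
  obtain ⟨m, k, hm, hk, hmk⟩ := hG.dep ht h
  refine ⟨(n : ℚ)⁻¹ * ((m : ℚ)⁻¹ * k), ?_⟩
  have h1 : (m : ℚ) • D.iota l = (k : ℚ) • D.iota ⟨γ, h.mem⟩ := by
    rw [← D.iota_zpow, ← D.iota_zpow]
    congr 1
    ext; simpa using hmk
  have hm' : (m : ℚ) ≠ 0 := by exact_mod_cast hm
  rw [e, mul_smul, mul_smul, ← h1, smul_smul (m : ℚ)⁻¹, inv_mul_cancel₀ hm', one_smul, ← hl,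
    smul_smul, inv_mul_cancel₀ hn', one_smul]

theorem rho_refl_sub {t : W} (ht : cs.IsReflection t) (v : Fin D.rank → ℚ) :
    ∃ c : ℚ, D.rho t v = v + c • D.al t := by
  have : D.rho t (D.rho t v - v) = -(D.rho t v - v) := by
    rw [map_sub, ← Module.End.mul_apply, ← D.rho_mul, ht.mul_self, D.rho_one]
    simp
  obtain ⟨c, hc⟩ := eig_al ht this
  exact ⟨c, by rw [← hc]; simp⟩

theorem det_rho_refl {t : W} (ht : cs.IsReflection t) : LinearMap.det (D.rho t) = -1 := by
  obtain ⟨g, hg⟩ := Module.Projective.exists_dual_eq_one ℚ (al_ne (D := D) ht)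
  have key : D.rho t = LinearMap.transvection (g ∘ₗ (D.rho t - 1)) (D.al t) := by
    refine LinearMap.ext fun v => ?_
    obtain ⟨c, hc⟩ := rho_refl_sub (D := D) ht v
    rw [LinearMap.transvection.apply, LinearMap.comp_apply, LinearMap.sub_apply, hc]
    simp [hg]
  rw [key, LinearMap.transvection.det, LinearMap.comp_apply, LinearMap.sub_apply, rho_al_self ht]
  simp [hg]

theorem rho_unip {t t' : W} (ht : cs.IsReflection t) (ht' : cs.IsReflection t')
    (hfin : IsOfFinOrder (t * t')) {c : ℚ} (h : D.al t' = c • D.al t) : t = t' := by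
  have e1 : D.rho (t * t') (D.al t) = D.al t := by
    have hc : c ≠ 0 := by
      rintro rfl
      exact al_ne (D := D) ht' (by simpa using h)
    have : D.al t = c⁻¹ • D.al t' := by rw [h, smul_smul, inv_mul_cancel₀ hc, one_smul]
    rw [D.rho_mul, Module.End.mul_apply]
    nth_rw 1 [this]
    rw [map_smul, rho_al_self ht', smul_neg, ← this, map_neg, rho_al_self ht, neg_neg]
  have e2 : ∀ v, ∃ d : ℚ, D.rho (t * t') v = v + d • D.al t := by
    intro v
    obtain ⟨a, ha⟩ := rho_refl_sub (D := D) ht' v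
    obtain ⟨b, hb⟩ := rho_refl_sub (D := D) ht (v + a • D.al t')
    refine ⟨a * c + b, ?_⟩
    rw [D.rho_mul, Module.End.mul_apply, ha, hb, h]
    module
  have e3 : ∀ v (d : ℚ), D.rho (t * t') v = v + d • D.al t → ∀ n : ℕ,
      D.rho ((t * t') ^ n) v = v + (n * d) • D.al t := by
    intro v d hd n
    induction n with
    | zero => simp [D.rho_one]
    | succ n ih =>
      rw [pow_succ', D.rho_mul, Module.End.mul_apply, ih, map_add, map_smul, e1, hd]
      push_cast
      module
  obtain ⟨n, hn, hpow⟩ := isOfFinOrder_iff_pow_eq_one.1 hfin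
  have e4 : D.rho (t * t') = 1 := by
    refine LinearMap.ext fun v => ?_
    obtain ⟨d, hd⟩ := e2 v
    have := e3 v d hd n
    rw [hpow, D.rho_one, Module.End.one_apply] at this
    have h0 : ((n : ℚ) * d) • D.al t = 0 := by simpa using this.symm
    rcases smul_eq_zero.1 h0 with h0 | h0
    · have hn' : (n : ℚ) ≠ 0 := by positivity
      have : d = 0 := by rcases mul_eq_zero.1 h0 with h | h; exact absurd h hn'; exact h
      rw [hd, this]; simp
    · exact absurd h0 (al_ne ht)
  have := D.Lam_torsion' (D.mem_Lam_of_rho e4) hfin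
  rw [← ht'.inv]
  exact eq_inv_of_mul_eq_one_left this

theorem det_rho (x : W) : LinearMap.det (D.rho x) = (-1) ^ cs.length x := by
  have h : ∀ ω : List B, LinearMap.det (D.rho (cs.wordProd ω)) = (-1) ^ ω.length := by
    intro ω
    induction ω with
    | nil => simp [D.rho_one]
    | cons i ω ih =>
      rw [cs.wordProd_cons, D.rho_mul, map_mul, ih, det_rho_refl (cs.isReflection_simple i)]
      simp [pow_succ']
  obtain ⟨ω, hω, rfl⟩ := cs.exists_isReduced x
  rw [h, hω.eq]

end AffineData



/-! ### The (twisted) Solomon identity -/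

def Dr (cs : CoxeterSystem M W) (K : Set W) (w : W) : Set W := {s | s ∈ K ∧ s ∈ Ninv cs w⁻¹}

def ffn (cs : CoxeterSystem M W) (K : Set W) (w x : W) : ℚ :=
  if w⁻¹ * x ∈ Subgroup.closure (Dr cs K w) then 1 else 0

theorem Dr_sub (cs : CoxeterSystem M W) (K : Set W) (w : W) : Dr cs K w ⊆ K := fun _ h => h.1

theorem ffn_self (cs : CoxeterSystem M W) (K : Set W) (w : W) : ffn cs K w w = 1 := by
  simp [ffn]

theorem ffn_mul (cs : CoxeterSystem M W) (K : Set W) (w x y : W)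
    (hy : y ∈ Subgroup.closure (Dr cs K w)) : ffn cs K w (x * y) = ffn cs K w x := by
  unfold ffn
  rw [← mul_assoc, Subgroup.mul_mem_cancel_right _ hy]

theorem ffn_lt (cs : CoxeterSystem M W) {K : Set W} (hK : K ⊆ Set.range cs.simple)
    (hfin : (Subgroup.closure K : Set W).Finite) {w x : W} (h : ffn cs K w x ≠ 0) :
    x = w ∨ cs.length x < cs.length w := by
  have hv : w⁻¹ * x ∈ Subgroup.closure (Dr cs K w) := by
    by_contra hc
    exact h (by simp [ffn, hc])
  obtain ⟨wD, hwD⟩ := exists_longest cs ((Dr_sub cs K w).trans hK)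
    (hfin.subset (Subgroup.closure_mono (Dr_sub cs K w)))
  obtain ⟨u, hu, hw⟩ := hwD.rfull (x := w) (fun s hs => hs.2)
  have hx : x = u * (wD * (w⁻¹ * x)) := by
    rw [← mul_assoc, ← hw]; group
  have h1 := hu.length_mul hwD.sub (mul_mem hwD.mem hv)
  rw [← hx] at h1
  have h2 := hwD.length_mul_right hv
  have h3 := hu.length_mul hwD.sub hwD.mem
  rw [← hw] at h3
  by_cases hz : cs.length (w⁻¹ * x) = 0
  · left
    have := cs.length_eq_zero_iff.1 hz
    exact (inv_mul_eq_one.1 this).symm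
  · right; omega

section
variable {cs : CoxeterSystem M W} {K : Set W}

def RInv (K K' : Set W) (φ : ↥(Subgroup.closure K) → ℚ) : Prop :=
  ∀ x y : ↥(Subgroup.closure K), (y : W) ∈ Subgroup.closure K' → φ (x * y) = φ x

def FF (cs : CoxeterSystem M W) (K : Set W) (w : ↥(Subgroup.closure K)) :
    ↥(Subgroup.closure K) → ℚ := fun x => ffn cs K w x

theorem FF_inv (w : ↥(Subgroup.closure K)) {K' : Set W} (h : K' ⊆ Dr cs K w) :
    RInv K K' (FF cs K w) := fun x y hy =>
  ffn_mul cs K w x y (Subgroup.closure_mono h hy)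

theorem span_FF [Fintype ↥(Subgroup.closure K)] (hK : K ⊆ Set.range cs.simple)
    {K' : Set W} (hK' : K' ⊆ K) (n : ℕ) :
    ∀ φ : ↥(Subgroup.closure K) → ℚ, (∀ x : ↥(Subgroup.closure K), n ≤ cs.length (x : W) → φ x = 0) → RInv K K' φ →
      φ ∈ Submodule.span ℚ (FF cs K '' {w | K' ⊆ Dr cs K w}) := by
  have hfin : (Subgroup.closure K : Set W).Finite := Set.toFinite _
  induction n with
  | zero =>
    intro φ h _
    have : φ = 0 := funext fun x => h x (Nat.zero_le _)
    rw [this]; exact zero_mem _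
  | succ n ih =>
    intro φ h hi
    have key : ∀ w : ↥(Subgroup.closure K), cs.length (w : W) = n → φ w ≠ 0 →
        K' ⊆ Dr cs K w := by
      intro w hw hne s hs
      refine ⟨hK' hs, ?_⟩
      obtain ⟨i, hi'⟩ := hK (hK' hs)
      have hr : cs.IsReflection s := hi' ▸ cs.isReflection_simple i
      rw [mem_Ninv_inv_refl cs hr]
      by_contra hlt
      have h1 := hr.length_mul_left_ne (w : W)
      have h2 := hi w ⟨s, Subgroup.subset_closure (hK' hs)⟩ (Subgroup.subset_closure hs)
      rw [h _ (by simp only [Subgroup.coe_mul]; omega)] at h2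
      exact hne h2.symm
    set ψ : ↥(Subgroup.closure K) → ℚ :=
      ∑ w ∈ Finset.univ.filter (fun w : ↥(Subgroup.closure K) => cs.length (w : W) = n),
        φ w • FF cs K w with hψ
    have hψm : ψ ∈ Submodule.span ℚ (FF cs K '' {w | K' ⊆ Dr cs K w}) := by
      refine Submodule.sum_mem _ fun w hw => ?_
      by_cases hz : φ w = 0
      · rw [hz, zero_smul]; exact zero_mem _
      · refine Submodule.smul_mem _ _ (Submodule.subset_span ⟨w, ?_, rfl⟩)
        exact key w (by simpa using hw) hz
    have hψi : RInv K K' ψ := by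
      intro x y hy
      simp only [hψ, Finset.sum_apply, Pi.smul_apply]
      refine Finset.sum_congr rfl fun w hw => ?_
      by_cases hz : φ w = 0
      · simp [hz]
      · rw [FF_inv w (key w (by simpa using hw) hz) x y hy]
    have := ih (φ - ψ) ?_ ?_
    · simpa using add_mem this hψm
    · intro x hx
      simp only [Pi.sub_apply, hψ, Finset.sum_apply, Pi.smul_apply, smul_eq_mul]
      by_cases hxn : cs.length (x : W) = n
      · rw [Finset.sum_eq_single x]
        · simp [FF, ffn_self]
        · intro w hw hne
          by_cases hz : FF cs K w x = 0
          · simp [hz]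
          · rcases ffn_lt cs hK hfin hz with h1 | h1
            · exact absurd (Subtype.ext h1).symm hne
            · simp at hw; omega
        · intro hx'; simp [hxn] at hx'
      · rw [h x (by omega), Finset.sum_eq_zero, sub_zero]
        intro w hw
        by_cases hz : FF cs K w x = 0
        · simp [hz]
        · rcases ffn_lt cs hK hfin hz with h1 | h1
          · simp at hw; rw [h1] at hxn; exact absurd hw hxn
          · simp at hw; omega
    · intro x y hy
      simp only [Pi.sub_apply, hi x y hy, hψi x y hy]

theorem span_FF' [Fintype ↥(Subgroup.closure K)] (hK : K ⊆ Set.range cs.simple)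
    {K' : Set W} (hK' : K' ⊆ K) {φ : ↥(Subgroup.closure K) → ℚ} (h : RInv K K' φ) :
      φ ∈ Submodule.span ℚ (FF cs K '' {w | K' ⊆ Dr cs K w}) := by
  obtain ⟨n, hn⟩ := (Set.finite_range (fun x : ↥(Subgroup.closure K) => cs.length (x : W))).bddAbove
  refine span_FF hK hK' (n + 1) φ (fun x hx => ?_) h
  have := hn ⟨x, rfl⟩
  simp at this; omega

def bFF (cs : CoxeterSystem M W) (K : Set W) [Fintype ↥(Subgroup.closure K)]
    (hK : K ⊆ Set.range cs.simple) :
    Module.Basis ↥(Subgroup.closure K) ℚ (↥(Subgroup.closure K) → ℚ) :=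
  basisOfTopLeSpanOfCardEqFinrank (FF cs K) (by
    intro φ _
    refine Submodule.span_mono (Set.image_subset_range _ _)
      (span_FF' (cs := cs) (K' := ∅) hK (Set.empty_subset _) (φ := φ) ?_)
    intro x y hy
    rw [Subgroup.closure_empty, Subgroup.mem_bot] at hy
    have : y = 1 := Subtype.ext hy
    rw [this, mul_one]) (by simp)

theorem bFF_apply [Fintype ↥(Subgroup.closure K)] (hK : K ⊆ Set.range cs.simple) (w) :
    bFF cs K hK w = FF cs K w := by
  simp [bFF]

theorem bFF_repr [Fintype ↥(Subgroup.closure K)] (hK : K ⊆ Set.range cs.simple)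
    {K' : Set W} (hK' : K' ⊆ K) {φ : ↥(Subgroup.closure K) → ℚ} (h : RInv K K' φ)
    (w : ↥(Subgroup.closure K)) (hw : ¬ K' ⊆ Dr cs K w) : (bFF cs K hK).repr φ w = 0 := by
  have h1 := span_FF' hK hK' h
  have : (FF cs K : _ → _) = bFF cs K hK := funext fun w => (bFF_apply hK w).symm
  rw [this, Module.Basis.mem_span_image] at h1
  by_contra hne
  exact hw (h1 (Finsupp.mem_support_iff.2 hne))

theorem bFF_repr_one [Fintype ↥(Subgroup.closure K)] (hK : K ⊆ Set.range cs.simple)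
    (φ : ↥(Subgroup.closure K) → ℚ) :
    (bFF cs K hK).repr φ 1 = ∑ x : ↥(Subgroup.closure K), (-1) ^ cs.length (x : W) * φ x := by
  let sg : (↥(Subgroup.closure K) → ℚ) →ₗ[ℚ] ℚ :=
    ∑ x : ↥(Subgroup.closure K), ((-1 : ℚ) ^ cs.length (x : W)) • LinearMap.proj x
  have : (bFF cs K hK).coord 1 = sg := by
    refine (bFF cs K hK).ext fun w => ?_
    rw [Module.Basis.coord_apply, Module.Basis.repr_self]
    simp only [sg, bFF_apply, LinearMap.sum_apply, LinearMap.smul_apply, LinearMap.proj_apply,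
      smul_eq_mul]
    by_cases hw : w = 1
    · subst hw
      rw [Finsupp.single_eq_same, Finset.sum_eq_single 1]
      · simp [FF, ffn_self]
      · intro x _ hx
        have : Dr cs K ((1 : ↥(Subgroup.closure K)) : W) = ∅ := by
          ext s; simp [Dr, Ninv_one]
        simp only [FF, ffn, this, Subgroup.closure_empty, Subgroup.mem_bot]
        rw [if_neg]
        · simp
        · simp only [OneMemClass.coe_one, inv_one, one_mul]
          intro hc
          exact hx (Subtype.ext hc)
      · simp
    · rw [Finsupp.single_eq_of_ne (by tauto)]
      obtain ⟨s, hsK, hs⟩ := exists_desc cs hK (inv_mem w.2) (fun hc => hw (Subtype.ext (by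
        simpa using hc)))
      have hsm : s ∈ Dr cs K w := ⟨hsK, hs⟩
      obtain ⟨i, hi'⟩ := hK hsK
      let sG : ↥(Subgroup.closure K) := ⟨s, Subgroup.subset_closure hsK⟩
      have h1 := Equiv.sum_comp (Equiv.mulRight sG)
        (fun x => (-1) ^ cs.length (x : W) * FF cs K w x)
      have h2 : ∀ x : ↥(Subgroup.closure K), ((-1 : ℚ) ^ cs.length ((x * sG : _) : W) : ℚ) =
          - (-1) ^ cs.length (x : W) := by
        intro x
        have : ((x * sG : ↥(Subgroup.closure K)) : W) = (x : W) * cs.simple i := by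
          simp [sG, hi']
        rw [this]
        rcases cs.length_mul_simple (x : W) i with h | h
        · rw [h, pow_succ]; ring
        · rw [← h, pow_succ]; ring
      simp only [Equiv.coe_mulRight, h2] at h1
      have h3 : ∀ x, FF cs K w (x * sG) = FF cs K w x := fun x =>
        FF_inv (cs := cs) w (K' := Dr cs K w) subset_rfl x sG (Subgroup.subset_closure hsm)
      simp only [h3, neg_mul, Finset.sum_neg_distrib] at h1
      linarith
  rw [← Module.Basis.coord_apply, this]
  simp [sg, LinearMap.sum_apply]

end

def Kst (τ : MulAut W) (A : Finset W) : Set W := {s | s ∈ A ∨ τ s ∈ A}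

theorem Kst_mono (τ : MulAut W) {A C : Finset W} (h : A ⊆ C) : Kst τ A ⊆ Kst τ C :=
  fun _ hs => hs.imp (fun h' => h h') (fun h' => h h')

theorem Kst_closure {τ : MulAut W} (hτ : ∀ x, τ (τ x) = x) (A : Finset W) {x : W}
    (hx : x ∈ Subgroup.closure (Kst τ A)) : τ x ∈ Subgroup.closure (Kst τ A) := by
  have : Subgroup.closure (Kst τ A) ≤ (Subgroup.closure (Kst τ A)).comap τ.toMonoidHom := by
    rw [Subgroup.closure_le]
    intro s hs
    refine Subgroup.subset_closure ?_
    rcases hs with h | h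
    · right; simpa [hτ] using h
    · left; exact h
  exact this hx


section
variable {cs : CoxeterSystem M W}

theorem solomon_point {τ : MulAut W} (hτ : ∀ x, τ (τ x) = x) (A₀ : Finset W)
    {K : Set W} (hKdef : K = Kst τ A₀) (hK : K ⊆ Set.range cs.simple)
    [Fintype ↥(Subgroup.closure (K))]
    (g : ↥(Subgroup.closure K)) :
    ∑ A ∈ A₀.powerset, (-1 : ℚ) ^ A.card *
      ((∑ v : ↥(Subgroup.closure K),
          if (v : W) ∈ Subgroup.closure (Kst τ A) then (1 : ℚ) else 0)⁻¹ *
        ∑ x : ↥(Subgroup.closure K),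
          if (x : W)⁻¹ * g * τ x ∈ Subgroup.closure (Kst τ A) then (1 : ℚ) else 0)
      = (-1) ^ cs.length (g : W) := by
  let tG : ↥(Subgroup.closure K) → ↥(Subgroup.closure K) := fun x => ⟨τ x, by
    have := Kst_closure hτ A₀ (x := (x : W)) (hKdef ▸ x.2)
    rwa [← hKdef] at this⟩
  have tGm : ∀ x y : ↥(Subgroup.closure K), tG (x * y) = tG x * tG y := fun x y => Subtype.ext (by simp [tG])
  have tGt : ∀ x : ↥(Subgroup.closure K), tG (tG x) = x := fun x => Subtype.ext (by simp [tG, hτ])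
  let Aop : (↥(Subgroup.closure K) → ℚ) →ₗ[ℚ] (↥(Subgroup.closure K) → ℚ) := LinearMap.funLeft ℚ ℚ (fun x => tG (g⁻¹ * x))
  have hAop : ∀ φ x, Aop φ x = φ (tG (g⁻¹ * x)) := fun φ x => rfl
  let cA : Finset W → ℚ := fun A => ∑ v : ↥(Subgroup.closure K),
    if (v : W) ∈ Subgroup.closure (Kst τ A) then (1 : ℚ) else 0
  have cA_ne : ∀ A, cA A ≠ 0 := by
    intro A
    have : (0 : ℚ) < cA A := by
      refine Finset.sum_pos' (fun v _ => by split_ifs <;> norm_num) ⟨1, Finset.mem_univ _, ?_⟩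
      simp
    exact this.ne'
  let Rop : Finset W → (↥(Subgroup.closure K) → ℚ) →ₗ[ℚ] (↥(Subgroup.closure K) → ℚ) := fun A =>
    (cA A)⁻¹ • ∑ v : ↥(Subgroup.closure K), (if (v : W) ∈ Subgroup.closure (Kst τ A) then (1 : ℚ) else 0) •
      LinearMap.funLeft ℚ ℚ (fun x => x * v)
  have hRop : ∀ A φ x, Rop A φ x = (cA A)⁻¹ * ∑ v : ↥(Subgroup.closure K),
      (if (v : W) ∈ Subgroup.closure (Kst τ A) then (1 : ℚ) else 0) * φ (x * v) := by
    intro A φ x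
    simp only [Rop, LinearMap.sum_apply, LinearMap.funLeft_apply, Finset.sum_apply,
      LinearMap.smul_apply, Pi.smul_apply, smul_eq_mul]
  let Xop : Finset W → (↥(Subgroup.closure K) → ℚ) →ₗ[ℚ] (↥(Subgroup.closure K) → ℚ) := fun A => Aop ∘ₗ Rop A
  have hXop : ∀ A φ x, Xop A φ x = (cA A)⁻¹ * ∑ v : ↥(Subgroup.closure K),
      (if (v : W) ∈ Subgroup.closure (Kst τ A) then (1 : ℚ) else 0) * φ (tG (g⁻¹ * x) * v) := by
    intro A φ x
    simp only [Xop, LinearMap.comp_apply, hAop, hRop]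
  -- trace in the standard basis
  have tr1 : ∀ A, LinearMap.trace ℚ _ (Xop A) = (cA A)⁻¹ * ∑ x : ↥(Subgroup.closure K),
      if (x : W)⁻¹ * g * τ x ∈ Subgroup.closure (Kst τ A) then (1 : ℚ) else 0 := by
    intro A
    rw [LinearMap.trace_eq_matrix_trace ℚ (Pi.basisFun ℚ ↥(Subgroup.closure K)), Matrix.trace, Finset.mul_sum]
    refine Finset.sum_congr rfl fun x _ => ?_
    rw [Matrix.diag_apply, LinearMap.toMatrix_apply, Pi.basisFun_repr, hXop, Pi.basisFun_apply]
    congr 1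
    rw [Finset.sum_eq_single ((tG (g⁻¹ * x))⁻¹ * x)]
    · rw [mul_inv_cancel_left, Pi.single_eq_same, mul_one]
      refine if_congr ?_ rfl rfl
      have : (((tG (g⁻¹ * x))⁻¹ * x : ↥(Subgroup.closure K)) : W) = τ ((x : W)⁻¹ * g * τ x) := by
        simp [tG, hτ]
      rw [this]
      constructor
      · intro h; have := Kst_closure hτ A h; rwa [hτ] at this
      · exact Kst_closure hτ A
    · intro v _ hv
      rw [Pi.single_eq_of_ne, mul_zero]
      intro hc
      exact hv (eq_inv_mul_iff_mul_eq.2 hc)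
    · simp
  let b := bFF cs K hK
  have hb : ∀ w, b w = FF cs K w := fun w => bFF_apply hK w
  let a : ↥(Subgroup.closure K) → ℚ := fun w => b.repr (Aop (FF cs K w)) w
  have tr2 : ∀ A, A ⊆ A₀ → LinearMap.trace ℚ _ (Xop A) =
      ∑ w : ↥(Subgroup.closure K), if Kst τ A ⊆ Dr cs K w then a w else 0 := by
    intro A hA
    rw [LinearMap.trace_eq_matrix_trace ℚ b, Matrix.trace]
    refine Finset.sum_congr rfl fun w _ => ?_
    rw [Matrix.diag_apply, LinearMap.toMatrix_apply, hb]
    split_ifs with h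
    · have : Xop A (FF cs K w) = Aop (FF cs K w) := by
        funext x
        rw [hXop, hAop]
        have : ∀ v : ↥(Subgroup.closure K), (if (v : W) ∈ Subgroup.closure (Kst τ A) then (1 : ℚ) else 0) *
            FF cs K w (tG (g⁻¹ * x) * v) =
            (if (v : W) ∈ Subgroup.closure (Kst τ A) then (1 : ℚ) else 0) *
            FF cs K w (tG (g⁻¹ * x)) := by
          intro v
          split_ifs with hv
          · rw [FF_inv (cs := cs) w h _ _ hv]
          · simp
        rw [Finset.sum_congr rfl fun v _ => this v, ← Finset.sum_mul, ← mul_assoc,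
          inv_mul_cancel₀ (cA_ne A), one_mul]
      rw [this]
    · refine bFF_repr hK (hKdef ▸ Kst_mono τ hA) ?_ w h
      intro x y hy
      rw [hXop, hXop]
      congr 1
      rw [← Equiv.sum_comp (Equiv.mulLeft (tG y)) (fun v : ↥(Subgroup.closure K) =>
        (if (v : W) ∈ Subgroup.closure (Kst τ A) then (1 : ℚ) else 0) *
          FF cs K w (tG (g⁻¹ * x) * v))]
      refine Finset.sum_congr rfl fun v _ => ?_
      rw [Equiv.coe_mulLeft, ← mul_assoc g⁻¹, tGm, mul_assoc]
      congr 1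
      refine if_congr ?_ rfl rfl
      rw [Subgroup.coe_mul, Subgroup.mul_mem_cancel_left]
      exact Kst_closure hτ A hy
  have stab : ∀ w, a w ≠ 0 → ∀ s, τ s ∈ Dr cs K w → s ∈ Dr cs K w := by
    intro w hw s hs
    have hK' : {s | τ s ∈ Dr cs K w} ⊆ K := by
      intro s hs
      have h1 : τ s ∈ Kst τ A₀ := hKdef ▸ hs.1
      rw [hKdef]
      rcases h1 with h1 | h1
      · right; exact h1
      · left; rwa [hτ] at h1
    have hi : RInv K {s | τ s ∈ Dr cs K w} (Aop (FF cs K w)) := by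
      intro x y hy
      rw [hAop, hAop, ← mul_assoc, tGm]
      refine FF_inv (cs := cs) w (K' := Dr cs K w) subset_rfl _ _ ?_
      have : Subgroup.closure {s | τ s ∈ Dr cs K w} ≤
          (Subgroup.closure (Dr cs K w)).comap τ.toMonoidHom := by
        rw [Subgroup.closure_le]
        intro s hs
        exact Subgroup.subset_closure hs
      exact this hy
    by_contra hc
    exact hw (bFF_repr hK hK' hi w (fun hsub => hc (hsub hs)))
  have main : ∀ w : ↥(Subgroup.closure K), ∑ A ∈ A₀.powerset, (-1 : ℚ) ^ A.card *
      (if Kst τ A ⊆ Dr cs K w then a w else 0) = if w = 1 then a 1 else 0 := by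
    intro w
    by_cases haw : a w = 0
    · rw [haw, Finset.sum_eq_zero]
      · split_ifs with h
        · rw [← h, haw]
        · rfl
      · intro A _; simp
    have st := stab w haw
    have h1 : ∑ A ∈ A₀.powerset, (-1 : ℚ) ^ A.card *
      (if Kst τ A ⊆ Dr cs K w then a w else 0) =
        ∑ A ∈ (A₀.filter (fun s => s ∈ Dr cs K w)).powerset, (-1 : ℚ) ^ A.card * a w := by
      symm
      refine Eq.trans ?_ (Finset.sum_subset (Finset.powerset_mono.2 (Finset.filter_subset (fun s => s ∈ Dr cs K w) A₀)) ?_)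
      · refine Finset.sum_congr rfl fun A hA => ?_
        rw [if_pos]
        rw [Finset.mem_powerset] at hA
        rintro s (hs | hs)
        · exact (Finset.mem_filter.1 (hA hs)).2
        · exact st s (Finset.mem_filter.1 (hA hs)).2
      · intro A hA hA'
        rw [if_neg, mul_zero]
        intro hc
        apply hA'
        rw [Finset.mem_powerset] at hA ⊢
        intro s hs
        exact Finset.mem_filter.2 ⟨hA hs, hc (Or.inl hs)⟩
    have h2 := Finset.sum_powerset_neg_one_pow_card (x := A₀.filter (fun s => s ∈ Dr cs K w))
    have h2' : ∑ A ∈ (A₀.filter (fun s => s ∈ Dr cs K w)).powerset, (-1 : ℚ) ^ A.card =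
        if A₀.filter (fun s => s ∈ Dr cs K w) = ∅ then 1 else 0 := by
      have := congrArg (fun z : ℤ => (z : ℚ)) h2
      push_cast at this
      exact this
    rw [h1, ← Finset.sum_mul, h2']
    by_cases hw : w = 1
    · subst hw
      rw [if_pos, one_mul, if_pos rfl]
      rw [Finset.filter_eq_empty_iff]
      intro s _ hs
      have := hs.2
      simp [Ninv_one] at this
    · rw [if_neg hw, if_neg, zero_mul]
      obtain ⟨s, hsK, hs⟩ := exists_desc cs hK (inv_mem w.2) (fun hc => hw (Subtype.ext (by
        simpa using hc)))
      have hsm : s ∈ Dr cs K w := ⟨hsK, hs⟩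
      intro hc
      rw [Finset.filter_eq_empty_iff] at hc
      rw [hKdef] at hsK
      rcases hsK with h | h
      · exact hc h hsm
      · exact hc h (st (τ s) (by rwa [hτ]))
  have a1 : a 1 = (-1) ^ cs.length (g : W) := by
    have : a 1 = ∑ x : ↥(Subgroup.closure K), (-1) ^ cs.length (x : W) * Aop (FF cs K 1) x :=
      bFF_repr_one hK _
    rw [this, Finset.sum_eq_single g]
    · rw [hAop, inv_mul_cancel]
      have : tG 1 = 1 := Subtype.ext (by simp [tG])
      rw [this]
      simp [FF, ffn_self]
    · intro x _ hx
      rw [hAop]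
      have : Dr cs K ((1 : ↥(Subgroup.closure K)) : W) = ∅ := by
        ext s; simp [Dr, Ninv_one]
      simp only [FF, ffn, this, Subgroup.closure_empty, Subgroup.mem_bot]
      rw [if_neg, mul_zero]
      simp only [OneMemClass.coe_one, inv_one, one_mul]
      intro hc
      have h1 : tG (g⁻¹ * x) = 1 := Subtype.ext hc
      have h2 : g⁻¹ * x = 1 := by
        rw [← tGt (g⁻¹ * x), h1]; exact Subtype.ext (by simp [tG])
      exact hx (inv_mul_eq_one.1 h2).symm
    · simp
  calc _ = ∑ A ∈ A₀.powerset, (-1 : ℚ) ^ A.card * 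
        ∑ w : ↥(Subgroup.closure K), if Kst τ A ⊆ Dr cs K w then a w else 0 := by
        refine Finset.sum_congr rfl fun A hA => ?_
        rw [← tr2 A (Finset.mem_powerset.1 hA), tr1]
    _ = ∑ w : ↥(Subgroup.closure K), ∑ A ∈ A₀.powerset, (-1 : ℚ) ^ A.card *
        (if Kst τ A ⊆ Dr cs K w then a w else 0) := by
        rw [Finset.sum_comm]
        refine Finset.sum_congr rfl fun A _ => ?_
        rw [Finset.mul_sum]
    _ = a 1 := by
        rw [Finset.sum_congr rfl fun w _ => main w]
        simp
    _ = _ := a1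

theorem solomon_class {τ : MulAut W} (hτ : ∀ x, τ (τ x) = x) (A₀ : Finset W)
    (hK : Kst τ A₀ ⊆ Set.range cs.simple) [Fintype ↥(Subgroup.closure (Kst τ A₀))]
    (f : W → ℚ) (hf : ∀ x ∈ Subgroup.closure (Kst τ A₀), ∀ h ∈ Subgroup.closure (Kst τ A₀),
      f (x * h * (τ x)⁻¹) = f h) :
    ∑ A ∈ A₀.powerset, (-1 : ℚ) ^ A.card *
      ((∑ v : ↥(Subgroup.closure (Kst τ A₀)),
          if (v : W) ∈ Subgroup.closure (Kst τ A) then (1 : ℚ) else 0)⁻¹ *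
        ∑ x : ↥(Subgroup.closure (Kst τ A₀)),
          if (x : W) ∈ Subgroup.closure (Kst τ A) then f x else 0)
      = (Fintype.card ↥(Subgroup.closure (Kst τ A₀)) : ℚ)⁻¹ *
        ∑ g : ↥(Subgroup.closure (Kst τ A₀)), (-1) ^ cs.length (g : W) * f g := by
  let tG : ↥(Subgroup.closure (Kst τ A₀)) → ↥(Subgroup.closure (Kst τ A₀)) := fun x => ⟨τ x, Kst_closure hτ A₀ x.2⟩
  have h1 : ∀ A : Finset W, ∑ g : ↥(Subgroup.closure (Kst τ A₀)), (∑ x : ↥(Subgroup.closure (Kst τ A₀)),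
      if (x : W)⁻¹ * g * τ x ∈ Subgroup.closure (Kst τ A) then (1 : ℚ) else 0) * f g =
      (Fintype.card ↥(Subgroup.closure (Kst τ A₀)) : ℚ) * ∑ x : ↥(Subgroup.closure (Kst τ A₀)), if (x : W) ∈ Subgroup.closure (Kst τ A) then f x else 0 := by
    intro A
    simp only [Finset.sum_mul]
    rw [Finset.sum_comm, Fintype.card, ← nsmul_eq_mul, ← Finset.sum_const]
    refine Finset.sum_congr rfl fun x _ => ?_
    rw [← Equiv.sum_comp ((Equiv.mulRight (tG x)⁻¹).trans (Equiv.mulLeft x))]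
    refine Finset.sum_congr rfl fun h _ => ?_
    have e : (((Equiv.mulRight (tG x)⁻¹).trans (Equiv.mulLeft x)) h : ↥(Subgroup.closure (Kst τ A₀))) = x * (h * (tG x)⁻¹) := rfl
    rw [e]
    have e2 : ((x * (h * (tG x)⁻¹) : ↥(Subgroup.closure (Kst τ A₀))) : W) = x * h * (τ x)⁻¹ := by
      simp [tG, mul_assoc]
    rw [e2, hf x x.2 h h.2]
    have e3 : (x : W)⁻¹ * (x * h * (τ x)⁻¹) * τ x = h := by group
    rw [e3]
    split_ifs <;> simp
  have hc : (Fintype.card ↥(Subgroup.closure (Kst τ A₀)) : ℚ) ≠ 0 := by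
    have : Nonempty ↥(Subgroup.closure (Kst τ A₀)) := ⟨1⟩
    exact_mod_cast Fintype.card_ne_zero
  rw [eq_inv_mul_iff_mul_eq₀ hc]
  have h2 : ∀ g : ↥(Subgroup.closure (Kst τ A₀)), (-1) ^ cs.length (g : W) * f g = _ := fun g => by
    rw [← solomon_point hτ A₀ rfl hK g, Finset.sum_mul]
  rw [Finset.sum_congr rfl fun g _ => h2 g, Finset.sum_comm, Finset.mul_sum]
  refine Finset.sum_congr rfl fun A _ => ?_
  have h3 := h1 A
  set c : ℚ := (∑ v : ↥(Subgroup.closure (Kst τ A₀)),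
          if (v : W) ∈ Subgroup.closure (Kst τ A) then (1 : ℚ) else 0)⁻¹
  have h4 : ∀ z y : ℚ, (-1 : ℚ) ^ A.card * (c * z) * y = (-1 : ℚ) ^ A.card * c * (z * y) := by
    intros; ring
  simp only [h4]
  rw [← Finset.mul_sum, h1 A]
  ring

end


/-! ### Poincare series -/

def SG (L : Set W) : Finset W :=
  if h : (Subgroup.closure L : Set W).Finite then h.toFinset else ∅

theorem mem_SG {L : Set W} (h : (Subgroup.closure L : Set W).Finite) {x : W} :
    x ∈ SG L ↔ x ∈ Subgroup.closure L := by
  simp [SG, h]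

def Pt {R : Type} [CommRing R] (cs : CoxeterSystem M W) (τ : MulAut W) (q : R) (L : Set W) : R :=
  ∑ x ∈ (SG L).filter (fun x => τ x = x), q ^ cs.length x

def Qt {R : Type} [CommRing R] (cs : CoxeterSystem M W) (τ : MulAut W) (q : R) (K K' : Set W) : R :=
  ∑ x ∈ (SG K).filter (fun x => τ x = x ∧ RMin cs K' x), q ^ cs.length x

section
variable {cs : CoxeterSystem M W} {R : Type} [CommRing R]

theorem Kst_tau {τ : MulAut W} (hτ : ∀ x, τ (τ x) = x) {A : Finset W} {s : W} (hs : s ∈ Kst τ A) :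
    τ s ∈ Kst τ A := by
  rcases hs with h | h
  · right; rwa [hτ]
  · left; exact h

theorem desc_tau {τ : MulAut W} {A₀ : Finset W}
    (hK : Kst τ A₀ ⊆ Set.range cs.simple) (hτ : ∀ x, τ (τ x) = x)
    (hlen : ∀ x ∈ Subgroup.closure (Kst τ A₀), cs.length (τ x) = cs.length x)
    {u : W} (hu : u ∈ Subgroup.closure (Kst τ A₀)) {s : W} (hs : s ∈ Kst τ A₀) :
    τ s ∈ Ninv cs (τ u)⁻¹ ↔ s ∈ Ninv cs u⁻¹ := by
  obtain ⟨i, hi⟩ := hK hs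
  obtain ⟨j, hj⟩ := hK (Kst_tau hτ hs)
  have h1 : cs.IsReflection s := hi ▸ cs.isReflection_simple i
  have h2 : cs.IsReflection (τ s) := hj ▸ cs.isReflection_simple j
  rw [mem_Ninv_inv_refl cs h1, mem_Ninv_inv_refl cs h2, ← map_mul,
    hlen _ (mul_mem hu (Subgroup.subset_closure hs)), hlen _ hu]

theorem Pt_eq {τ : MulAut W} (q : R) {A₀ A : Finset W} (hA : A ⊆ A₀)
    (hK : Kst τ A₀ ⊆ Set.range cs.simple) (hτ : ∀ x, τ (τ x) = x)
    (hfin : (Subgroup.closure (Kst τ A₀) : Set W).Finite)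
    (hlen : ∀ x ∈ Subgroup.closure (Kst τ A₀), cs.length (τ x) = cs.length x) :
    Pt cs τ q (Kst τ A₀) = Pt cs τ q (Kst τ A) * Qt cs τ q (Kst τ A₀) (Kst τ A) := by
  have hsub : Kst τ A ⊆ Kst τ A₀ := Kst_mono τ hA
  have hcl : Subgroup.closure (Kst τ A) ≤ Subgroup.closure (Kst τ A₀) := Subgroup.closure_mono hsub
  have hK' := hsub.trans hK
  have hfin' : (Subgroup.closure (Kst τ A) : Set W).Finite := hfin.subset hcl
  unfold Pt Qt
  rw [Finset.sum_mul_sum, ← Finset.sum_product']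
  symm
  refine Finset.sum_bij (fun p _ => p.2 * p.1) ?_ ?_ ?_ ?_
  · rintro ⟨v, u⟩ h
    simp only [Finset.mem_product, Finset.mem_filter, mem_SG hfin, mem_SG hfin'] at h ⊢
    refine ⟨mul_mem h.2.1 (hcl h.1.1), ?_⟩
    rw [map_mul, h.1.2, h.2.2.1]
  · rintro ⟨v, u⟩ h ⟨v', u'⟩ h' he
    simp only [Finset.mem_product, Finset.mem_filter, mem_SG hfin, mem_SG hfin'] at h h'
    obtain ⟨h1, h2⟩ := RMin.unique hK' h.2.2.2 h'.2.2.2 h.1.1 h'.1.1 he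
    rw [h1, h2]
  · intro x hx
    simp only [Finset.mem_filter, mem_SG hfin] at hx
    obtain ⟨v, hv, u, hu, rfl⟩ := exists_rmin cs (Kst τ A) x
    have hum : u ∈ Subgroup.closure (Kst τ A₀) := by
      have := mul_mem hx.1 (inv_mem (hcl hv))
      rwa [mul_inv_cancel_right] at this
    have hu' : RMin cs (Kst τ A) (τ u) := by
      intro s hs
      have := desc_tau hK hτ hlen hum (hsub (Kst_tau hτ hs))
      rw [hτ] at this
      rw [this]
      exact hu _ (Kst_tau hτ hs)
    have he := hx.2
    rw [map_mul] at he
    obtain ⟨h1, h2⟩ := RMin.unique hK' hu' hu (Kst_closure hτ A hv) hv he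
    refine ⟨(v, u), ?_, rfl⟩
    simp only [Finset.mem_product, Finset.mem_filter, mem_SG hfin, mem_SG hfin']
    exact ⟨⟨hv, h2⟩, hum, h1, hu⟩
  · rintro ⟨v, u⟩ h
    simp only [Finset.mem_product, Finset.mem_filter, mem_SG hfin, mem_SG hfin'] at h
    rw [h.2.2.2.length_mul hK' h.1.1, pow_add, mul_comm]

theorem Qt_self {τ : MulAut W} (q : R) {K : Set W}
    (hK : K ⊆ Set.range cs.simple) (hfin : (Subgroup.closure K : Set W).Finite) :
    Qt cs τ q K K = 1 := by
  unfold Qt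
  rw [Finset.sum_eq_single 1]
  · simp
  · intro x hx hne
    simp only [Finset.mem_filter, mem_SG hfin] at hx
    obtain ⟨s, hs, hs'⟩ := exists_desc cs hK (inv_mem hx.1) (by simpa using hne)
    exact absurd hs' (hx.2.2 s hs)
  · intro h
    simp only [Finset.mem_filter, mem_SG hfin] at h
    exact absurd ⟨one_mem _, map_one _, rmin_one cs K⟩ h

theorem Qt_sum {τ : MulAut W} (q : R) {A₀ : Finset W}
    (hK : Kst τ A₀ ⊆ Set.range cs.simple) (hτ : ∀ x, τ (τ x) = x)
    (hfin : (Subgroup.closure (Kst τ A₀) : Set W).Finite)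
    (hlen : ∀ x ∈ Subgroup.closure (Kst τ A₀), cs.length (τ x) = cs.length x)
    {wK : W} (hw : IsLongest cs (Kst τ A₀) wK) :
    ∑ A ∈ A₀.powerset, (-1 : R) ^ A.card * Qt cs τ q (Kst τ A₀) (Kst τ A) = q ^ cs.length wK := by
  have hwt : τ wK = wK := by
    refine (hw.unique (isLongest_of_max cs hK (Kst_closure hτ A₀ hw.mem) ?_)).symm
    intro u hu
    rw [hlen _ hw.mem]
    exact hw.length_le hu
  have e1 : ∀ A : Finset W, (-1 : R) ^ A.card * Qt cs τ q (Kst τ A₀) (Kst τ A) =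
      ∑ x ∈ (SG (Kst τ A₀)).filter (fun x => τ x = x),
        (if RMin cs (Kst τ A) x then (-1 : R) ^ A.card else 0) * q ^ cs.length x := by
    intro A
    unfold Qt
    rw [← Finset.filter_filter, Finset.sum_filter, Finset.mul_sum]
    refine Finset.sum_congr rfl fun x _ => ?_
    split_ifs <;> simp
  rw [Finset.sum_congr rfl fun A _ => e1 A, Finset.sum_comm]
  have e2 : ∀ x ∈ (SG (Kst τ A₀)).filter (fun x => τ x = x),
      ∑ A ∈ A₀.powerset, (if RMin cs (Kst τ A) x then (-1 : R) ^ A.card else 0) * q ^ cs.length x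
      = if x = wK then q ^ cs.length x else 0 := by
    intro x hx
    simp only [Finset.mem_filter, mem_SG hfin] at hx
    have st : ∀ s ∈ Kst τ A₀, (τ s ∈ Ninv cs x⁻¹ ↔ s ∈ Ninv cs x⁻¹) := by
      intro s hs
      have := desc_tau hK hτ hlen hx.1 hs
      rwa [hx.2] at this
    rw [← Finset.sum_mul]
    have h1 : ∑ A ∈ A₀.powerset, (if RMin cs (Kst τ A) x then (-1 : R) ^ A.card else 0) =
        ∑ A ∈ (A₀.filter (fun s => s ∉ Ninv cs x⁻¹)).powerset, (-1 : R) ^ A.card := by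
      symm
      refine Eq.trans ?_ (Finset.sum_subset (Finset.powerset_mono.2
        (Finset.filter_subset (fun s => s ∉ Ninv cs x⁻¹) A₀)) ?_)
      · refine Finset.sum_congr rfl fun A hA => ?_
        rw [if_pos]
        rw [Finset.mem_powerset] at hA
        rintro s (hs | hs)
        · exact (Finset.mem_filter.1 (hA hs)).2
        · have h3 := Finset.mem_filter.1 (hA hs)
          rw [← st s (Or.inr h3.1)]
          exact h3.2
      · intro A hA hA'
        rw [if_neg]
        intro hc
        apply hA'
        rw [Finset.mem_powerset] at hA ⊢
        intro s hs
        exact Finset.mem_filter.2 ⟨hA hs, hc s (Or.inl hs)⟩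
    have h2 := Finset.sum_powerset_neg_one_pow_card (x := A₀.filter (fun s => s ∉ Ninv cs x⁻¹))
    have h2' : ∑ A ∈ (A₀.filter (fun s => s ∉ Ninv cs x⁻¹)).powerset, (-1 : R) ^ A.card =
        if A₀.filter (fun s => s ∉ Ninv cs x⁻¹) = ∅ then 1 else 0 := by
      have := congrArg (fun z : ℤ => (z : R)) h2
      push_cast at this
      exact this
    rw [h1, h2', ite_mul, one_mul, zero_mul]
    refine if_congr ?_ rfl rfl
    rw [Finset.filter_eq_empty_iff]
    constructor
    · intro h
      have : x⁻¹ = wK := by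
        refine hw.eq_of_desc (inv_mem hx.1) fun s hs => ?_
        have hs' := hs
        rcases hs with h3 | h3
        · exact not_not.1 (h h3)
        · rw [← st s hs']; exact not_not.1 (h h3)
      rw [← inv_inv x, this, hw.inv_eq]
    · rintro rfl s hs
      rw [not_not, hw.inv_eq, hw.N]
      exact simple_mem_Tset cs hK (Or.inl hs)
  rw [Finset.sum_congr rfl e2, Finset.sum_ite_eq', if_pos]
  simp only [Finset.mem_filter, mem_SG hfin]
  exact ⟨hw.mem, hwt⟩

end


/-! ### Polynomial functions and traces -/

section Poly
open MvPolynomial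
variable {r : ℕ}

def lin : (Fin r → ℚ) →ₗ[ℚ] MvPolynomial (Fin r) ℚ :=
  ∑ i, (LinearMap.toSpanSingleton ℚ (MvPolynomial (Fin r) ℚ) (X i)).comp (LinearMap.proj i)

theorem lin_apply (v : Fin r → ℚ) : lin v = ∑ i, v i • (X i : MvPolynomial (Fin r) ℚ) := by
  simp [lin, LinearMap.sum_apply]

theorem lin_single (i : Fin r) : lin (Pi.single i 1) = (X i : MvPolynomial (Fin r) ℚ) := by
  rw [lin_apply, Finset.sum_eq_single i]
  · simp
  · intro j _ hj; simp [Pi.single_eq_of_ne hj]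
  · simp

theorem lin_coeff (v : Fin r → ℚ) (i : Fin r) : coeff (Finsupp.single i 1) (lin v) = v i := by
  rw [lin_apply, coeff_sum, Finset.sum_eq_single i]
  · simp
  · intro j _ hj
    rw [coeff_smul, coeff_X', if_neg, smul_zero]
    intro h
    exact hj (Finsupp.single_left_injective one_ne_zero h)
  · simp

theorem lin_injective : Function.Injective (lin (r := r)) := by
  intro v w h
  funext i
  rw [← lin_coeff v, h, lin_coeff]

theorem lin_homog (v : Fin r → ℚ) : (lin v).IsHomogeneous 1 := by
  rw [lin_apply]
  refine IsHomogeneous.sum _ _ _ fun i _ => ?_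
  rw [smul_eq_C_mul]
  exact isHomogeneous_C_mul_X _ _

def Phi (A : Module.End ℚ (Fin r → ℚ)) : MvPolynomial (Fin r) ℚ →ₐ[ℚ] MvPolynomial (Fin r) ℚ :=
  aeval (fun i => lin (A (Pi.single i 1)))

theorem Phi_lin (A : Module.End ℚ (Fin r → ℚ)) (v : Fin r → ℚ) : Phi A (lin v) = lin (A v) := by
  have : (Phi A).toLinearMap ∘ₗ lin = lin ∘ₗ A := by
    refine (Pi.basisFun ℚ (Fin r)).ext fun i => ?_
    simp only [Pi.basisFun_apply, LinearMap.comp_apply, lin_single, AlgHom.toLinearMap_apply]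
    simp [Phi]
  exact LinearMap.congr_fun this v

theorem Phi_mul (A A' : Module.End ℚ (Fin r → ℚ)) (p) : Phi (A * A') p = Phi A (Phi A' p) := by
  have : Phi (A * A') = (Phi A).comp (Phi A') := by
    refine algHom_ext fun i => ?_
    rw [AlgHom.comp_apply, ← lin_single, Phi_lin, Phi_lin, Phi_lin]; rfl
  rw [this]; rfl

theorem Phi_one (p : MvPolynomial (Fin r) ℚ) : Phi 1 p = p := by
  have : Phi (r := r) 1 = AlgHom.id ℚ _ := by
    refine algHom_ext fun i => ?_
    rw [← lin_single, Phi_lin]; rfl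
  rw [this]; rfl

abbrev Hn (r n : ℕ) := homogeneousSubmodule (Fin r) ℚ n

instance (n : ℕ) : Module.Finite ℚ (Hn r n) := Module.Finite.iff_fg.2 (homogeneousSubmodule_fg _ _ n)

theorem Phi_mem (A : Module.End ℚ (Fin r → ℚ)) (n : ℕ) : ∀ p ∈ Hn r n, Phi A p ∈ Hn r n := by
  intro p hp
  have := IsHomogeneous.aeval (m := n) (n := 1) hp (fun i => lin (A (Pi.single i 1)))
    (fun i => lin_homog _)
  rw [one_mul] at this
  exact this

def PhiL (n : ℕ) (A : Module.End ℚ (Fin r → ℚ)) : Module.End ℚ (Hn r n) :=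
  (Phi A).toLinearMap.restrict (Phi_mem A n)

theorem PhiL_coe (n : ℕ) (A : Module.End ℚ (Fin r → ℚ)) (p : Hn r n) :
    ((PhiL n A p : Hn r n) : MvPolynomial (Fin r) ℚ) = Phi A p := rfl

theorem PhiL_mul (n : ℕ) (A A' : Module.End ℚ (Fin r → ℚ)) :
    PhiL n (A * A') = PhiL n A * PhiL n A' :=
  LinearMap.ext fun p => Subtype.ext (Phi_mul A A' p)

theorem PhiL_one (n : ℕ) : PhiL n (1 : Module.End ℚ (Fin r → ℚ)) = 1 :=
  LinearMap.ext fun p => Subtype.ext (Phi_one _)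

def tr (n : ℕ) (A : Module.End ℚ (Fin r → ℚ)) : ℚ := LinearMap.trace ℚ _ (PhiL n A)

theorem tr_mul_comm (n : ℕ) (A A' : Module.End ℚ (Fin r → ℚ)) : tr n (A * A') = tr n (A' * A) := by
  rw [tr, tr, PhiL_mul, PhiL_mul, LinearMap.trace_mul_comm]

theorem Phi_diag (A : Module.End ℚ (Fin r → ℚ)) (ε : Fin r → ℚ)
    (hA : ∀ i, A (Pi.single i 1) = ε i • Pi.single i 1) (d : Fin r →₀ ℕ) (c : ℚ) :
    Phi A (monomial d c) = (∏ i, ε i ^ d i) • monomial d c := by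
  rw [Phi, aeval_monomial, Finsupp.prod_fintype _ _ (by simp)]
  simp only [hA, map_smul, lin_single, smul_pow]
  rw [Finset.prod_smul, monomial_eq, Finsupp.prod_fintype _ _ (by simp), mul_smul_comm]
  rfl

theorem Phi_neg_one (n : ℕ) (p : MvPolynomial (Fin r) ℚ) (hp : p ∈ Hn r n) :
    Phi (-1) p = (-1 : ℚ) ^ n • p := by
  rw [p.as_sum, map_sum, Finset.smul_sum]
  refine Finset.sum_congr rfl fun d hd => ?_
  rw [Phi_diag (-1) (fun _ => -1) (fun i => (neg_one_smul ℚ (Pi.single i (1:ℚ) : Fin r → ℚ)).symm)]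
  congr 1
  rw [Finset.prod_pow_eq_pow_sum]
  congr 1
  have := hp (mem_support_iff.1 hd)
  rw [← this]
  simp [Finsupp.weight_apply, Finsupp.sum_fintype]

theorem tr_neg (n : ℕ) (A : Module.End ℚ (Fin r → ℚ)) : tr n (-A) = (-1) ^ n * tr n A := by
  have : PhiL n (-A) = (-1 : ℚ) ^ n • PhiL n A := by
    refine LinearMap.ext fun p => Subtype.ext ?_
    have e : -A = (-1) * A := (neg_one_mul A).symm
    rw [e, PhiL_mul]
    exact Phi_neg_one n _ (PhiL n A p).2
  rw [tr, this, map_smul, smul_eq_mul, tr]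

def hnEquiv (r n : ℕ) : Hn r n ≃ₗ[ℚ] ({d // d ∈ Finset.finsuppAntidiag (Finset.univ : Finset (Fin r)) n} → ℚ) where
  toFun p := fun d => coeff d.1 p.1
  map_add' p q := by funext d; simp
  map_smul' c p := by funext d; simp
  invFun f := ⟨∑ d, monomial d.1 (f d), by
    refine Submodule.sum_mem _ fun d _ => ?_
    refine isHomogeneous_monomial _ ?_
    have := d.2
    rw [Finset.mem_finsuppAntidiag] at this
    rw [Finsupp.degree_eq_sum]; exact this.1⟩
  left_inv p := by
    apply Subtype.ext
    ext d
    simp only [coeff_sum, coeff_monomial]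
    by_cases hd : d ∈ Finset.finsuppAntidiag (Finset.univ : Finset (Fin r)) n
    · rw [Finset.sum_eq_single ⟨d, hd⟩]
      · simp
      · intro e _ he
        rw [if_neg]
        rintro rfl
        exact he rfl
      · simp
    · rw [Finset.sum_eq_zero]
      · symm
        refine IsHomogeneous.coeff_eq_zero p.2 ?_
        intro hc
        apply hd
        rw [Finset.mem_finsuppAntidiag]
        rw [Finsupp.degree_eq_sum] at hc
        exact ⟨hc, by simp⟩
      · intro e _
        rw [if_neg]
        rintro rfl
        exact hd e.2
  right_inv f := by
    funext d
    simp only [coeff_sum, coeff_monomial]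
    rw [Finset.sum_eq_single d]
    · simp
    · intro e _ he
      rw [if_neg]
      intro hc
      exact he (Subtype.ext hc)
    · simp

theorem tr_diag (A : Module.End ℚ (Fin r → ℚ)) (ε : Fin r → ℚ)
    (hA : ∀ i, A (Pi.single i 1) = ε i • Pi.single i 1) (n : ℕ) :
    tr n A = ∑ d ∈ Finset.finsuppAntidiag (Finset.univ : Finset (Fin r)) n, ∏ i, ε i ^ d i := by
  rw [tr, LinearMap.trace_eq_matrix_trace ℚ (Module.Basis.ofEquivFun (hnEquiv r n)), Matrix.trace]
  refine Eq.trans ?_ (Finset.sum_coe_sort (Finset.finsuppAntidiag (Finset.univ : Finset (Fin r)) n)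
    (fun d => ∏ i, ε i ^ d i))
  refine Finset.sum_congr rfl fun d _ => ?_
  rw [Matrix.diag_apply, LinearMap.toMatrix_apply]
  have e1 : (((Module.Basis.ofEquivFun (hnEquiv r n)) d : Hn r n) : MvPolynomial (Fin r) ℚ) =
      monomial d.1 1 := by
    rw [Module.Basis.coe_ofEquivFun]
    simp only [hnEquiv]
    change (∑ e : {d // d ∈ Finset.finsuppAntidiag (Finset.univ : Finset (Fin r)) n},
      (monomial e.1 : ℚ →ₗ[ℚ] MvPolynomial (Fin r) ℚ) ((Pi.single d 1 : {d // d ∈ Finset.finsuppAntidiag (Finset.univ : Finset (Fin r)) n} → ℚ) e)) = _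
    refine (Finset.sum_eq_single d ?_ ?_).trans ?_
    rotate_left 2
    · simp
    · intro e _ he; simp [Pi.single_eq_of_ne he]
    · simp
  have e2 : ∀ p, (Module.Basis.ofEquivFun (hnEquiv r n)).repr p d = coeff d.1 p.1 := by
    intro p
    rw [Module.Basis.ofEquivFun_repr_apply]; rfl
  rw [e2, PhiL_coe, e1, Phi_diag A ε hA]
  simp

def Mser (A : Module.End ℚ (Fin r → ℚ)) : PowerSeries ℚ := PowerSeries.mk fun n => tr n A

theorem Mser_diag (A : Module.End ℚ (Fin r → ℚ)) (ε : Fin r → ℚ)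
    (hA : ∀ i, A (Pi.single i 1) = ε i • Pi.single i 1) :
    Mser A * ∏ i, (1 - PowerSeries.C (ε i) * PowerSeries.X) = 1 := by
  have h1 : Mser A = ∏ i, PowerSeries.mk (fun n => ε i ^ n) := by
    ext n
    rw [Mser, PowerSeries.coeff_mk, tr_diag A ε hA, PowerSeries.coeff_prod]
    simp
  rw [h1, ← Finset.prod_mul_distrib]
  refine Finset.prod_eq_one fun i _ => ?_
  ext n
  rcases n with _ | n
  · simp [PowerSeries.coeff_zero_eq_constantCoeff]
  · rw [mul_sub, mul_one, map_sub, mul_left_comm, PowerSeries.coeff_C_mul,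
      PowerSeries.coeff_succ_mul_X]
    simp [PowerSeries.coeff_one, pow_succ, mul_comm]

theorem invol_isCompl (T : Module.End ℚ (Fin r → ℚ)) (hT : T * T = 1) :
    IsCompl (Module.End.eigenspace T 1) (Module.End.eigenspace T (-1)) := by
  have hTT : ∀ v, T (T v) = v := fun v => LinearMap.congr_fun hT v
  constructor
  · rw [Submodule.disjoint_def]
    intro x hx hy
    have h1 : T x = (1 : ℚ) • x := Module.End.mem_eigenspace_iff.1 hx
    have h2 : T x = (-1 : ℚ) • x := Module.End.mem_eigenspace_iff.1 hy
    rw [h1] at h2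
    funext i
    have := congrFun h2 i
    simp only [Pi.smul_apply, smul_eq_mul] at this
    simp only [Pi.zero_apply]
    linarith
  · rw [codisjoint_iff, eq_top_iff]
    intro x _
    rw [Submodule.mem_sup]
    refine ⟨(1/2 : ℚ) • (x + T x), ?_, (1/2 : ℚ) • (x - T x), ?_, ?_⟩
    · rw [Module.End.mem_eigenspace_iff, map_smul, map_add, hTT, one_smul, add_comm]
    · rw [Module.End.mem_eigenspace_iff, map_smul, map_sub, hTT, neg_one_smul, ← smul_neg, neg_sub]
    · rw [← smul_add, add_add_sub_cancel, ← two_smul ℚ x, smul_smul]; norm_num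

theorem Mser_invol (T : Module.End ℚ (Fin r → ℚ)) (hT : T * T = 1) :
    Module.finrank ℚ (Module.End.eigenspace T (-1)) ≤ r ∧
    Mser T * ((1 - PowerSeries.X) ^ (r - Module.finrank ℚ (Module.End.eigenspace T (-1))) *
      (1 + PowerSeries.X) ^ (Module.finrank ℚ (Module.End.eigenspace T (-1)))) = 1 ∧
    LinearMap.det T = (-1) ^ Module.finrank ℚ (Module.End.eigenspace T (-1)) := by
  have hTT : ∀ v, T (T v) = v := fun v => LinearMap.congr_fun hT v
  set U := Module.End.eigenspace T 1
  set V := Module.End.eigenspace T (-1)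
  have hc : IsCompl U V := invol_isCompl T hT
  set m := Module.finrank ℚ V
  set p := Module.finrank ℚ U
  have hpm : p + m = r := by
    have := Submodule.finrank_add_eq_of_isCompl hc
    simpa using this
  let b := ((Module.finBasis ℚ U).prod (Module.finBasis ℚ V)).map
    (Submodule.prodEquivOfIsCompl U V hc)
  let e : Fin p ⊕ Fin m ≃ Fin r := Fintype.equivOfCardEq (by simp [hpm])
  let b' := b.reindex e
  let ε' : Fin p ⊕ Fin m → ℚ := Sum.elim (fun _ => 1) (fun _ => -1)
  have hb : ∀ i, T (b i) = ε' i • b i := by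
    intro i
    rcases i with i | i
    · have e1 : b (Sum.inl i) = (Module.finBasis ℚ U i : Fin r → ℚ) := by
        simp [b, Submodule.coe_prodEquivOfIsCompl']
      rw [e1]
      exact Module.End.mem_eigenspace_iff.1 (Module.finBasis ℚ U i).2
    · have e1 : b (Sum.inr i) = (Module.finBasis ℚ V i : Fin r → ℚ) := by
        simp [b, Submodule.coe_prodEquivOfIsCompl']
      rw [e1]
      exact Module.End.mem_eigenspace_iff.1 (Module.finBasis ℚ V i).2
  let P : (Fin r → ℚ) ≃ₗ[ℚ] (Fin r → ℚ) := (Pi.basisFun ℚ (Fin r)).equiv b' (Equiv.refl _)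
  let Dg : Module.End ℚ (Fin r → ℚ) := P.symm.toLinearMap ∘ₗ T ∘ₗ P.toLinearMap
  have hDg : ∀ i, Dg (Pi.single i 1) = ε' (e.symm i) • Pi.single i 1 := by
    intro i
    have : P (Pi.single i 1) = b (e.symm i) := by
      rw [← Pi.basisFun_apply, Module.Basis.equiv_apply]; simp [b']
    simp only [Dg, LinearMap.comp_apply, LinearEquiv.coe_coe, this, hb, map_smul]
    rw [← this, LinearEquiv.symm_apply_apply]
  have hM : Mser T = Mser Dg := by
    unfold Mser
    congr 1
    funext n
    have h1 : Dg = (P.symm.toLinearMap : Module.End ℚ _) * (T * (P.toLinearMap : Module.End ℚ _)) := rfl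
    rw [h1, tr_mul_comm, mul_assoc]
    congr 1
    have : (P.toLinearMap : Module.End ℚ _) * P.symm.toLinearMap = 1 := by
      ext v; simp
    rw [this, mul_one]
  have h2 := Mser_diag Dg _ hDg
  rw [← hM] at h2
  refine ⟨by omega, ?_, ?_⟩
  swap
  · rw [← LinearMap.det_toMatrix b T]
    have : LinearMap.toMatrix b b T = Matrix.diagonal ε' := by
      ext i j
      rw [LinearMap.toMatrix_apply, hb, map_smul, Module.Basis.repr_self, Matrix.diagonal_apply]
      by_cases h : i = j
      · subst h; simp
      · simp [h, Finsupp.single_apply, Ne.symm h]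
    rw [this, Matrix.det_diagonal, Fintype.prod_sum_type]
    simp [ε', m]
  have h3 : r - m = p := by omega
  rw [h3]
  refine Eq.trans ?_ h2
  congr 1
  symm
  rw [← Equiv.prod_comp e, Fintype.prod_sum_type]
  simp [ε', sub_neg_eq_add]

end Poly


section Poly2
open MvPolynomial
variable {r : ℕ}

theorem hc_mul {Δ g : MvPolynomial (Fin r) ℚ} {N : ℕ} (hΔ : Δ.IsHomogeneous N) (n : ℕ) :
    homogeneousComponent (N + n) (Δ * g) = Δ * homogeneousComponent n g := by
  conv_lhs => rw [← sum_homogeneousComponent g, Finset.mul_sum, map_sum]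
  have h1 : ∀ i, homogeneousComponent (N + n) (Δ * homogeneousComponent i g) =
      if i = n then Δ * homogeneousComponent i g else 0 := by
    intro i
    rw [homogeneousComponent_of_mem (n := N + i)
      (hΔ.mul (homogeneousComponent_isHomogeneous i g))]
    by_cases h : i = n
    · subst h; simp
    · rw [if_neg h, if_neg]; omega
  rw [Finset.sum_congr rfl fun i _ => h1 i, Finset.sum_ite_eq']
  split_ifs with h
  · rfl
  · rw [homogeneousComponent_eq_zero, mul_zero]
    simp at h; omega

theorem hc_mul_lt {Δ g : MvPolynomial (Fin r) ℚ} {N : ℕ} (hΔ : Δ.IsHomogeneous N) {k : ℕ}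
    (hk : k < N) : homogeneousComponent k (Δ * g) = 0 := by
  conv_lhs => rw [← sum_homogeneousComponent g, Finset.mul_sum, map_sum]
  refine Finset.sum_eq_zero fun i _ => ?_
  rw [homogeneousComponent_of_mem (n := N + i)
      (hΔ.mul (homogeneousComponent_isHomogeneous i g)), if_neg]
  omega

theorem homog_factor {Δ p : MvPolynomial (Fin r) ℚ} {N n : ℕ} (hΔ : Δ.IsHomogeneous N)
    (hp : p ∈ Hn r (N + n)) (hd : Δ ∣ p) : ∃ g ∈ Hn r n, p = Δ * g := by
  obtain ⟨g, rfl⟩ := hd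
  refine ⟨homogeneousComponent n g, homogeneousComponent_isHomogeneous n g, ?_⟩
  rw [← hc_mul hΔ, homogeneousComponent_eq_self hp]

theorem homog_factor_lt {Δ p : MvPolynomial (Fin r) ℚ} {N n : ℕ} (hΔ : Δ.IsHomogeneous N)
    (hp : p ∈ Hn r n) (hn : n < N) (hd : Δ ∣ p) : p = 0 := by
  obtain ⟨g, rfl⟩ := hd
  rw [← homogeneousComponent_eq_self hp, hc_mul_lt hΔ hn]

theorem lin_ne {v : Fin r → ℚ} (hv : v ≠ 0) : (lin v : MvPolynomial (Fin r) ℚ) ≠ 0 := by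
  intro h
  exact hv (lin_injective (by rw [h, map_zero]))

theorem lin_irred {v : Fin r → ℚ} (hv : v ≠ 0) : Irreducible (lin v : MvPolynomial (Fin r) ℚ) := by
  apply irreducible_of_totalDegree_eq_one
  · exact (lin_homog v).totalDegree (lin_ne hv)
  · intro x hx
    rw [isUnit_iff_ne_zero]
    rintro rfl
    apply hv
    funext i
    have := hx (Finsupp.single i 1)
    rw [lin_coeff] at this
    exact zero_dvd_iff.1 this

theorem lin_dvd_lin {v w : Fin r → ℚ} (h : (lin v : MvPolynomial (Fin r) ℚ) ∣ lin w) :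
    ∃ c : ℚ, w = c • v := by
  obtain ⟨g, hg, he⟩ := homog_factor (n := 0) (lin_homog v) (lin_homog w) h
  have hg' : g.IsHomogeneous 0 := hg
  have hg2 : g = C (coeff 0 g) := by
    rw [← homogeneousComponent_zero, homogeneousComponent_eq_self hg]
  refine ⟨coeff 0 g, lin_injective ?_⟩
  rw [he, map_smul, smul_eq_C_mul, mul_comm, ← hg2]

theorem lin_dvd_anti {A : Module.End ℚ (Fin r → ℚ)} {a : Fin r → ℚ}
    (hA : ∀ v, ∃ c : ℚ, A v = v + c • a) {p : MvPolynomial (Fin r) ℚ} (hp : Phi A p = -p) :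
    lin a ∣ p := by
  rw [← Ideal.mem_span_singleton]
  set I := Ideal.span {(lin a : MvPolynomial (Fin r) ℚ)}
  have h : (Ideal.Quotient.mkₐ ℚ I).comp (Phi A) = Ideal.Quotient.mkₐ ℚ I := by
    refine algHom_ext fun i => ?_
    rw [AlgHom.comp_apply, ← lin_single, Phi_lin]
    obtain ⟨c, hc⟩ := hA (Pi.single i 1)
    rw [hc, map_add, map_add, add_eq_left, map_smul, map_smul]
    have : (Ideal.Quotient.mkₐ ℚ I) (lin a) = 0 :=
      Ideal.Quotient.eq_zero_iff_mem.2 (Ideal.mem_span_singleton_self _)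
    rw [this, smul_zero]
  have h2 := AlgHom.congr_fun h p
  rw [AlgHom.comp_apply, hp, map_neg] at h2
  have h3 : (2 : ℚ) • (Ideal.Quotient.mkₐ ℚ I p) = 0 := by
    rw [two_smul]; nth_rewrite 1 [← h2]; simp
  have h4 : Ideal.Quotient.mkₐ ℚ I p = 0 := by
    rcases smul_eq_zero.1 h3 with h | h
    · norm_num at h
    · exact h
  exact Ideal.Quotient.eq_zero_iff_mem.1 h4

theorem trace_transfer {U V : Type} [AddCommGroup U] [Module ℚ U] [AddCommGroup V] [Module ℚ V]
    [Module.Finite ℚ U] [Module.Finite ℚ V] (m : U →ₗ[ℚ] V) (hm : Function.Injective m)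
    (X' : Module.End ℚ U) (X : Module.End ℚ V) (h1 : ∀ u, X (m u) = m (X' u))
    (h2 : ∀ v, ∃ u, X v = m u) : LinearMap.trace ℚ V X = LinearMap.trace ℚ U X' := by
  obtain ⟨g, hg⟩ := LinearMap.exists_leftInverse_of_injective m (LinearMap.ker_eq_bot.2 hm)
  have hgm : ∀ u, g (m u) = u := fun u => LinearMap.congr_fun hg u
  have e1 : X = m ∘ₗ (g ∘ₗ X) := by
    ext v
    obtain ⟨u, hu⟩ := h2 v
    simp [hu, hgm]
  have e2 : X' = (g ∘ₗ X) ∘ₗ m := by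
    ext u
    simp [h1, hgm]
  rw [e2, LinearMap.trace_comp_comm', ← e1]

theorem Phi_prod {ι : Type} (A : Module.End ℚ (Fin r → ℚ)) (S : Finset ι) (a : ι → Fin r → ℚ)
    (σ : ι → ι) (hσ : ∀ t ∈ S, σ t ∈ S) (hi : ∀ t ∈ S, ∀ t' ∈ S, σ t = σ t' → t = t')
    (c : ι → ℚ) (hc : ∀ t ∈ S, A (a t) = c t • a (σ t)) :
    Phi A (∏ t ∈ S, lin (a t)) = (∏ t ∈ S, c t) • ∏ t ∈ S, lin (a t) := by
  rw [map_prod, Finset.prod_congr rfl (fun t ht => by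
    rw [Phi_lin, hc t ht, map_smul] : ∀ t ∈ S, Phi A (lin (a t)) = c t • lin (a (σ t)))]
  rw [Finset.prod_smul]
  congr 1
  refine Finset.prod_nbij σ hσ (fun t ht t' ht' h => hi t ht t' ht' h) ?_ (fun _ _ => rfl)
  exact Finset.surjOn_of_injOn_of_card_le σ hσ (fun t ht t' ht' h => hi t ht t' ht' h) le_rfl

theorem Phi_prod_sq (A : Module.End ℚ (Fin r → ℚ)) (hA : A * A = 1)
    {p : MvPolynomial (Fin r) ℚ} (hp : p ≠ 0) {c : ℚ} (h : Phi A p = c • p) : c * c = 1 := by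
  have := Phi_mul A A p
  rw [hA, Phi_one, h, map_smul, h, smul_smul] at this
  have h2 : (c * c - 1) • p = 0 := by rw [sub_smul, ← this, one_smul, sub_self]
  rcases smul_eq_zero.1 h2 with h | h
  · linarith
  · exact absurd h hp

end Poly2


/-! ### Twisted data and the discriminant -/

structure TwData {cs : CoxeterSystem M W} (D : AffineData cs) (L : Set W) (τ : MulAut W)
    (T : Module.End ℚ (Fin D.rank → ℚ)) : Prop where
  hL : L ⊆ Set.range cs.simple
  fin : (Subgroup.closure L : Set W).Finite
  τ_inv : ∀ x, τ (τ x) = x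
  τ_len : ∀ y ∈ Subgroup.closure L, cs.length (τ y) = cs.length y
  τ_refl : ∀ t, cs.IsReflection t → cs.IsReflection (τ t)
  T_sq : T * T = 1
  T_rho : ∀ h, T * D.rho h = D.rho (τ h) * T
  T_al : ∀ t ∈ Tset cs L, ∃ c : ℚ, 0 < c ∧ T (D.al t) = c • D.al (τ t)

def TS (cs : CoxeterSystem M W) (K : Set W) : Finset W := (SG K).filter cs.IsReflection

section Disc
open MvPolynomial
variable {cs : CoxeterSystem M W} {D : AffineData cs} {K : Set W}

theorem mem_TS (hfin : (Subgroup.closure K : Set W).Finite) {t : W} :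
    t ∈ TS cs K ↔ t ∈ Tset cs K := by
  rw [TS, Finset.mem_filter, mem_SG hfin]
  exact and_comm

def Delta (D : AffineData cs) (K : Set W) : MvPolynomial (Fin D.rank) ℚ :=
  ∏ t ∈ TS cs K, lin (D.al t)

theorem TS_refl {t : W} (h : t ∈ TS cs K) : cs.IsReflection t := (Finset.mem_filter.1 h).2

theorem Delta_ne : Delta D K ≠ 0 :=
  Finset.prod_ne_zero_iff.2 fun _ ht => lin_ne (AffineData.al_ne (TS_refl ht))

theorem Delta_homog : (Delta D K).IsHomogeneous (TS cs K).card := by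
  have := IsHomogeneous.prod (TS cs K) (fun t => lin (D.al t)) (fun _ => 1)
    (fun t _ => lin_homog _)
  simpa [Delta] using this

theorem rho_sq {t : W} (ht : cs.IsReflection t) : D.rho t * D.rho t = 1 := by
  rw [← AffineData.rho_mul, ht.mul_self, AffineData.rho_one]

theorem Delta_simple (hK : K ⊆ Set.range cs.simple) (hfin : (Subgroup.closure K : Set W).Finite)
    {s : W} (hs : s ∈ K) : Phi (D.rho s) (Delta D K) = - Delta D K := by
  have hsT := simple_mem_Tset cs hK hs
  have hsr : cs.IsReflection s := hsT.1
  have hsc : s ∈ Subgroup.closure K := hsT.2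
  have hN : Ninv cs s = {s} := by
    obtain ⟨i, rfl⟩ := hK hs
    exact Ninv_simple cs i
  have hex : ∀ t, ∃ c : ℚ, t ∈ TS cs K → ((t ≠ s → 0 < c) ∧ (t = s → c < 0) ∧
      D.rho s (D.al t) = c • D.al (s * t * s⁻¹)) := by
    intro t
    by_cases ht : t ∈ TS cs K
    swap
    · exact ⟨0, fun h => absurd h ht⟩
    have key := AffineData.rho_al (D := D) (TS_refl ht) s
    by_cases h : t = s
    · obtain ⟨c, hc, he⟩ := key.2 (by rw [hN, h]; simp)
      exact ⟨-c, fun _ => ⟨fun h' => absurd h h', fun _ => by linarith, by rw [he, neg_smul]⟩⟩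
    · obtain ⟨c, hc, he⟩ := key.1 (by
        rw [hN]
        intro h'
        apply h
        have h'' : s * t * s⁻¹ = s := h'
        have : t = s⁻¹ * (s * t * s⁻¹) * s := by group
        rw [this, h'']; group)
      exact ⟨c, fun _ => ⟨fun _ => hc, fun h' => absurd h' h, he⟩⟩
  choose c hc using hex
  have h1 := Phi_prod (D.rho s) (TS cs K) D.al (fun t => s * t * s⁻¹)
    (fun t ht => (mem_TS hfin).2 (IsLongest.conj_mem hsc ((mem_TS hfin).1 ht)))
    (fun t _ t' _ h => by simpa using h) c (fun t ht => (hc t ht).2.2)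
  have h2 := Phi_prod_sq (D.rho s) (rho_sq hsr) Delta_ne h1
  have h3 : ∏ t ∈ TS cs K, c t < 0 := by
    have hsTS : s ∈ TS cs K := (mem_TS hfin).2 hsT
    rw [← Finset.mul_prod_erase _ _ hsTS]
    refine mul_neg_of_neg_of_pos ((hc s hsTS).2.1 rfl) (Finset.prod_pos fun t ht => ?_)
    rw [Finset.mem_erase] at ht
    exact (hc t ht.2).1 ht.1
  have h4 : ∏ t ∈ TS cs K, c t = -1 := by nlinarith
  rw [h4, neg_one_smul] at h1
  exact h1

theorem sgn_mul (D : AffineData cs) (x y : W) :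
    (-1 : ℚ) ^ cs.length (x * y) = (-1) ^ cs.length x * (-1) ^ cs.length y := by
  rw [← AffineData.det_rho (D := D), ← AffineData.det_rho (D := D), ← AffineData.det_rho (D := D),
    AffineData.rho_mul, map_mul]

theorem sgn_refl (D : AffineData cs) {t : W} (ht : cs.IsReflection t) :
    (-1 : ℚ) ^ cs.length t = -1 := by
  rw [← AffineData.det_rho (D := D), AffineData.det_rho_refl ht]

theorem Delta_rho (hK : K ⊆ Set.range cs.simple) (hfin : (Subgroup.closure K : Set W).Finite)
    {h : W} (hh : h ∈ Subgroup.closure K) :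
    Phi (D.rho h) (Delta D K) = (-1 : ℚ) ^ cs.length h • Delta D K := by
  induction hh using Subgroup.closure_induction_left with
  | one => rw [AffineData.rho_one, Phi_one]; simp
  | mul_left x hx y hy ih =>
    rw [AffineData.rho_mul, Phi_mul, ih, map_smul, Delta_simple hK hfin hx, sgn_mul D,
      sgn_refl D (simple_mem_Tset cs hK hx).1]
    simp
  | inv_mul_cancel x hx y hy ih =>
    have : x⁻¹ = x := (simple_mem_Tset cs hK hx).1.inv
    rw [this, AffineData.rho_mul, Phi_mul, ih, map_smul, Delta_simple hK hfin hx, sgn_mul D,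
      sgn_refl D (simple_mem_Tset cs hK hx).1]
    simp

theorem Delta_dvd (hfin : (Subgroup.closure K : Set W).Finite)
    {p : MvPolynomial (Fin D.rank) ℚ} (hp : ∀ t ∈ TS cs K, Phi (D.rho t) p = -p) :
    Delta D K ∣ p := by
  refine Finset.prod_dvd_of_isRelPrime ?_ fun t ht =>
    lin_dvd_anti (AffineData.rho_refl_sub (TS_refl ht)) (hp t ht)
  intro t ht t' ht' hne
  refine (lin_irred (AffineData.al_ne (TS_refl ht))).isRelPrime_iff_not_dvd.2 fun hd => ?_
  obtain ⟨c, hc⟩ := lin_dvd_lin hd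
  refine hne (AffineData.rho_unip (TS_refl ht) (TS_refl ht') ?_ hc)
  have h1 := ((mem_TS hfin).1 ht).2
  have h2 := ((mem_TS hfin).1 ht').2
  have : Finite ↥(Subgroup.closure K) := hfin.to_subtype
  have h3 := isOfFinOrder_of_finite (⟨t * t', mul_mem h1 h2⟩ : ↥(Subgroup.closure K))
  exact Submonoid.isOfFinOrder_coe.2 h3

theorem Delta_T {τ : MulAut W} {T : Module.End ℚ (Fin D.rank → ℚ)} {L : Set W}
    (H : TwData D L τ T) (hKL : K ⊆ L) (hτK : ∀ x ∈ Subgroup.closure K, τ x ∈ Subgroup.closure K)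
    (hfin : (Subgroup.closure K : Set W).Finite) : Phi T (Delta D K) = Delta D K := by
  have hTK : ∀ t ∈ TS cs K, t ∈ Tset cs L := fun t ht =>
    ⟨TS_refl ht, Subgroup.closure_mono hKL ((mem_TS hfin).1 ht).2⟩
  have hex : ∀ t, ∃ c : ℚ, t ∈ TS cs K → 0 < c ∧ T (D.al t) = c • D.al (τ t) := by
    intro t
    by_cases ht : t ∈ TS cs K
    · obtain ⟨c, hc⟩ := H.T_al t (hTK t ht)
      exact ⟨c, fun _ => hc⟩
    · exact ⟨0, fun h => absurd h ht⟩
  choose c hc using hex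
  have h1 := Phi_prod T (TS cs K) D.al τ
    (fun t ht => (mem_TS hfin).2 ⟨H.τ_refl t (TS_refl ht), hτK _ ((mem_TS hfin).1 ht).2⟩)
    (fun t _ t' _ h => τ.injective h) c (fun t ht => (hc t ht).2)
  have h2 := Phi_prod_sq T H.T_sq Delta_ne h1
  have h3 : 0 < ∏ t ∈ TS cs K, c t := Finset.prod_pos fun t ht => (hc t ht).1
  have h4 : ∏ t ∈ TS cs K, c t = 1 := by nlinarith
  rw [h4, one_smul] at h1
  exact h1

end Disc


section Trace
open MvPolynomial
variable {cs : CoxeterSystem M W} {D : AffineData cs} {K L : Set W} {τ : MulAut W}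
  {T : Module.End ℚ (Fin D.rank → ℚ)}

def Santi (D : AffineData cs) (K : Set W) (T : Module.End ℚ (Fin D.rank → ℚ)) (n : ℕ) :
    Module.End ℚ (Hn D.rank n) :=
  ∑ h ∈ SG K, (-1 : ℚ) ^ cs.length h • PhiL n (D.rho h * T)

def Ssym (D : AffineData cs) (K : Set W) (T : Module.End ℚ (Fin D.rank → ℚ)) (n : ℕ) :
    Module.End ℚ (Hn D.rank n) :=
  ∑ h ∈ SG K, PhiL n (D.rho h * T)

theorem Santi_coe (n : ℕ) (p : Hn D.rank n) :
    ((Santi D K T n p : Hn D.rank n) : MvPolynomial (Fin D.rank) ℚ) =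
      ∑ h ∈ SG K, (-1 : ℚ) ^ cs.length h • Phi (D.rho h * T) p := by
  rw [Santi, LinearMap.sum_apply, Submodule.coe_sum]
  rfl

theorem Ssym_coe (n : ℕ) (p : Hn D.rank n) :
    ((Ssym D K T n p : Hn D.rank n) : MvPolynomial (Fin D.rank) ℚ) =
      ∑ h ∈ SG K, Phi (D.rho h * T) p := by
  rw [Ssym, LinearMap.sum_apply, Submodule.coe_sum]
  rfl

theorem Santi_anti (hfin : (Subgroup.closure K : Set W).Finite) (n : ℕ) (p : Hn D.rank n)
    {t : W} (ht : t ∈ TS cs K) :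
    Phi (D.rho t) (Santi D K T n p : Hn D.rank n) =
      -((Santi D K T n p : Hn D.rank n) : MvPolynomial (Fin D.rank) ℚ) := by
  have htr := TS_refl ht
  have htc := ((mem_TS hfin).1 ht).2
  rw [Santi_coe, map_sum, ← Finset.sum_neg_distrib]
  refine Finset.sum_nbij' (fun h => t * h) (fun h => t * h) ?_ ?_ ?_ ?_ ?_
  · intro h hh; rw [mem_SG hfin] at hh ⊢; exact mul_mem htc hh
  · intro h hh; rw [mem_SG hfin] at hh ⊢; exact mul_mem htc hh
  · intro h _; simp only [← mul_assoc, htr.mul_self, one_mul]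
  · intro h _; simp only [← mul_assoc, htr.mul_self, one_mul]
  · intro h _
    rw [map_smul, ← Phi_mul, sgn_mul D, sgn_refl D htr, AffineData.rho_mul, mul_assoc]
    simp

theorem Santi_trace_lt (hfin : (Subgroup.closure K : Set W).Finite) {n : ℕ}
    (hn : n < (TS cs K).card) : LinearMap.trace ℚ _ (Santi D K T n) = 0 := by
  have : Santi D K T n = 0 := by
    refine LinearMap.ext fun p => Subtype.ext ?_
    exact homog_factor_lt (Delta_homog (D := D) (K := K)) (Santi D K T n p).2 hn
      (Delta_dvd hfin fun t ht => Santi_anti hfin n p ht)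
  rw [this, map_zero]

theorem Santi_trace (H : TwData D L τ T) (hKL : K ⊆ L)
    (hτK : ∀ x ∈ Subgroup.closure K, τ x ∈ Subgroup.closure K)
    (hfin : (Subgroup.closure K : Set W).Finite) (n : ℕ) :
    LinearMap.trace ℚ _ (Santi D K T ((TS cs K).card + n)) =
      LinearMap.trace ℚ _ (Ssym D K T n) := by
  have hmem : ∀ p ∈ Hn D.rank n,
      LinearMap.mulLeft ℚ (Delta D K) p ∈ Hn D.rank ((TS cs K).card + n) :=
    fun p hp => Delta_homog.mul hp
  refine trace_transfer ((LinearMap.mulLeft ℚ (Delta D K)).restrict hmem) ?_ _ _ ?_ ?_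
  · intro p p' h
    have h1 : Delta D K * (p : MvPolynomial (Fin D.rank) ℚ) = Delta D K * p' :=
      congrArg Subtype.val h
    exact Subtype.ext (mul_left_cancel₀ Delta_ne h1)
  · intro p
    apply Subtype.ext
    rw [Santi_coe]
    change ∑ h ∈ SG K, (-1 : ℚ) ^ cs.length h •
      Phi (D.rho h * T) (Delta D K * (p : MvPolynomial (Fin D.rank) ℚ)) =
      Delta D K * ((Ssym D K T n p : Hn D.rank n) : MvPolynomial (Fin D.rank) ℚ)
    rw [Ssym_coe, Finset.mul_sum]
    refine Finset.sum_congr rfl fun h hh => ?_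
    rw [mem_SG hfin] at hh
    have e : Phi (D.rho h * T) (Delta D K) = (-1 : ℚ) ^ cs.length h • Delta D K := by
      rw [Phi_mul, Delta_T H hKL hτK hfin, Delta_rho (hKL.trans H.hL) hfin hh]
    rw [map_mul, e, smul_mul_assoc, smul_smul, ← mul_pow]
    simp
  · intro p
    obtain ⟨g, hg, he⟩ := homog_factor (Delta_homog (D := D) (K := K)) (Santi D K T _ p).2
      (Delta_dvd hfin fun t ht => Santi_anti hfin _ p ht)
    exact ⟨⟨g, hg⟩, Subtype.ext he⟩

/-- the Molien-type series -/
def MS (D : AffineData cs) (K : Set W) (T : Module.End ℚ (Fin D.rank → ℚ)) : PowerSeries ℚ :=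
  PowerSeries.mk fun n => ((SG K).card : ℚ)⁻¹ * ∑ h ∈ SG K, tr n (D.rho h * T)

theorem tr_class (H : TwData D L τ T) (n : ℕ) (x h : W) :
    tr n (D.rho (x * h * (τ x)⁻¹) * T) = tr n (D.rho h * T) := by
  have e : D.rho (τ x)⁻¹ * T = T * D.rho x⁻¹ := by
    rw [H.T_rho, map_inv]
  rw [AffineData.rho_mul, AffineData.rho_mul, mul_assoc, e, mul_assoc, tr_mul_comm]
  rw [mul_assoc, mul_assoc, ← AffineData.rho_mul, inv_mul_cancel, AffineData.rho_one, mul_one]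

theorem sum_SG {K : Set W} (hfin : (Subgroup.closure K : Set W).Finite)
    [Fintype ↥(Subgroup.closure K)] (f : W → ℚ) :
    ∑ x : ↥(Subgroup.closure K), f x = ∑ x ∈ SG K, f x := by
  refine Finset.sum_nbij (fun x => (x : W)) ?_ ?_ ?_ ?_
  · intro x _; exact (mem_SG hfin).2 x.2
  · intro x _ y _ h; exact Subtype.ext h
  · intro x hx; exact ⟨⟨x, (mem_SG hfin).1 hx⟩, by simp⟩
  · intro x _; rfl

theorem sum_SG_sub {K K' : Set W} (hfin : (Subgroup.closure K : Set W).Finite) (hKK : K' ⊆ K)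
    [Fintype ↥(Subgroup.closure K)] (f : W → ℚ) :
    (∑ x : ↥(Subgroup.closure K), if (x : W) ∈ Subgroup.closure K' then f x else 0) =
      ∑ x ∈ SG K', f x := by
  have hfin' : (Subgroup.closure K' : Set W).Finite := hfin.subset (Subgroup.closure_mono hKK)
  rw [sum_SG hfin (fun x => if x ∈ Subgroup.closure K' then f x else 0), ← Finset.sum_filter]
  congr 1
  ext x
  rw [Finset.mem_filter, mem_SG hfin, mem_SG hfin']
  exact ⟨fun h => h.2, fun h => ⟨Subgroup.closure_mono hKK h, h⟩⟩

theorem MS_sum (H : TwData D L τ T) (A₀ : Finset W) (hKL : Kst τ A₀ ⊆ L) :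
    ∑ A ∈ A₀.powerset, (-1 : PowerSeries ℚ) ^ A.card * MS D (Kst τ A) T =
      PowerSeries.X ^ (TS cs (Kst τ A₀)).card * MS D (Kst τ A₀) T := by
  have hfin : (Subgroup.closure (Kst τ A₀) : Set W).Finite :=
    H.fin.subset (Subgroup.closure_mono hKL)
  have hτK : ∀ x ∈ Subgroup.closure (Kst τ A₀), τ x ∈ Subgroup.closure (Kst τ A₀) :=
    fun x hx => Kst_closure H.τ_inv A₀ hx
  letI : Fintype ↥(Subgroup.closure (Kst τ A₀)) := hfin.fintype
  ext n
  have h1 := solomon_class (cs := cs) H.τ_inv A₀ (hKL.trans H.hL) (fun h => tr n (D.rho h * T))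
    (fun x _ h _ => tr_class H n x h)
  have hl : (PowerSeries.coeff n) (∑ A ∈ A₀.powerset, (-1 : PowerSeries ℚ) ^ A.card *
      MS D (Kst τ A) T) = ∑ A ∈ A₀.powerset, (-1 : ℚ) ^ A.card * (((SG (Kst τ A)).card : ℚ)⁻¹ *
        ∑ h ∈ SG (Kst τ A), tr n (D.rho h * T)) := by
    rw [map_sum]
    refine Finset.sum_congr rfl fun A _ => ?_
    have : (-1 : PowerSeries ℚ) ^ A.card = PowerSeries.C ((-1 : ℚ) ^ A.card) := by simp
    rw [this, PowerSeries.coeff_C_mul, MS, PowerSeries.coeff_mk]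
  rw [hl]
  refine Eq.trans ?_ (h1.trans ?_)
  · refine Finset.sum_congr rfl fun A hA => ?_
    have hAA := Kst_mono τ (Finset.mem_powerset.1 hA)
    rw [sum_SG_sub hfin hAA (fun h => tr n (D.rho h * T)), sum_SG_sub hfin hAA (fun _ => (1 : ℚ))]
    simp
  · have hc : (Fintype.card ↥(Subgroup.closure (Kst τ A₀)) : ℚ) = ((SG (Kst τ A₀)).card : ℚ) := by
      have := sum_SG hfin (fun _ => (1 : ℚ))
      simpa using this
    have hs : ∑ g : ↥(Subgroup.closure (Kst τ A₀)), (-1 : ℚ) ^ cs.length (g : W) *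
        tr n (D.rho g * T) = LinearMap.trace ℚ _ (Santi D (Kst τ A₀) T n) := by
      rw [sum_SG hfin (fun g => (-1 : ℚ) ^ cs.length g * tr n (D.rho g * T)), Santi, map_sum]
      refine Finset.sum_congr rfl fun h _ => ?_
      rw [map_smul, smul_eq_mul]; rfl
    rw [hs, hc, PowerSeries.coeff_X_pow_mul']
    split_ifs with hn
    · obtain ⟨k, rfl⟩ := Nat.exists_eq_add_of_le hn
      rw [Santi_trace H hKL hτK hfin, Nat.add_sub_cancel_left, MS, PowerSeries.coeff_mk, Ssym,
        map_sum]
      rfl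
    · rw [Santi_trace_lt hfin (not_le.1 hn), mul_zero]

end Trace


/-! ### The product formula -/

section Molien
variable {cs : CoxeterSystem M W} {D : AffineData cs} {L : Set W} {τ : MulAut W}
  {T : Module.End ℚ (Fin D.rank → ℚ)}

theorem SG_empty : SG (∅ : Set W) = {1} := by
  ext x
  rw [mem_SG (by simp)]
  simp

theorem Kst_empty : Kst τ (∅ : Finset W) = ∅ := by
  ext x; simp [Kst]

theorem Pt_mul_MS (H : TwData D L τ T) (A₀ : Finset W) (hKL : Kst τ A₀ ⊆ L) :
    Pt cs τ (PowerSeries.X : PowerSeries ℚ) (Kst τ A₀) * MS D (Kst τ A₀) T = Mser T := by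
  induction A₀ using Finset.strongInduction with
  | H A₀ ih =>
  rcases A₀.eq_empty_or_nonempty with rfl | ⟨s, hs⟩
  · rw [Kst_empty, Pt, MS, SG_empty, Mser]
    simp [AffineData.rho_one]
    simp [Finset.filter_singleton]
  have hfin : (Subgroup.closure (Kst τ A₀) : Set W).Finite :=
    H.fin.subset (Subgroup.closure_mono hKL)
  have hK := hKL.trans H.hL
  have hlen : ∀ x ∈ Subgroup.closure (Kst τ A₀), cs.length (τ x) = cs.length x :=
    fun x hx => H.τ_len x (Subgroup.closure_mono hKL hx)
  obtain ⟨w, hw⟩ := exists_longest cs hK hfin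
  have hN : (TS cs (Kst τ A₀)).card = cs.length w := by
    rw [hw.length_eq]
    have : (Tset cs (Kst τ A₀)) = ↑(TS cs (Kst τ A₀)) := by
      ext t; rw [Finset.mem_coe, mem_TS hfin]
    rw [this, Set.ncard_coe_finset]
  have hNpos : 0 < cs.length w := by
    rw [← hN, Finset.card_pos]
    exact ⟨s, (mem_TS hfin).2 (simple_mem_Tset cs hK (Or.inl hs))⟩
  set X : PowerSeries ℚ := PowerSeries.X with hX
  have r2 := MS_sum H A₀ hKL
  have r1 := Qt_sum (cs := cs) X hK H.τ_inv hfin hlen hw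
  rw [hN] at r2
  have hmem : A₀ ∈ A₀.powerset := Finset.mem_powerset_self _
  rw [← Finset.add_sum_erase _ _ hmem] at r1 r2
  rw [Qt_self X hK hfin] at r1
  have r3 : Pt cs τ X (Kst τ A₀) * ∑ A ∈ A₀.powerset.erase A₀,
      (-1 : PowerSeries ℚ) ^ A.card * MS D (Kst τ A) T =
      (∑ A ∈ A₀.powerset.erase A₀, (-1 : PowerSeries ℚ) ^ A.card *
        Qt cs τ X (Kst τ A₀) (Kst τ A)) * Mser T := by
    rw [Finset.mul_sum, Finset.sum_mul]
    refine Finset.sum_congr rfl fun A hA => ?_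
    rw [Finset.mem_erase, Finset.mem_powerset] at hA
    rw [Pt_eq X hA.2 hK H.τ_inv hfin hlen,
      ← ih A (lt_of_le_of_ne hA.2 hA.1) ((Kst_mono τ hA.2).trans hKL)]
    ring
  have hne : (-1 : PowerSeries ℚ) ^ A₀.card - X ^ cs.length w ≠ 0 := by
    intro h
    have := congrArg PowerSeries.constantCoeff h
    simp [hX, zero_pow hNpos.ne'] at this
  apply mul_left_cancel₀ hne
  generalize (∑ A ∈ A₀.powerset.erase A₀,
      (-1 : PowerSeries ℚ) ^ A.card * MS D (Kst τ A) T) = S1 at *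
  generalize (∑ A ∈ A₀.powerset.erase A₀, (-1 : PowerSeries ℚ) ^ A.card *
        Qt cs τ X (Kst τ A₀) (Kst τ A)) = S2 at *
  linear_combination Pt cs τ X (Kst τ A₀) * r2 - r3 - Mser T * r1

theorem Pt_mul_MS' (H : TwData D L τ T) (hτ : ∀ s ∈ L, τ s ∈ L) :
    Pt cs τ (PowerSeries.X : PowerSeries ℚ) L * MS D L T = Mser T := by
  have hLf : L.Finite := H.fin.subset Subgroup.subset_closure
  have e : Kst τ hLf.toFinset = L := by
    ext s
    simp only [Kst, Set.Finite.mem_toFinset, Set.mem_setOf_eq]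
    refine ⟨fun h => h.elim id fun h => ?_, Or.inl⟩
    have := hτ _ h
    rwa [H.τ_inv] at this
  have := Pt_mul_MS H hLf.toFinset e.subset
  rwa [e] at this

theorem tw_one (hL : L ⊆ Set.range cs.simple) (hfin : (Subgroup.closure L : Set W).Finite) :
    TwData D L 1 1 where
  hL := hL
  fin := hfin
  τ_inv := fun _ => rfl
  τ_len := fun _ _ => rfl
  τ_refl := fun _ h => h
  T_sq := one_mul 1
  T_rho := fun h => by rw [one_mul, mul_one]; rfl
  T_al := fun t _ => ⟨1, one_pos, by simp⟩

theorem tw_conj (hL : L ⊆ Set.range cs.simple) (hfin : (Subgroup.closure L : Set W).Finite)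
    {w : W} (hw : IsLongest cs L w) :
    TwData D L (MulAut.conj w) (-(D.rho w)) where
  hL := hL
  fin := hfin
  τ_inv := fun x => by
    simp only [MulAut.conj_apply, hw.inv_eq, ← mul_assoc, hw.mul_self, one_mul]
    rw [mul_assoc, hw.mul_self, mul_one]
  τ_len := fun y hy => by
    rw [MulAut.conj_apply, hw.inv_eq, hw.length_conj hy]
  τ_refl := fun t h => h.conj w
  T_sq := by
    refine (neg_mul_neg (D.rho w : Module.End ℚ (Fin D.rank → ℚ)) (D.rho w)).trans ?_
    rw [← AffineData.rho_mul, hw.mul_self, AffineData.rho_one]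
  T_rho := fun h => by
    refine (neg_mul (D.rho w : Module.End ℚ (Fin D.rank → ℚ)) (D.rho h)).trans (Eq.trans ?_
      (mul_neg (D.rho (MulAut.conj w h) : Module.End ℚ (Fin D.rank → ℚ)) (D.rho w)).symm)
    rw [← AffineData.rho_mul, ← AffineData.rho_mul, MulAut.conj_apply,
      inv_mul_cancel_right]
  T_al := fun t ht => by
    obtain ⟨c, hc, he⟩ := (AffineData.rho_al (D := D) ht.1 w).2 (by
      rw [hw.N]; exact IsLongest.conj_mem hw.mem ht)
    refine ⟨c, hc, ?_⟩
    rw [LinearMap.neg_apply, he, neg_neg, MulAut.conj_apply]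

/-- `m_L`: the dimension of the `(-1)`-eigenspace of the longest element. -/
def mL (D : AffineData cs) (w : W) : ℕ :=
  Module.finrank ℚ (Module.End.eigenspace (D.rho w : Module.End ℚ (Fin D.rank → ℚ)) (-1))

end Molien


section Ident
variable {cs : CoxeterSystem M W} {D : AffineData cs} {L : Set W}

theorem map_Pt {R R' : Type} [CommRing R] [CommRing R'] (f : R →+* R') (τ : MulAut W) (q : R)
    (L : Set W) : f (Pt cs τ q L) = Pt cs τ (f q) L := by
  simp [Pt]

theorem Mser_neg (D : AffineData cs) (A : Module.End ℚ (Fin D.rank → ℚ)) :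
    PowerSeries.rescale (-1 : ℚ) (Mser A) = Mser (-A) := by
  ext n
  rw [PowerSeries.coeff_rescale, Mser, Mser, PowerSeries.coeff_mk, PowerSeries.coeff_mk, tr_neg]

theorem MS_neg (hfin : (Subgroup.closure L : Set W).Finite)
    {w : W} (hw : IsLongest cs L w) :
    PowerSeries.rescale (-1 : ℚ) (MS D L 1) = MS D L (-(D.rho w)) := by
  ext n
  rw [PowerSeries.coeff_rescale, MS, MS, PowerSeries.coeff_mk, PowerSeries.coeff_mk,
    mul_left_comm]
  congr 1
  rw [Finset.mul_sum]
  refine Finset.sum_nbij' (fun h => h * w) (fun h => h * w) ?_ ?_ ?_ ?_ ?_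
  · intro h hh; rw [mem_SG hfin] at hh ⊢; exact mul_mem hh hw.mem
  · intro h hh; rw [mem_SG hfin] at hh ⊢; exact mul_mem hh hw.mem
  · intro h _; simp only [mul_assoc, hw.mul_self, mul_one]
  · intro h _; simp only [mul_assoc, hw.mul_self, mul_one]
  · intro h _
    have e : (D.rho (h * w) : Module.End ℚ (Fin D.rank → ℚ)) * -(D.rho w) = -(D.rho h * 1) := by
      refine (mul_neg (D.rho (h * w) : Module.End ℚ (Fin D.rank → ℚ)) (D.rho w)).trans ?_
      rw [← AffineData.rho_mul, mul_assoc, hw.mul_self, mul_one, mul_one]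
    rw [e, tr_neg]

theorem ident_ps (hL : L ⊆ Set.range cs.simple) (hfin : (Subgroup.closure L : Set W).Finite)
    {w : W} (hw : IsLongest cs L w) :
    Pt cs (MulAut.conj w) (PowerSeries.X : PowerSeries ℚ) L * (1 - PowerSeries.X) ^ mL D w =
      Pt cs 1 (-PowerSeries.X : PowerSeries ℚ) L * (1 + PowerSeries.X) ^ mL D w := by
  set X : PowerSeries ℚ := PowerSeries.X with hX
  set σ := PowerSeries.rescale (-1 : ℚ) with hσ
  have hσX : σ X = -X := by rw [hσ, hX, PowerSeries.rescale_X]; simp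
  have a1 := Pt_mul_MS' (tw_conj (D := D) hL hfin hw) (fun s hs => by
    rw [MulAut.conj_apply, hw.inv_eq]; exact hw.conj_L hs)
  have a2 := congrArg σ (Pt_mul_MS' (tw_one (D := D) hL hfin) (fun s hs => hs))
  rw [map_mul, map_Pt, ← hX, hσX, MS_neg hfin hw] at a2
  have hTT : (D.rho w : Module.End ℚ (Fin D.rank → ℚ)) * D.rho w = 1 := by
    rw [← AffineData.rho_mul, hw.mul_self, AffineData.rho_one]
  obtain ⟨b1, b2, -⟩ := Mser_invol (D.rho w) hTT
  obtain ⟨-, c2, -⟩ := Mser_invol (1 : Module.End ℚ (Fin D.rank → ℚ)) (one_mul 1)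
  have h0 : Module.End.eigenspace (1 : Module.End ℚ (Fin D.rank → ℚ)) (-1) = ⊥ := by
    rw [Submodule.eq_bot_iff]
    intro v hv
    have h1 : v = (-1 : ℚ) • v := Module.End.mem_eigenspace_iff.1 hv
    funext i
    have := congrFun h1 i
    simp only [Pi.smul_apply, smul_eq_mul] at this
    simp only [Pi.zero_apply]
    linarith
  rw [h0, finrank_bot, pow_zero, mul_one, Nat.sub_zero] at c2
  have b3 := congrArg σ b2
  have c3 := congrArg σ c2
  simp only [map_mul, map_pow, map_sub, map_add, map_one, ← hX, hσX] at b3 c3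
  rw [Mser_neg D] at b3
  change _ ≤ D.rank at b1
  change _ * ((1 - -X) ^ (D.rank - mL D w) * (1 + -X) ^ mL D w) = 1 at b3
  have hr : D.rank = mL D w + (D.rank - mL D w) := (Nat.add_sub_of_le b1).symm
  rw [← hX] at a1
  replace c3 : σ (Mser (1 : Module.End ℚ (Fin D.rank → ℚ))) * ((1 - -X) ^ mL D w *
      (1 - -X) ^ (D.rank - mL D w)) = 1 := by
    rw [← pow_add, ← hr]; exact c3
  generalize D.rank - mL D w = k at *
  rw [← a1] at b3
  rw [← a2] at c3
  have hne : MS D L (-(D.rho w)) * (1 - -X) ^ k ≠ 0 := by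
    intro h
    have : (1 : PowerSeries ℚ) = 0 := by
      rw [← b3]
      linear_combination Pt cs (MulAut.conj w) X L * (1 + -X) ^ mL D w * h
    exact one_ne_zero this
  apply mul_left_cancel₀ hne
  linear_combination b3 - c3

theorem ident_poly (hL : L ⊆ Set.range cs.simple) (hfin : (Subgroup.closure L : Set W).Finite)
    {w : W} (hw : IsLongest cs L w) :
    Pt cs (MulAut.conj w) (Polynomial.X : Polynomial ℚ) L * (1 - Polynomial.X) ^ mL D w =
      Pt cs 1 (-Polynomial.X : Polynomial ℚ) L * (1 + Polynomial.X) ^ mL D w := by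
  apply Polynomial.coe_injective
  have := ident_ps (D := D) hL hfin hw
  have e : ∀ p : Polynomial ℚ, (p : PowerSeries ℚ) = Polynomial.coeToPowerSeries.ringHom p :=
    fun _ => rfl
  rw [e, e, map_mul, map_mul, map_Pt, map_Pt]
  simp only [map_pow, map_sub, map_add, map_one, map_neg]
  have hx : (Polynomial.coeToPowerSeries.ringHom (Polynomial.X : Polynomial ℚ)) =
    (PowerSeries.X : PowerSeries ℚ) := Polynomial.coe_X
  rw [hx]
  exact this

theorem ident_K (hL : L ⊆ Set.range cs.simple) (hfin : (Subgroup.closure L : Set W).Finite)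
    {w : W} (hw : IsLongest cs L w) :
    Pt cs (MulAut.conj w) qK L * (1 - qK) ^ mL D w =
      Pt cs 1 (-qK) L * (1 + qK) ^ mL D w := by
  have := congrArg (algebraMap (Polynomial ℚ) K) (ident_poly (D := D) hL hfin hw)
  rw [map_mul, map_mul, map_Pt, map_Pt] at this
  simp only [map_pow, map_sub, map_add, map_one, map_neg, RatFunc.algebraMap_X] at this
  exact this

theorem Pt_zero (hfin : (Subgroup.closure L : Set W).Finite) (τ : MulAut W) :
    Pt cs τ (0 : ℚ) L = 1 := by
  rw [Pt, Finset.sum_eq_single 1]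
  · simp
  · intro x _ hx
    rw [zero_pow]
    rwa [Ne, cs.length_eq_zero_iff]
  · intro h
    exfalso; apply h
    rw [Finset.mem_filter, mem_SG hfin]
    exact ⟨one_mem _, map_one τ⟩

theorem Pt_ne (hfin : (Subgroup.closure L : Set W).Finite) (τ : MulAut W) (p : Polynomial ℚ)
    (hp : p.eval 0 = 0) : Pt cs τ (algebraMap (Polynomial ℚ) K p) L ≠ 0 := by
  rw [← map_Pt]
  intro h
  have h2 : Pt cs τ p L = 0 := (map_eq_zero_iff _ (RatFunc.algebraMap_injective ℚ)).1 h
  have h3 := congrArg (Polynomial.evalRingHom (0 : ℚ)) h2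
  rw [map_Pt, map_zero] at h3
  have h4 : (Polynomial.evalRingHom (0 : ℚ)) p = 0 := hp
  rw [h4, Pt_zero hfin] at h3
  exact one_ne_zero h3

theorem Pt_ne_q (hfin : (Subgroup.closure L : Set W).Finite) (τ : MulAut W) :
    Pt cs τ qK L ≠ 0 := by
  have := Pt_ne (cs := cs) hfin τ Polynomial.X (by simp)
  rwa [RatFunc.algebraMap_X] at this

theorem Pt_ne_negq (hfin : (Subgroup.closure L : Set W).Finite) (τ : MulAut W) :
    Pt cs τ (-qK) L ≠ 0 := by
  have := Pt_ne (cs := cs) hfin τ (-Polynomial.X) (by simp)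
  rwa [map_neg, RatFunc.algebraMap_X] at this

theorem sgn_longest {w : W} (hw : IsLongest cs L w) :
    (-1 : ℚ) ^ cs.length w = (-1) ^ mL D w := by
  have hTT : (D.rho w : Module.End ℚ (Fin D.rank → ℚ)) * D.rho w = 1 := by
    rw [← AffineData.rho_mul, hw.mul_self, AffineData.rho_one]
  rw [← AffineData.det_rho (D := D)]
  exact (Mser_invol (D.rho w) hTT).2.2

end Ident

section partE

variable {cs : CoxeterSystem M W} {D : AffineData cs}

theorem J_sub (D : AffineData cs) : D.Jset ⊆ Set.range cs.simple := fun _ h => h.1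

theorem J_fin (D : AffineData cs) : (Subgroup.closure D.Jset : Set W).Finite := D.hWJ_fin

theorem wJ_longest (D : AffineData cs) : IsLongest cs D.Jset D.wJ :=
  isLongest_of_max cs (J_sub D) D.hwJ_mem D.hwJ_max

theorem st_len_le (D : AffineData cs) (x : W) : cs.length (D.st x) ≤ cs.length x := by
  have key : ∀ ω : List B, ∃ ω' : List B, ω'.length = ω.length ∧
      D.st (cs.wordProd ω) = cs.wordProd ω' := by
    intro ω
    induction ω with
    | nil => exact ⟨[], rfl, by simp⟩
    | cons i ω ih =>
      obtain ⟨ω', h1, h2⟩ := ih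
      obtain ⟨j, hj⟩ := D.hst_S (cs.simple i) ⟨i, rfl⟩
      refine ⟨j :: ω', by simp [h1], ?_⟩
      rw [cs.wordProd_cons, cs.wordProd_cons, map_mul, h2, hj]
  obtain ⟨ω, h1, h2⟩ := cs.exists_isReduced x
  obtain ⟨ω', h3, h4⟩ := key ω
  rw [h2, h4]
  have := cs.length_wordProd_le ω'
  have h5 : cs.length (cs.wordProd ω) = ω.length := h1
  omega

theorem st_len (D : AffineData cs) (x : W) : cs.length (D.st x) = cs.length x := by
  apply le_antisymm (st_len_le D x)
  have := st_len_le D (D.st x)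
  rwa [D.hst_inv] at this

theorem len_J (D : AffineData cs) {s : W} (hs : s ∈ D.Jset) : cs.length s = 1 := by
  obtain ⟨i, rfl⟩ := hs.1
  exact cs.length_simple i

theorem sq_J (D : AffineData cs) {s : W} (hs : s ∈ D.Jset) : s * s = 1 := by
  obtain ⟨i, rfl⟩ := hs.1
  exact cs.simple_mul_simple_self i

theorem refl_J (D : AffineData cs) {s : W} (hs : s ∈ D.Jset) : cs.IsReflection s := by
  obtain ⟨i, rfl⟩ := hs.1
  exact cs.isReflection_simple i

theorem cl_J (D : AffineData cs) {s : W} (hs : s ∈ D.Jset) : s ∈ Subgroup.closure D.Jset :=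
  Subgroup.subset_closure hs

theorem mu_rmin {mu : W} (hmu : D.IsDominant mu) : RMin cs D.Jset mu := by
  intro s hs h
  rw [mem_Ninv_inv_refl cs (refl_J D hs)] at h
  have h1 : mu * D.wJ = (mu * s) * (s * D.wJ) := by
    rw [mul_assoc, ← mul_assoc s s, sq_J D hs, one_mul]
  have h2 := cs.length_mul_le (mu * s) (s * D.wJ)
  rw [← h1, hmu.2] at h2
  have h3 := (wJ_longest D).length_le (mul_mem (cl_J D hs) (wJ_longest D).mem)
  omega

theorem d_desc {mu : W} (hmu : D.IsDominant mu) {s : W} (hs : s ∈ D.Jset) :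
    s ∈ Ninv cs (mu * D.wJ) := by
  have hw := wJ_longest D
  rw [mem_Ninv_simple cs hs.1, ← st_len D (s * (mu * D.wJ)), map_mul, map_mul, D.hst_Lam mu hmu.1,
    D.hst_J _ hw.mem, D.hst_J s (cl_J D hs)]
  have e1 : (D.wJ * s * D.wJ) * ((D.wJ * mu * D.wJ⁻¹)⁻¹ * (D.wJ * D.wJ * D.wJ)) =
      (mu * (D.wJ * (D.wJ * s * D.wJ)))⁻¹ := by
    have hs' : s⁻¹ = s := inv_eq_of_mul_eq_one_right (sq_J D hs)
    simp only [mul_inv_rev, inv_inv, hw.inv_eq, hw.mul_self, hs', one_mul]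
    simp only [mul_assoc]
    rw [← mul_assoc D.wJ D.wJ, hw.mul_self, one_mul]
    rw [mul_one, ← mul_assoc D.wJ D.wJ mu⁻¹, hw.mul_self, one_mul]
  rw [e1, cs.length_inv]
  have hs' := hw.conj_L hs
  rw [(mu_rmin hmu).length_mul (J_sub D) (mul_mem hw.mem (cl_J D hs')), hmu.2]
  have := hw.length_mul_right (cl_J D hs')
  have := len_J D hs'
  omega

theorem b_lmin {mu b : W} (hb_mem : b ∈ D.DCoset mu)
    (hb_min : ∀ y ∈ D.DCoset mu, cs.length b ≤ cs.length y) : LMin cs D.Jset b := by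
  intro s hs h
  obtain ⟨p, hp, v, hv, e⟩ := hb_mem
  rw [mem_Ninv_simple cs hs.1] at h
  have := hb_min (s * b) ⟨s * p, mul_mem (cl_J D hs) hp, v, hv, by rw [e]; simp only [mul_assoc]⟩
  omega

theorem b_rmin {mu b : W} (hb_mem : b ∈ D.DCoset mu)
    (hb_min : ∀ y ∈ D.DCoset mu, cs.length b ≤ cs.length y) : RMin cs D.Jset b := by
  intro s hs h
  obtain ⟨p, hp, v, hv, e⟩ := hb_mem
  rw [mem_Ninv_inv_refl cs (refl_J D hs)] at h
  have := hb_min (b * s) ⟨p, hp, v * s, mul_mem hv (cl_J D hs), by rw [e]; simp only [mul_assoc]⟩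
  omega

theorem H_sub_J (D : AffineData cs) (b : W) : D.Hset b ⊆ D.Jset := fun _ h => h.1

theorem LMin.length_mul' {L : Set W} (hL : L ⊆ Set.range cs.simple) {u v : W}
    (h : LMin cs L u) (hv : v ∈ Subgroup.closure L) :
    cs.length (v * u) = cs.length v + cs.length u := by
  have h' : RMin cs L u⁻¹ := by
    intro s hs; rw [inv_inv]; exact h s hs
  have := h'.length_mul hL (inv_mem hv)
  rw [← mul_inv_rev, cs.length_inv, cs.length_inv, cs.length_inv] at this
  omega

/-- If `s ∈ J` and `b s b⁻¹ ∈ W_J` then `b s b⁻¹ ∈ H`. -/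
theorem mem_H {b s : W} (hl : LMin cs D.Jset b) (hr : RMin cs D.Jset b) (hs : s ∈ D.Jset)
    (h : b * s * b⁻¹ ∈ Subgroup.closure D.Jset) : b * s * b⁻¹ ∈ D.Hset b := by
  refine ⟨mem_of_length_one cs (J_sub D) ?_ h, ⟨s, hs, rfl⟩⟩
  have h1 := hl.length_mul' (J_sub D) h
  have h2 := hr.length_mul (J_sub D) (cl_J D hs)
  rw [inv_mul_cancel_right, h2, len_J D hs] at h1
  omega

theorem ub_rmin {b u : W} (hl : LMin cs D.Jset b) (hr : RMin cs D.Jset b)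
    (hu : u ∈ Subgroup.closure D.Jset) (hmin : RMin cs (D.Hset b) u) :
    RMin cs D.Jset (u * b) := by
  intro s hs h
  rw [Ninv_inv_iff', mem_Ninv_mul] at h
  have e : u⁻¹ * (u * b * s * (u * b)⁻¹) * u = b * s * b⁻¹ := by group
  have hn : b * s * b⁻¹ ∉ Ninv cs b := hr.disj (J_sub D) s (cl_J D hs)
  rw [e] at h
  rcases h with ⟨h, -⟩ | ⟨-, h⟩
  · have h1 := Ninv_subset cs (J_sub D) hu h
    have h2 : b * s * b⁻¹ ∈ Subgroup.closure D.Jset := by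
      rw [← e]; exact mul_mem (mul_mem (inv_mem hu) h1) hu
    have h3 := mem_H hl hr hs h2
    apply hmin _ h3
    rw [Ninv_inv_iff']
    convert h using 1
    group
  · exact hn h

theorem conj_H {b h : W} (hh : h ∈ Subgroup.closure (D.Hset b)) :
    b⁻¹ * h * b ∈ Subgroup.closure D.Jset := by
  induction hh using Subgroup.closure_induction with
  | mem x hx =>
    obtain ⟨-, s, hs, rfl⟩ := hx
    have : b⁻¹ * (b * s * b⁻¹) * b = s := by group
    simp only [this]
    exact cl_J D hs
  | one => simp
  | mul x y _ _ hx hy =>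
    have : b⁻¹ * (x * y) * b = (b⁻¹ * x * b) * (b⁻¹ * y * b) := by group
    rw [this]; exact mul_mem hx hy
  | inv x _ hx =>
    have : b⁻¹ * x⁻¹ * b = (b⁻¹ * x * b)⁻¹ := by group
    rw [this]; exact inv_mem hx

theorem mu_eq {mu b wH : W} (hmu : D.IsDominant mu) (hb_mem : b ∈ D.DCoset mu)
    (hb_min : ∀ y ∈ D.DCoset mu, cs.length b ≤ cs.length y)
    (hH : IsLongest cs (D.Hset b) wH) : mu = D.wJ * wH * b := by
  have hl := b_lmin hb_mem hb_min
  have hr := b_rmin hb_mem hb_min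
  have hHs : D.Hset b ⊆ Set.range cs.simple := (H_sub_J D b).trans (J_sub D)
  have hHJ : Subgroup.closure (D.Hset b) ≤ Subgroup.closure D.Jset :=
    Subgroup.closure_mono (H_sub_J D b)
  obtain ⟨p, hp, v, hv, e⟩ := hb_mem
  obtain ⟨h, hh, u, humin, e2⟩ := exists_rmin cs (D.Hset b) p⁻¹
  have hu : u ∈ Subgroup.closure D.Jset := by
    have : u = p⁻¹ * h⁻¹ := by rw [e2]; group
    rw [this]
    exact mul_mem (inv_mem hp) (inv_mem (hHJ hh))
  have hub := ub_rmin hl hr hu humin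
  have hmub : mu = u * b := by
    refine ((mu_rmin hmu).unique (J_sub D) hub (one_mem _)
      (mul_mem (conj_H hh) (inv_mem hv)) ?_).1
    calc mu * 1 = p⁻¹ * b * v⁻¹ := by rw [e]; group
      _ = _ := by rw [e2]; group
  have hfull : u * wH = D.wJ := by
    apply (wJ_longest D).eq_of_desc (mul_mem hu (hHJ hH.mem))
    intro s hs
    have hd := d_desc hmu hs
    rw [mem_Ninv_mul, (wJ_longest D).N] at hd
    have hconj : u⁻¹ * s * u ∈ Subgroup.closure D.Jset :=
      mul_mem (mul_mem (inv_mem hu) (cl_J D hs)) hu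
    rw [mem_Ninv_mul, hH.N]
    rcases hd with ⟨hd, -⟩ | ⟨hd0, hd⟩
    · left
      rw [hmub, mem_Ninv_mul] at hd
      have hsu : s ∈ Ninv cs u := by
        rcases hd with ⟨hd, -⟩ | ⟨-, hd⟩
        · exact hd
        · exact absurd hd (hl.disj (J_sub D) _ hconj)
      refine ⟨hsu, fun ht => ?_⟩
      have := humin.disj hHs _ ht.2
      apply this
      convert hsu using 1
      group
    · right
      have ht1 : cs.length (mu⁻¹ * s * mu) = 1 := by
        have a1 := (mu_rmin hmu).length_mul (J_sub D) hd.2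
        have e3 : mu * (mu⁻¹ * s * mu) = s * mu := by group
        rw [e3] at a1
        have a2 := cs.length_mul_le s mu
        have a3 := len_J D hs
        have a4 : cs.length (mu⁻¹ * s * mu) ≠ 0 := by
          rw [Ne, cs.length_eq_zero_iff]
          intro h0
          have : s = 1 := by
            have : s = mu * (mu⁻¹ * s * mu) * mu⁻¹ := by group
            rw [this, h0]; group
          rw [this, cs.length_one] at a3
          omega
        omega
      have htJ := mem_of_length_one cs (J_sub D) ht1 hd.2
      have e4 : b * (mu⁻¹ * s * mu) * b⁻¹ = u⁻¹ * s * u := by rw [hmub]; group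
      have hrH := mem_H hl hr htJ (by rw [e4]; exact hconj)
      rw [e4] at hrH
      refine ⟨fun hsu => ?_, simple_mem_Tset cs hHs hrH⟩
      apply humin _ hrH
      rw [Ninv_inv_iff']
      convert hsu using 1
      group
  rw [← hfull, mul_assoc u, hH.mul_self, mul_one]
  exact hmub

theorem eq_of_Lam (D : AffineData cs) {x y : W} (hx : x ∈ Subgroup.closure D.Jset)
    (hy : y ∈ Subgroup.closure D.Jset) (h : x * y⁻¹ ∈ D.Lam) : x = y :=
  (D.hs0_hyper x).unique ⟨hx, by simp⟩ ⟨hy, h⟩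

theorem Lam_conj (D : AffineData cs) (x : W) {l : W} (h : l ∈ D.Lam) : x * l * x⁻¹ ∈ D.Lam :=
  D.hLam_normal.conj_mem _ h x


theorem b_eq {mu b wH : W} (hmu : D.IsDominant mu) (hb_mem : b ∈ D.DCoset mu)
    (hb_min : ∀ y ∈ D.DCoset mu, cs.length b ≤ cs.length y)
    (hH : IsLongest cs (D.Hset b) wH) : b = wH * D.wJ * mu := by
  rw [mu_eq hmu hb_mem hb_min hH]
  simp only [mul_assoc]
  rw [← mul_assoc D.wJ D.wJ, (wJ_longest D).mul_self, one_mul, ← mul_assoc wH wH, hH.mul_self,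
    one_mul]

theorem wH_mem {mu b wH : W} (hmu : D.IsDominant mu) (hb_mem : b ∈ D.DCoset mu)
    (hb_min : ∀ y ∈ D.DCoset mu, cs.length b ≤ cs.length y)
    (hH : IsLongest cs (D.Hset b) wH) : wH ∈ Subgroup.closure D.Jset :=
  Subgroup.closure_mono (H_sub_J D b) hH.mem

theorem pr_b {mu b wH : W} (hmu : D.IsDominant mu) (hb_mem : b ∈ D.DCoset mu)
    (hb_min : ∀ y ∈ D.DCoset mu, cs.length b ≤ cs.length y)
    (hH : IsLongest cs (D.Hset b) wH) : D.pr b = wH * D.wJ := by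
  refine (D.hs0_hyper b).unique (D.hpr b) ⟨mul_mem (wH_mem hmu hb_mem hb_min hH)
    (wJ_longest D).mem, ?_⟩
  rw [show b * (wH * D.wJ)⁻¹ = (wH * D.wJ) * mu * (wH * D.wJ)⁻¹ by
    rw [← b_eq hmu hb_mem hb_min hH]]
  exact Lam_conj D _ hmu.1

theorem conj_b {mu b wH : W} (hmu : D.IsDominant mu) (hb_mem : b ∈ D.DCoset mu)
    (hb_min : ∀ y ∈ D.DCoset mu, cs.length b ≤ cs.length y)
    (hH : IsLongest cs (D.Hset b) wH) {x : W} (hx : x ∈ Subgroup.closure (D.Hset b)) :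
    b⁻¹ * x * b = D.wJ * wH * x * wH * D.wJ := by
  have hwJ := wJ_longest D
  have hwH := wH_mem hmu hb_mem hb_min hH
  have hxJ : x ∈ Subgroup.closure D.Jset := Subgroup.closure_mono (H_sub_J D b) hx
  have hg : D.wJ * wH * x * wH * D.wJ ∈ Subgroup.closure D.Jset :=
    mul_mem (mul_mem (mul_mem (mul_mem hwJ.mem hwH) hxJ) hwH) hwJ.mem
  apply eq_of_Lam D (conj_H hx) hg
  have hinv : D.wJ * wH = (wH * D.wJ)⁻¹ := by rw [mul_inv_rev, hwJ.inv_eq, hH.inv_eq]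
  have e : b⁻¹ * x * b * (D.wJ * wH * x * wH * D.wJ)⁻¹ =
      mu⁻¹ * ((D.wJ * wH * x * wH * D.wJ) * mu * (D.wJ * wH * x * wH * D.wJ)⁻¹) := by
    have e1 : D.wJ * wH * x * wH * D.wJ = (wH * D.wJ)⁻¹ * x * (wH * D.wJ) := by
      rw [hinv]; simp only [mul_assoc]
    rw [e1]
    conv_lhs => rw [b_eq hmu hb_mem hb_min hH]
    group
  rw [e]
  exact mul_mem (inv_mem hmu.1) (Lam_conj D _ hmu.1)

theorem st_Hstar {b : W} {x : W} : x ∈ Subgroup.closure (D.Hstar b) ↔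
    D.st x ∈ Subgroup.closure (D.Hset b) := by
  have e : Subgroup.closure (D.Hstar b) = (Subgroup.closure (D.Hset b)).map D.st.toMonoidHom :=
    (MonoidHom.map_closure D.st.toMonoidHom (D.Hset b)).symm
  rw [e, Subgroup.mem_map]
  constructor
  · rintro ⟨y, hy, rfl⟩
    have : D.st (D.st.toMonoidHom y) = y := D.hst_inv y
    rw [this]; exact hy
  · intro h
    exact ⟨_, h, D.hst_inv x⟩

theorem Hstar_sub_J {b : W} : D.Hstar b ⊆ D.Jset := by
  rintro _ ⟨s, hs, rfl⟩
  rw [D.hst_J s (cl_J D hs.1)]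
  exact (wJ_longest D).conj_L hs.1

theorem wHs_longest {mu b wH : W} (hmu : D.IsDominant mu) (hb_mem : b ∈ D.DCoset mu)
    (hb_min : ∀ y ∈ D.DCoset mu, cs.length b ≤ cs.length y)
    (hH : IsLongest cs (D.Hset b) wH) : IsLongest cs (D.Hstar b) (D.wJ * wH * D.wJ) := by
  have e : D.wJ * wH * D.wJ = D.st wH := (D.hst_J _ (wH_mem hmu hb_mem hb_min hH)).symm
  rw [e]
  apply isLongest_of_max cs (Hstar_sub_J.trans (J_sub D))
  · rw [st_Hstar, D.hst_inv]; exact hH.mem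
  · intro u hu
    rw [st_len, ← st_len D u]
    exact hH.length_le (st_Hstar.1 hu)

theorem eps_iff {mu b wH : W} (hmu : D.IsDominant mu) (hb_mem : b ∈ D.DCoset mu)
    (hb_min : ∀ y ∈ D.DCoset mu, cs.length b ≤ cs.length y)
    (hH : IsLongest cs (D.Hset b) wH) {x : W} (hx : x ∈ Subgroup.closure (D.Hstar b)) :
    b⁻¹ * D.st x * b = x ↔ MulAut.conj (D.wJ * wH * D.wJ) x = x := by
  rw [conj_b hmu hb_mem hb_min hH (st_Hstar.1 hx),
    D.hst_J x (Subgroup.closure_mono Hstar_sub_J hx), MulAut.conj_apply,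
    (wHs_longest hmu hb_mem hb_min hH).inv_eq]
  simp only [mul_assoc]


theorem st_iff {x : W} (hx : x ∈ Subgroup.closure D.Jset) :
    D.st x = x ↔ MulAut.conj D.wJ x = x := by
  rw [D.hst_J x hx, MulAut.conj_apply, (wJ_longest D).inv_eq]

end partE

section partF

variable {cs : CoxeterSystem M W} {D : AffineData cs}

theorem rho_sq_of {w : W} (hw : w * w = 1) :
    (D.rho w : Module.End ℚ (Fin D.rank → ℚ)) * D.rho w = 1 := by
  have := D.rho_mul w w
  rw [hw, D.rho_one] at this
  exact this.symm

theorem eNeg_neg {w : W} (hw : w * w = 1) : D.eNeg (-(D.rho w)) + mL D w = D.rank := by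
  have h := Submodule.finrank_add_eq_of_isCompl (invol_isCompl (D.rho w) (rho_sq_of hw))
  rw [Module.finrank_fin_fun] at h
  have e : Module.End.eigenspace (-(D.rho w) : Module.End ℚ (Fin D.rank → ℚ)) (-1) =
      Module.End.eigenspace (D.rho w) 1 := by
    ext v
    rw [Module.End.mem_eigenspace_iff, Module.End.mem_eigenspace_iff]
    simp
  have e2 : D.eNeg (-(D.rho w)) = Module.finrank ℚ (Module.End.eigenspace (D.rho w) (1 : ℚ)) := by
    rw [← e]; rfl
  rw [e2]
  exact h

theorem mL_conj_le (g w : W) : mL D w ≤ mL D (g * w * g⁻¹) := by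
  have hg : ∀ v, D.rho g⁻¹ (D.rho g v) = v := by
    intro v
    have h := D.rho_mul g⁻¹ g
    rw [inv_mul_cancel, D.rho_one] at h
    exact (LinearMap.congr_fun h v).symm
  have hmem : ∀ v ∈ Module.End.eigenspace (D.rho w : Module.End ℚ (Fin D.rank → ℚ)) (-1),
      D.rho g v ∈
        Module.End.eigenspace (D.rho (g * w * g⁻¹) : Module.End ℚ (Fin D.rank → ℚ)) (-1) := by
    intro v hv
    rw [Module.End.mem_eigenspace_iff] at hv ⊢
    rw [D.rho_mul, D.rho_mul]
    change D.rho g (D.rho w (D.rho g⁻¹ (D.rho g v))) = _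
    rw [hg, hv, map_smul]
  apply LinearMap.finrank_le_finrank_of_injective (f := (D.rho g).restrict hmem)
  intro x y hxy
  have h1 : D.rho g x = D.rho g y := congrArg Subtype.val hxy
  have h2 := congrArg (D.rho g⁻¹) h1
  rw [hg, hg] at h2
  exact Subtype.ext h2

theorem mL_conj (g w : W) : mL D (g * w * g⁻¹) = mL D w := by
  apply le_antisymm _ (mL_conj_le g w)
  have h := mL_conj_le (D := D) g⁻¹ (g * w * g⁻¹)
  have e : g⁻¹ * (g * w * g⁻¹) * g⁻¹⁻¹ = w := by group
  rwa [e] at h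

theorem finsum_Pt {L : Set W} (hfin : (Subgroup.closure L : Set W).Finite) (τ : MulAut W) (q : K)
    (p : W → Prop) (hp : ∀ x ∈ Subgroup.closure L, (p x ↔ τ x = x)) :
    (∑ᶠ x : W, if x ∈ Subgroup.closure L ∧ p x then q ^ cs.length x else 0) = Pt cs τ q L := by
  rw [finsum_eq_sum_of_support_subset (s := SG L), Pt, Finset.sum_filter]
  · apply Finset.sum_congr rfl
    intro x hx
    have hx' := (mem_SG hfin).1 hx
    simp only [hx', true_and, hp x hx']
  · intro x hx
    rw [Function.mem_support] at hx
    by_contra h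
    apply hx
    rw [if_neg]
    rintro ⟨h1, -⟩
    exact h ((mem_SG hfin).2 h1)

theorem finsum_Pt' {L : Set W} (hfin : (Subgroup.closure L : Set W).Finite) (q : K) :
    (∑ᶠ x : W, if x ∈ Subgroup.closure L then q ^ cs.length x else 0) = Pt cs 1 q L := by
  rw [← finsum_Pt hfin 1 q (fun _ => True) (by simp)]
  simp

theorem q_poly_ne {p : Polynomial ℚ} (h : p ≠ 0) : algebraMap (Polynomial ℚ) K p ≠ 0 := by
  rw [Ne, FaithfulSMul.algebraMap_eq_zero_iff]
  exact h

theorem one_sub_q_ne : (1 - qK : K) ≠ 0 := by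
  have h : (1 - Polynomial.X : Polynomial ℚ) ≠ 0 := by
    intro h
    have := congrArg (Polynomial.eval 0) h
    simp at this
  have := q_poly_ne h
  rwa [map_sub, map_one, RatFunc.algebraMap_X] at this

theorem one_add_q_ne : (1 + qK : K) ≠ 0 := by
  have h : (1 + Polynomial.X : Polynomial ℚ) ≠ 0 := by
    intro h
    have := congrArg (Polynomial.eval 0) h
    simp at this
  have := q_poly_ne h
  rwa [map_add, map_one, RatFunc.algebraMap_X] at this

/-- The final field computation. -/
theorem final_alg (q PJ PH NJ NH : K) (hm : 1 - q ≠ 0) (hp : 1 + q ≠ 0)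
    (hPH : PH ≠ 0) (hNH : NH ≠ 0) (l a c : ℕ)
    (hJ : PJ * (1 - q) ^ a = NJ * (1 + q) ^ a) (hH : PH * (1 - q) ^ c = NH * (1 + q) ^ c)
    (hs : (-1 : K) ^ l = (-1) ^ (a + c)) :
    q ^ l * ((q - 1) / (q + 1)) ^ ((a : ℤ) - c) * PJ / PH = (-q) ^ l * NJ / NH := by
  have e1 : (q - 1) / (q + 1) = (-1) * ((1 - q) / (1 + q)) := by
    rw [add_comm q 1]; ring
  have e2 : (1 - q) / (1 + q) ≠ 0 := div_ne_zero hm hp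
  have e3 : (-1 : K) * ((1 - q) / (1 + q)) ≠ 0 := mul_ne_zero (by norm_num) e2
  have e4 : NJ = PJ * ((1 - q) / (1 + q)) ^ a := by
    rw [div_pow, ← mul_div_assoc, hJ, mul_div_cancel_right₀ _ (pow_ne_zero _ hp)]
  have e5 : NH = PH * ((1 - q) / (1 + q)) ^ c := by
    rw [div_pow, ← mul_div_assoc, hH, mul_div_cancel_right₀ _ (pow_ne_zero _ hp)]
  have e6 : (-q) ^ l = (-1) ^ (a + c) * q ^ l := by rw [← hs, neg_pow]
  rw [e1, zpow_sub₀ e3, zpow_natCast, zpow_natCast, e4, e5, e6]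
  set z := (1 - q) / (1 + q)
  rw [mul_pow, mul_pow, pow_add]
  have hu : ((-1 : K) ^ c) ^ 2 = 1 := by rw [← pow_mul, mul_comm, pow_mul]; simp
  have hu0 : (-1 : K) ^ c ≠ 0 := pow_ne_zero _ (by norm_num)
  have hz : z ^ c ≠ 0 := pow_ne_zero _ e2
  field_simp
  linear_combination (-(q ^ l * PJ)) * hu

end partF

/-- Let `ε` be the involution `y ↦ b⁻¹ y* b` of `W_{H*}`.  Then, in `ℚ(q)`:
`q^{ℓ(b)} ((q−1)/(q+1))^{φ(b)} P_{J,*}(q) / P_{H*,ε}(q) = (−q)^{ℓ(b)} P_J(−q) / P_{H*}(−q)`. -/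
theorem P_J_star_identity (cs : CoxeterSystem M W) (D : AffineData cs)
    (mu b : W) (hmu : D.IsDominant mu)
    (hb_mem : b ∈ D.DCoset mu)
    (hb_min : ∀ y ∈ D.DCoset mu, cs.length b ≤ cs.length y) :
    qK ^ cs.length b * ((qK - 1) / (qK + 1)) ^ D.phi b
        * (∑ᶠ x : W, if x ∈ D.WJ ∧ D.st x = x then qK ^ cs.length x else 0)
        / (∑ᶠ x : W, if x ∈ D.WHstar b ∧ b⁻¹ * D.st x * b = x
            then qK ^ cs.length x else 0)
      = (-qK) ^ cs.length b
        * (∑ᶠ x : W, if x ∈ D.WJ then (-qK) ^ cs.length x else 0)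
        / (∑ᶠ x : W, if x ∈ D.WHstar b then (-qK) ^ cs.length x else 0) := by
  have hwJ := wJ_longest D
  have hJfin := J_fin D
  have hHfin : (Subgroup.closure (D.Hset b) : Set W).Finite :=
    hJfin.subset (Subgroup.closure_mono (H_sub_J D b))
  have hHsfin : (Subgroup.closure (D.Hstar b) : Set W).Finite :=
    hJfin.subset (Subgroup.closure_mono Hstar_sub_J)
  obtain ⟨wH, hH⟩ := exists_longest cs ((H_sub_J D b).trans (J_sub D)) hHfin
  have hHs := wHs_longest hmu hb_mem hb_min hH
  have hphi : D.phi b = (mL D D.wJ : ℤ) - (mL D (D.wJ * wH * D.wJ) : ℤ) := by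
    have h1 := eNeg_neg (D := D) hwJ.mul_self
    have h2 := eNeg_neg (D := D) hH.mul_self
    have h3 : mL D (D.wJ * wH * D.wJ) = mL D wH := by
      have := mL_conj (D := D) D.wJ wH
      rwa [hwJ.inv_eq] at this
    have h4 : D.pr b * D.wJ = wH := by
      rw [pr_b hmu hb_mem hb_min hH, mul_assoc, hwJ.mul_self, mul_one]
    rw [h3]
    unfold AffineData.phi AffineData.Amap
    rw [h4, one_mul]
    omega
  have hsQ : (-1 : ℚ) ^ cs.length b = (-1) ^ (mL D D.wJ + mL D (D.wJ * wH * D.wJ)) := by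
    have hm : (-1 : ℚ) ^ cs.length mu = 1 := by
      rw [← D.det_rho, D.rho_Lam hmu.1]
      exact LinearMap.det_id
    have hc : (-1 : ℚ) ^ cs.length (D.wJ * wH * D.wJ) = (-1) ^ cs.length wH := by
      rw [hwJ.length_conj (wH_mem hmu hb_mem hb_min hH)]
    rw [pow_add, ← sgn_longest (D := D) hwJ, ← sgn_longest (D := D) hHs, hc,
      b_eq hmu hb_mem hb_min hH, sgn_mul D, sgn_mul D, hm, mul_one, mul_comm]
  have hsK : (-1 : K) ^ cs.length b = (-1) ^ (mL D D.wJ + mL D (D.wJ * wH * D.wJ)) := by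
    have := congrArg (algebraMap ℚ K) hsQ
    simpa only [map_pow, map_neg, map_one] using this
  have f1 : (∑ᶠ x : W, if x ∈ D.WJ ∧ D.st x = x then qK ^ cs.length x else 0) =
      Pt cs (MulAut.conj D.wJ) qK D.Jset :=
    finsum_Pt hJfin _ _ _ (fun x hx => st_iff hx)
  have f2 : (∑ᶠ x : W, if x ∈ D.WHstar b ∧ b⁻¹ * D.st x * b = x
      then qK ^ cs.length x else 0) =
      Pt cs (MulAut.conj (D.wJ * wH * D.wJ)) qK (D.Hstar b) :=
    finsum_Pt hHsfin _ _ _ (fun x hx => eps_iff hmu hb_mem hb_min hH hx)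
  have f3 : (∑ᶠ x : W, if x ∈ D.WJ then (-qK) ^ cs.length x else 0) = Pt cs 1 (-qK) D.Jset :=
    finsum_Pt' hJfin _
  have f4 : (∑ᶠ x : W, if x ∈ D.WHstar b then (-qK) ^ cs.length x else 0) =
      Pt cs 1 (-qK) (D.Hstar b) :=
    finsum_Pt' hHsfin _
  rw [f1, f2, f3, f4, hphi]
  exact final_alg _ _ _ _ _ one_sub_q_ne one_add_q_ne (Pt_ne_q hHsfin _) (Pt_ne_negq hHsfin _)
    _ _ _ (ident_K (D := D) (J_sub D) hJfin hwJ)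
    (ident_K (D := D) (Hstar_sub_J.trans (J_sub D)) hHsfin hHs) hsK

end LY
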